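/- arXiv:1706.01618 — 2 statements merged into one kernel-verified Lean document; each statement's English description precedes it below -/
import Mathlib

section
/- Let p be an odd prime and d ≥ 1. If p ≤ 2d + 1 and d is even, then the pair (d, p) is admissible: for every continuous injective map f : Sᵈ → ℝ^{d+1} and every choice of (p−1)/2 metrics ρ₁, …, ρ_{(p−1)/2} on ℝ^{d+1}, each inducing the standard Euclidean topology, there exist p distinct points x₀, x₁, …, x_{p−1} ∈ Sᵈ, indexed by 𝔽_p, such that for every j = 1, …, (p−1)/2 the values ρⱼ(f(x_{kj}), f(x_{(k+1)j})) are equal for all k ∈ 𝔽_p. -/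
/-- `ρ` is a metric on `E` that induces the (given) standard topology of `E`. -/
def IsMetricEquivToStd {E : Type*} [TopologicalSpace E] (ρ : E → E → ℝ) : Prop :=
  (∀ x y, ρ x y = ρ y x) ∧
  (∀ x y, ρ x y = 0 ↔ x = y) ∧
  (∀ x y z, ρ x z ≤ ρ x y + ρ y z) ∧
  (∀ s : Set E, IsOpen s ↔ ∀ x ∈ s, ∃ ε > 0, {y | ρ x y < ε} ⊆ s)

/-!
An integer-periodic `C¹` map `P : ℝᵐ → ℝᵐ` is null-homotopic as a map from the torus to `ℝᵐ`, so
its signed number of zeros in a fundamental cube is `0`. Suppose now that near the origin `P` is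
replaced by a map `Θ` commuting with the linear action of a nontrivial finite group `G` that is free
away from the origin. Keeping `Θ` equivariant, it can be made generic and equal to the identity near
the origin: the other zeros then come in free orbits, on which the sign is constant, so that the
signed number of zeros is `1` modulo `|G|`. Hence there must be a zero outside the region of
equivariance.

This is applied with `ℝᵐ` the space of `ℤ/p`-indexed families of points of `ℝᵈ` modulo constant
families, and with the map recording how the distances to be equalized vary along cyclic shifts.
Points of `ℝᵈ` are sent to the sphere by a periodic map that is injective near the origin and, in
the unit cube, takes its value at the origin only there; so the zero obtained is a nonconstant
configuration. If two of its points coincided, the equality of distances would make it invariant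
under a nonzero shift, hence constant.
-/

open MeasureTheory Set Topology Filter

/-- `F` is periodic with respect to the integer lattice, that is, a function on the torus
`(ℝ / ℤ)^κ` written on its universal cover. -/
def IntPeriodic {κ E : Type*} (F : (κ → ℝ) → E) : Prop :=
  ∀ z : κ → ℤ, Function.Periodic F fun i => (z i : ℝ)

/-- The half-open unit cube centred at the origin, a fundamental domain of the integer lattice. -/
def centredCube (κ : Type*) : Set (κ → ℝ) :=
  univ.pi fun _ => Ico (-(1 / 2)) (1 / 2)

section CentredCube

variable {κ : Type*}

theorem measurableSet_centredCube [Countable κ] : MeasurableSet (centredCube κ) :=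
  MeasurableSet.univ_pi fun _ => measurableSet_Ico

theorem mem_span_basisFun_iff_exists_int [Finite κ] {g : κ → ℝ} :
    g ∈ Submodule.span ℤ (range (Pi.basisFun ℝ κ)) ↔ ∃ z : κ → ℤ, g = fun i => (z i : ℝ) := by
  simp only [Module.Basis.mem_span_iff_repr_mem, Pi.basisFun_repr, mem_range,
    funext_iff, algebraMap_int_eq, Int.coe_castRingHom]
  exact ⟨fun h => ⟨fun i => (h i).choose, fun i => (h i).choose_spec.symm⟩,
    fun ⟨z, hz⟩ i => ⟨z i, (hz i).symm⟩⟩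

variable [Fintype κ]

theorem centredCube_subset_closedBall : centredCube κ ⊆ Metric.closedBall 0 (1 / 2) := by
  intro x hx
  rw [mem_closedBall_zero_iff, pi_norm_le_iff_of_nonneg (by norm_num)]
  exact fun i => abs_le.2 ⟨(hx i trivial).1, (hx i trivial).2.le⟩

theorem ball_subset_centredCube : Metric.ball 0 (1 / 2) ⊆ centredCube κ := by
  intro x hx i _
  have hi := (norm_le_pi_norm x i).trans_lt (mem_ball_zero_iff.1 hx)
  exact ⟨(abs_lt.1 hi).1.le, (abs_lt.1 hi).2⟩

theorem volume_centredCube : volume (centredCube κ) = 1 := by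
  rw [centredCube, volume_pi_pi]
  norm_num

theorem norm_sub_round_le (x : κ → ℝ) : ‖x - fun i => (round (x i) : ℝ)‖ ≤ 1 / 2 :=
  (pi_norm_le_iff_of_nonneg (by norm_num)).2 fun i => abs_sub_round (x i)

theorem isAddFundamentalDomain_centredCube :
    IsAddFundamentalDomain (Submodule.span ℤ (range (Pi.basisFun ℝ κ))).toAddSubgroup
      (centredCube κ) := by
  refine IsAddFundamentalDomain.mk' measurableSet_centredCube.nullMeasurableSet fun x => ?_
  choose z hz huniq using fun i =>
    existsUnique_add_zsmul_mem_Ico (one_pos : (0 : ℝ) < 1) (x i) (-(1 / 2))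
  norm_num at hz huniq
  refine ⟨⟨fun i => z i, mem_span_basisFun_iff_exists_int.2 ⟨z, rfl⟩⟩, fun i _ => ?_, ?_⟩
  · simpa [AddSubgroup.vadd_def, add_comm] using hz i
  · rintro ⟨g, hg⟩ hgx
    obtain ⟨y, rfl⟩ := mem_span_basisFun_iff_exists_int.1 hg
    refine Subtype.ext (funext fun i => congrArg Int.cast (huniq i (y i) ?_ ?_))
    all_goals
      have hi := hgx i trivial
      simp only [AddSubgroup.vadd_def, vadd_eq_add, Pi.add_apply, mem_Ico] at hi
      linarith

end CentredCube

namespace IntPeriodic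

variable {κ E : Type*}

theorem comp {F : Type*} {f : (κ → ℝ) → E} (hf : IntPeriodic f) (g : E → F) :
    IntPeriodic (g ∘ f) :=
  fun z => (hf z).comp g

theorem exists_norm_le_half_eq [Fintype κ] {f : (κ → ℝ) → E} (hf : IntPeriodic f) (x : κ → ℝ) :
    ∃ y, ‖y‖ ≤ 1 / 2 ∧ f y = f x :=
  ⟨_, norm_sub_round_le x, (hf fun i => round (x i)).sub_eq x⟩

variable [NormedAddCommGroup E]

theorem exists_norm_le [Finite κ] {f : (κ → ℝ) → E} (hf : IntPeriodic f) (hc : Continuous f) :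
    ∃ C, ∀ x, ‖f x‖ ≤ C := by
  have := Fintype.ofFinite κ
  obtain ⟨C, hC⟩ := (isCompact_closedBall (0 : κ → ℝ) (1 / 2)).exists_bound_of_continuousOn
    hc.continuousOn
  refine ⟨C, fun x => ?_⟩
  obtain ⟨y, hy, hyx⟩ := hf.exists_norm_le_half_eq x
  exact hyx ▸ hC y (mem_closedBall_zero_iff.2 hy)

protected theorem fderiv [Finite κ] [NormedSpace ℝ E] {f : (κ → ℝ) → E} (hf : IntPeriodic f) :
    IntPeriodic (fderiv ℝ f) := by
  have := Fintype.ofFinite κ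
  exact fun z x => by rw [← fderiv_comp_add_right, (hf z).funext]

theorem exists_lipschitzWith [Fintype κ] [NormedSpace ℝ E] {f : (κ → ℝ) → E}
    (hf : IntPeriodic f) (hc : ContDiff ℝ 1 f) : ∃ K, LipschitzWith K f := by
  obtain ⟨C, hC⟩ := hf.fderiv.exists_norm_le (hc.continuous_fderiv one_ne_zero)
  refine ⟨C.toNNReal, lipschitzWith_of_nnnorm_fderiv_le (𝕜 := ℝ)
    (hc.differentiable one_ne_zero) fun x => ?_⟩
  exact NNReal.coe_le_coe.1 ((hC x).trans C.le_coe_toNNReal)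

end IntPeriodic

section Determinant

theorem matrix_det_eq_sum_det_one_add_smul {K n : Type*} [Field K] [DecidableEq K] [Fintype n]
    [DecidableEq n] (A : Matrix n n K) {s : Finset K} (hs : s.card = Fintype.card n + 1) :
    A.det = ∑ t ∈ s, (∏ u ∈ s.erase t, (t - u))⁻¹ * (1 + t • A).det := by
  set P : Polynomial K := ((Polynomial.X : Polynomial K) • A.map Polynomial.C
    + (1 : Matrix n n K).map Polynomial.C).det with hP
  have hdeg : P.degree < s.card := by
    rw [hs]
    refine Polynomial.degree_le_natDegree.trans_lt ?_
    exact_mod_cast Nat.lt_succ_of_le (Polynomial.natDegree_det_X_add_C_le A 1)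
  have heval (t : K) : P.eval t = (1 + t • A).det := by
    rw [hP, ← Polynomial.coe_evalRingHom, RingHom.map_det]
    congr 1
    ext i j
    simp [Matrix.one_apply, add_comm, apply_ite, mul_comm (A i j)]
  have h := Lagrange.coeff_eq_sum (injOn_id _) hdeg
  rw [hs, Nat.add_sub_cancel, hP, Polynomial.coeff_det_X_add_C_card, ← hP] at h
  exact h.trans (Finset.sum_congr rfl fun t _ => by
    rw [id, heval, div_eq_mul_inv, mul_comm]
    rfl)

theorem linearMap_det_eq_sum_det_one_add_smul {K V : Type*} [Field K] [DecidableEq K]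
    [AddCommGroup V] [Module K V] [FiniteDimensional K V] (f : V →ₗ[K] V) {s : Finset K}
    (hs : s.card = Module.finrank K V + 1) :
    f.det = ∑ t ∈ s, (∏ u ∈ s.erase t, (t - u))⁻¹ * (1 + t • f).det := by
  let b := Module.finBasis K V
  rw [← LinearMap.det_toMatrix b, matrix_det_eq_sum_det_one_add_smul _ (by simpa using hs)]
  refine Finset.sum_congr rfl fun t _ => ?_
  rw [← LinearMap.det_toMatrix b, map_add, map_smul, LinearMap.toMatrix_one]

theorem det_one_add_pos {V : Type*} [NormedAddCommGroup V] [NormedSpace ℝ V]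
    [FiniteDimensional ℝ V] {A : V →L[ℝ] V} (hA : ‖A‖ < 1) : 0 < (1 + A).det := by
  have : CompleteSpace V := FiniteDimensional.complete ℝ V
  have hc : ContinuousOn (fun t : ℝ => (1 + t • A).det) (Icc 0 1) := by
    refine (ContinuousLinearMap.continuous_det.comp ?_).continuousOn
    fun_prop
  have hne (t : ℝ) (ht : t ∈ Icc (0 : ℝ) 1) : (1 + t • A).det ≠ 0 := by
    have hsmall : ‖-(t • A)‖ < 1 := by
      rw [norm_neg, norm_smul, Real.norm_of_nonneg ht.1]
      exact (mul_le_of_le_one_left (norm_nonneg A) ht.2).trans_lt hA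
    have hunit : IsUnit (1 + t • A) := by
      simpa using (Units.oneSub (-(t • A)) hsmall).isUnit
    exact (LinearMap.isUnit_det _ (hunit.map ContinuousLinearMap.toLinearMapRingHom)).ne_zero
  by_contra! hle
  obtain ⟨t, ht, h0⟩ := intermediate_value_Icc' zero_le_one hc
    ⟨by simpa only [one_smul] using hle, by simp [ContinuousLinearMap.det]⟩
  exact hne t ht h0

end Determinant

section TorusIntegral

variable {κ : Type*} [Fintype κ]

theorem exists_homeomorph_id_add_of_lipschitzWith {V : Type*} [NormedAddCommGroup V]
    [NormedSpace ℝ V] [CompleteSpace V] {f : V → V} {K : NNReal} (hf : LipschitzWith K f)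
    (hK : K < 1) : ∃ φ : V ≃ₜ V, ∀ x, φ x = x + f x := by
  have happ : ApproximatesLinearOn (fun x => x + f x)
      ((ContinuousLinearEquiv.refl ℝ V : V ≃L[ℝ] V) : V →L[ℝ] V) univ K := by
    intro x _ y _
    simpa [add_sub_add_comm] using hf.norm_sub_le x y
  have hN : Subsingleton V ∨
      K < ‖((ContinuousLinearEquiv.refl ℝ V).symm : V →L[ℝ] V)‖₊⁻¹ := by
    rcases subsingleton_or_nontrivial V with hV | hV
    · exact Or.inl hV
    · have hid : ‖ContinuousLinearMap.id ℝ V‖₊ = 1 := NNReal.eq ContinuousLinearMap.norm_id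
      exact Or.inr (by simpa [hid] using hK)
  exact ⟨happ.toHomeomorph _ hN, fun _ => rfl⟩

theorem volume_image_centredCube {φ : (κ → ℝ) ≃ₜ (κ → ℝ)} (hd : Differentiable ℝ φ)
    (hφ : ∀ x (z : κ → ℤ), φ (x + fun i => (z i : ℝ)) = φ x + fun i => (z i : ℝ)) :
    volume (φ '' centredCube κ) = 1 := by
  have hq : Measure.QuasiMeasurePreserving φ.toEquiv.symm volume volume := by
    have hm : Measurable φ.toEquiv.symm := φ.symm.continuous.measurable
    refine ⟨hm, Measure.AbsolutelyContinuous.mk fun s hs h0 => ?_⟩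
    rw [Measure.map_apply hm hs, ← φ.toEquiv.image_eq_preimage_symm]
    exact addHaar_image_eq_zero_of_differentiableOn_of_addHaar_eq_zero volume
      hd.differentiableOn h0
  have himage := isAddFundamentalDomain_centredCube.image_of_equiv φ.toEquiv hq (Equiv.refl _) (by
    rintro ⟨g, hg⟩ x
    obtain ⟨z, rfl⟩ := mem_span_basisFun_iff_exists_int.1 hg
    simp only [AddSubgroup.vadd_def, vadd_eq_add, Equiv.refl_apply]
    rw [add_comm _ x, add_comm _ (φ.toEquiv x)]
    exact hφ x z)
  have : Countable (Submodule.span ℤ (range (Pi.basisFun ℝ κ))).toAddSubgroup :=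
    inferInstanceAs (Countable (Submodule.span ℤ (range (Pi.basisFun ℝ κ))))
  exact (himage.measure_eq isAddFundamentalDomain_centredCube).trans volume_centredCube

variable {Ψ : (κ → ℝ) → (κ → ℝ)}

namespace IntPeriodic

theorem integral_det_one_add_fderiv (hper : IntPeriodic Ψ) (hΨ : Differentiable ℝ Ψ)
    {K : NNReal} (hlip : LipschitzWith K Ψ) (hK : K < 1) :
    ∫ x in centredCube κ, (1 + fderiv ℝ Ψ x).det = 1 := by
  obtain ⟨φ, hφ⟩ := exists_homeomorph_id_add_of_lipschitzWith hlip hK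
  have hderiv (x : κ → ℝ) : HasFDerivAt φ (1 + fderiv ℝ Ψ x) x := by
    rw [funext hφ]
    exact (hasFDerivAt_id x).add (hΨ x).hasFDerivAt
  have hdet (x : κ → ℝ) : 0 < (1 + fderiv ℝ Ψ x).det :=
    det_one_add_pos ((norm_fderiv_le_of_lipschitz ℝ hlip).trans_lt (by exact_mod_cast hK))
  have hvol : volume (φ '' centredCube κ) = 1 :=
    volume_image_centredCube (fun x => (hderiv x).differentiableAt) fun x z => by
      rw [hφ, hφ, hper z x, add_right_comm]
  have hchange := integral_image_eq_integral_abs_det_fderiv_smul volume measurableSet_centredCube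
    (fun x _ => (hderiv x).hasFDerivWithinAt) φ.injective.injOn fun _ => (1 : ℝ)
  simpa [measureReal_def, hvol, abs_of_pos (hdet _)] using hchange.symm

theorem integral_det_fderiv_eq_zero [Nonempty κ] (hper : IntPeriodic Ψ) (hΨ : ContDiff ℝ 1 Ψ) :
    ∫ x in centredCube κ, (fderiv ℝ Ψ x).det = 0 := by
  obtain ⟨K, hlip⟩ := hper.exists_lipschitzWith hΨ
  have hnhds : {t : ℝ | ‖t‖₊ * K < 1} ∈ 𝓝 0 := by
    refine (isOpen_lt (by fun_prop) continuous_const).mem_nhds ?_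
    simp
  obtain ⟨s, hsub, hcard⟩ :=
    (infinite_of_mem_nhds 0 hnhds).exists_subset_card_eq (Module.finrank ℝ (κ → ℝ) + 1)
  have hone (t : ℝ) (ht : t ∈ s) :
      ∫ x in centredCube κ, (1 + t • fderiv ℝ Ψ x).det = 1 := by
    have hd : Differentiable ℝ Ψ := hΨ.differentiable one_ne_zero
    rw [← (hper.comp (t • ·)).integral_det_one_add_fderiv (hd.const_smul t)
      ((lipschitzWith_smul t).comp hlip) (hsub ht)]
    simp only [Function.comp_def, fderiv_fun_const_smul (hd _)]
  have hint (t : ℝ) : IntegrableOn (fun x => (1 + t • fderiv ℝ Ψ x).det) (centredCube κ) := by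
    have := hΨ.continuous_fderiv one_ne_zero
    exact ((ContinuousLinearMap.continuous_det.comp (by fun_prop)).continuousOn.integrableOn_compact
      (isCompact_closedBall 0 _)).mono_set centredCube_subset_closedBall
  set w : ℝ → ℝ := fun t => (∏ u ∈ s.erase t, (t - u))⁻¹
  have hdet (A : (κ → ℝ) →L[ℝ] (κ → ℝ)) : A.det = ∑ t ∈ s, w t * (1 + t • A).det :=
    linearMap_det_eq_sum_det_one_add_smul (A : (κ → ℝ) →ₗ[ℝ] (κ → ℝ)) hcard
  calc ∫ x in centredCube κ, (fderiv ℝ Ψ x).det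
      = ∑ t ∈ s, w t * ∫ x in centredCube κ, (1 + t • fderiv ℝ Ψ x).det := by
        simp_rw [hdet (fderiv ℝ Ψ _), ← integral_const_mul]
        exact integral_finsetSum _ fun t _ => (hint t).const_mul _
    _ = ∑ t ∈ s, w t * (1 + t • (0 : (κ → ℝ) →L[ℝ] (κ → ℝ))).det :=
        Finset.sum_congr rfl fun t ht => by
          rw [hone t ht, smul_zero, add_zero]
          simp [ContinuousLinearMap.det]
    _ = 0 := by
        rw [← hdet]
        simp [ContinuousLinearMap.det]

end IntPeriodic

end TorusIntegral

/-- The zeros of `Φ` in `K` are nondegenerate: the derivative is invertible there. -/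
def HasRegularZerosOn {V : Type*} [NormedAddCommGroup V] [NormedSpace ℝ V] (Φ : V → V)
    (K : Set V) : Prop :=
  ∀ x ∈ K, Φ x = 0 → (fderiv ℝ Φ x).det ≠ 0

/-- The sign of the Jacobian determinant, which is the local degree of `Φ` at a nondegenerate
zero. -/
noncomputable def jacobianSign {V : Type*} [NormedAddCommGroup V] [NormedSpace ℝ V] (Φ : V → V)
    (x : V) : ℤ :=
  SignType.sign (fderiv ℝ Φ x).det

section LocalDegree

variable {V : Type*} [NormedAddCommGroup V] [NormedSpace ℝ V]

theorem jacobianSign_congr {Φ Ψ : V → V} {x : V} (h : Φ =ᶠ[𝓝 x] Ψ) :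
    jacobianSign Φ x = jacobianSign Ψ x := by
  rw [jacobianSign, h.fderiv_eq, jacobianSign]

theorem jacobianSign_mul_abs_det (Φ : V → V) (x : V) :
    (jacobianSign Φ x : ℝ) * |(fderiv ℝ Φ x).det| = (fderiv ℝ Φ x).det := by
  rw [jacobianSign, SignType.intCast_cast]
  exact sign_mul_abs _

variable {Φ : V → V}

theorem continuous_det_fderiv (hΦ : ContDiff ℝ 1 Φ) :
    Continuous fun x => (fderiv ℝ Φ x).det :=
  ContinuousLinearMap.continuous_det.comp (hΦ.continuous_fderiv one_ne_zero)

theorem eventually_jacobianSign_eq (hΦ : ContDiff ℝ 1 Φ) {z : V}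
    (hz : (fderiv ℝ Φ z).det ≠ 0) : ∀ᶠ x in 𝓝 z, jacobianSign Φ x = jacobianSign Φ z := by
  have h := (continuousAt_sign_of_ne_zero hz).comp (f := fun x => (fderiv ℝ Φ x).det)
    (continuous_det_fderiv hΦ).continuousAt
  rw [ContinuousAt, nhds_discrete SignType, tendsto_pure] at h
  exact h.mono fun x hx => congrArg (fun s : SignType => (s : ℤ)) hx

variable [FiniteDimensional ℝ V]

theorem exists_openPartialHomeomorph_of_det_ne_zero (hΦ : ContDiff ℝ 1 Φ) {z : V}
    (hz : (fderiv ℝ Φ z).det ≠ 0) : ∃ e : OpenPartialHomeomorph V V, ⇑e = Φ ∧ z ∈ e.source := by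
  have : CompleteSpace V := FiniteDimensional.complete ℝ V
  have hder : HasFDerivAt Φ
      (((fderiv ℝ Φ z).toContinuousLinearEquivOfDetNeZero hz : V ≃L[ℝ] V) : V →L[ℝ] V) z := by
    rw [ContinuousLinearMap.coe_toContinuousLinearEquivOfDetNeZero]
    exact (hΦ.differentiable one_ne_zero z).hasFDerivAt
  exact ⟨_, hΦ.contDiffAt.toOpenPartialHomeomorph_coe hder one_ne_zero,
    hΦ.contDiffAt.mem_toOpenPartialHomeomorph_source hder one_ne_zero⟩

variable [MeasurableSpace V] [BorelSpace V] (μ : Measure V) [μ.IsAddHaarMeasure]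

theorem exists_isOpen_setIntegral_comp_mul_det_fderiv_eq (hΦ : ContDiff ℝ 1 Φ) {z : V}
    (hz : (fderiv ℝ Φ z).det ≠ 0) {W : Set V} (hW : W ∈ 𝓝 z) :
    ∃ U ⊆ W, IsOpen U ∧ z ∈ U ∧ ∃ N ∈ 𝓝 (Φ z), ∀ g : V → ℝ, Function.support g ⊆ N →
      ∫ x in U, g (Φ x) * (fderiv ℝ Φ x).det ∂μ = jacobianSign Φ z * ∫ y, g y ∂μ := by
  obtain ⟨e, he, hze⟩ := exists_openPartialHomeomorph_of_det_ne_zero hΦ hz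
  obtain ⟨O, hO, hOo, hzO⟩ :=
    mem_nhds_iff.1 (inter_mem hW (eventually_jacobianSign_eq hΦ hz))
  have hU : IsOpen (O ∩ e.source) := hOo.inter e.open_source
  have hΦU : IsOpen (Φ '' (O ∩ e.source)) := by
    rw [← he]
    exact e.isOpen_image_of_subset_source hU inter_subset_right
  have hinj : InjOn Φ (O ∩ e.source) := by
    rw [← he]
    exact e.injOn.mono inter_subset_right
  refine ⟨O ∩ e.source, fun x hx => (hO hx.1).1, hU, ⟨hzO, hze⟩, Φ '' (O ∩ e.source),
    hΦU.mem_nhds (mem_image_of_mem Φ ⟨hzO, hze⟩), fun g hg => ?_⟩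
  calc ∫ x in O ∩ e.source, g (Φ x) * (fderiv ℝ Φ x).det ∂μ
      = ∫ x in O ∩ e.source, jacobianSign Φ z * (|(fderiv ℝ Φ x).det| • g (Φ x)) ∂μ := by
        refine setIntegral_congr_fun hU.measurableSet fun x hx => ?_
        have hsign : jacobianSign Φ x = jacobianSign Φ z := (hO hx.1).2
        change g (Φ x) * (fderiv ℝ Φ x).det = _
        rw [← hsign, smul_eq_mul, ← mul_assoc, jacobianSign_mul_abs_det, mul_comm]
    _ = jacobianSign Φ z * ∫ y in Φ '' (O ∩ e.source), g y ∂μ := by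
        rw [integral_const_mul, integral_image_eq_integral_abs_det_fderiv_smul μ hU.measurableSet
          (fun x _ => (hΦ.differentiable one_ne_zero x).hasFDerivAt.hasFDerivWithinAt) hinj g]
    _ = jacobianSign Φ z * ∫ y, g y ∂μ := by
        rw [setIntegral_eq_integral_of_forall_compl_eq_zero fun y hy =>
          Function.notMem_support.1 fun h => hy (hg h)]

theorem exists_nhds_setIntegral_comp_mul_det_fderiv_eq_sum (hΦ : ContDiff ℝ 1 Φ) {K L : Set V}
    (hK : MeasurableSet K) (hL : IsCompact L) (hKL : K ⊆ L) {Z : Finset V}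
    (hZK : (Z : Set V) ⊆ interior K) (hZ : ∀ x ∈ L, x ∈ Z ↔ Φ x = 0)
    (hreg : HasRegularZerosOn Φ L) :
    ∃ N ∈ 𝓝 (0 : V), ∀ g : V → ℝ, Continuous g → Function.support g ⊆ N →
      ∫ x in K, g (Φ x) * (fderiv ℝ Φ x).det ∂μ = (∑ z ∈ Z, jacobianSign Φ z) * ∫ y, g y ∂μ := by
  have hZL (z : V) (hz : z ∈ Z) : z ∈ L := hKL (interior_subset (hZK hz))
  have hΦZ (z : V) (hz : z ∈ Z) : Φ z = 0 := (hZ z (hZL z hz)).1 hz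
  obtain ⟨S, hS, hSdisj⟩ := Z.finite_toSet.t2_separation
  have hlocal (z : V) (hz : z ∈ Z) := exists_isOpen_setIntegral_comp_mul_det_fderiv_eq μ hΦ
    (hreg z (hZL z hz) (hΦZ z hz))
    (((hS z).2.inter isOpen_interior).mem_nhds ⟨(hS z).1, hZK hz⟩)
  choose! U hUsub hUo hzU N hN hint using hlocal
  have hUK (z : V) (hz : z ∈ Z) : U z ⊆ K :=
    (hUsub z hz).trans (inter_subset_right.trans interior_subset)
  have haway : (Φ '' (L \ ⋃ z ∈ Z, U z))ᶜ ∈ 𝓝 0 := by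
    refine ((hL.diff (isOpen_biUnion hUo)).image hΦ.continuous).isClosed.isOpen_compl.mem_nhds ?_
    rintro ⟨x, ⟨hxL, hxU⟩, hx⟩
    have hxZ := (hZ x hxL).2 hx
    exact hxU (mem_biUnion hxZ (hzU x hxZ))
  have hnear : (⋂ z ∈ Z, N z) ∈ 𝓝 0 :=
    (biInter_finset_mem Z).2 fun z hz => hΦZ z hz ▸ hN z hz
  refine ⟨_, inter_mem hnear haway, fun g hg hsupp => ?_⟩
  have hcont : Continuous fun x => g (Φ x) * (fderiv ℝ Φ x).det :=
    (hg.comp hΦ.continuous).mul (continuous_det_fderiv hΦ)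
  calc ∫ x in K, g (Φ x) * (fderiv ℝ Φ x).det ∂μ
      = ∫ x in ⋃ z ∈ Z, U z, g (Φ x) * (fderiv ℝ Φ x).det ∂μ := by
        refine setIntegral_eq_of_subset_of_forall_sdiff_eq_zero hK (iUnion₂_subset hUK)
          fun x hx => ?_
        by_contra h
        exact (hsupp (left_ne_zero_of_mul h)).2 ⟨x, ⟨hKL hx.1, hx.2⟩, rfl⟩
    _ = ∑ z ∈ Z, ∫ x in U z, g (Φ x) * (fderiv ℝ Φ x).det ∂μ :=
        integral_biUnion_finset Z (fun z hz => (hUo z hz).measurableSet)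
          (fun z hz w hw hzw => (hSdisj hz hw hzw).mono
            ((hUsub z hz).trans inter_subset_left) ((hUsub w hw).trans inter_subset_left))
          fun z hz => (hcont.continuousOn.integrableOn_compact hL).mono_set
            ((hUK z hz).trans hKL)
    _ = (∑ z ∈ Z, jacobianSign Φ z) * ∫ y, g y ∂μ := by
        rw [Int.cast_sum, Finset.sum_mul]
        exact Finset.sum_congr rfl fun z hz =>
          hint z hz g fun y hy => mem_iInter₂.1 (hsupp hy).1 z hz

end LocalDegree

section TorusDegree

variable {κ : Type*}

theorem hasFDerivAt_pi_map [Finite κ] {B b : ℝ → ℝ} (hB : ∀ t, HasDerivAt B (b t) t) (y : κ → ℝ) :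
    HasFDerivAt (fun y : κ → ℝ => fun i => B (y i))
      (ContinuousLinearMap.pi fun i =>
        b (y i) • (ContinuousLinearMap.proj i : (κ → ℝ) →L[ℝ] ℝ)) y :=
  have := Fintype.ofFinite κ
  hasFDerivAt_pi.2 fun i => (hB (y i)).comp_hasFDerivAt y (hasFDerivAt_apply i y)

variable [Fintype κ]

theorem det_pi_smul_proj (c : κ → ℝ) :
    (ContinuousLinearMap.pi fun i =>
        c i • (ContinuousLinearMap.proj i : (κ → ℝ) →L[ℝ] ℝ)).det = ∏ i, c i := by
  have h := LinearMap.det_pi (R := ℝ) fun i : κ => c i • (LinearMap.id : ℝ →ₗ[ℝ] ℝ)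
  simp only [LinearMap.det_smul, LinearMap.det_id, Module.finrank_self, pow_one, mul_one] at h
  exact h

namespace IntPeriodic

variable [Nonempty κ] {Φ : (κ → ℝ) → (κ → ℝ)}

-- `(∏ i, b (Φ x i)) * det DΦ` is the Jacobian determinant of `Φ` followed by a primitive of `b` in
-- each coordinate, which is again periodic.
theorem integral_prod_mul_det_fderiv_eq_zero (hper : IntPeriodic Φ) (hΦ : ContDiff ℝ 1 Φ)
    {b : ℝ → ℝ} (hb : Continuous b) :
    ∫ x in centredCube κ, (∏ i, b (Φ x i)) * (fderiv ℝ Φ x).det = 0 := by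
  set B : ℝ → ℝ := fun u => ∫ t in (0 : ℝ)..u, b t
  have hB (t : ℝ) : HasDerivAt B (b t) t := (hb.integral_hasStrictDerivAt 0 t).hasDerivAt
  have hBC : ContDiff ℝ 1 B := by
    rw [contDiff_one_iff_deriv, funext fun t => (hB t).deriv]
    exact ⟨fun t => (hB t).differentiableAt, hb⟩
  have hΨ : ContDiff ℝ 1 fun x i => B (Φ x i) :=
    contDiff_pi.2 fun i => hBC.comp (contDiff_pi.1 hΦ i)
  rw [← (hper.comp fun y i => B (y i)).integral_det_fderiv_eq_zero hΨ]
  refine setIntegral_congr_fun measurableSet_centredCube fun x _ => ?_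
  rw [((hasFDerivAt_pi_map hB (Φ x)).comp x
    (hΦ.differentiable one_ne_zero x).hasFDerivAt).fderiv, ← det_pi_smul_proj]
  exact (LinearMap.det_comp _ _).symm

theorem sum_jacobianSign_eq_zero (hper : IntPeriodic Φ) (hΦ : ContDiff ℝ 1 Φ)
    {Z : Finset (κ → ℝ)} (hZball : ∀ z ∈ Z, ‖z‖ < 1 / 2)
    (hZ : ∀ x, ‖x‖ ≤ 1 / 2 → (x ∈ Z ↔ Φ x = 0))
    (hreg : HasRegularZerosOn Φ (Metric.closedBall 0 (1 / 2))) :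
    ∑ z ∈ Z, jacobianSign Φ z = 0 := by
  have hZint : (Z : Set (κ → ℝ)) ⊆ interior (centredCube κ) := fun z hz =>
    interior_maximal ball_subset_centredCube Metric.isOpen_ball
      (mem_ball_zero_iff.2 (hZball z hz))
  obtain ⟨N, hN, hdeg⟩ := exists_nhds_setIntegral_comp_mul_det_fderiv_eq_sum volume hΦ
    measurableSet_centredCube (isCompact_closedBall 0 (1 / 2)) centredCube_subset_closedBall hZint
    (fun x hx => hZ x (mem_closedBall_zero_iff.1 hx)) hreg
  obtain ⟨ε, hε, hball⟩ := Metric.mem_nhds_iff.1 hN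
  let b : ContDiffBump (0 : ℝ) := ⟨ε / 2, ε, half_pos hε, half_lt_self hε⟩
  have hsupp : (Function.support fun y : κ → ℝ => ∏ i, b (y i)) ⊆ N := by
    refine fun y hy => hball (mem_ball_zero_iff.2 ((pi_norm_lt_iff hε).2 fun i => ?_))
    have hi : y i ∈ Function.support b := Finset.prod_ne_zero_iff.1 hy i (Finset.mem_univ i)
    rwa [b.support_eq, mem_ball_zero_iff] at hi
  have hint : ∫ y : κ → ℝ, ∏ i, b (y i) ≠ 0 := by
    rw [integral_fintype_prod_volume_eq_prod (fun (_ : κ) t => b t)]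
    exact Finset.prod_ne_zero_iff.2 fun _ _ => b.integral_pos.ne'
  have hsum := hdeg (fun y => ∏ i, b (y i)) (continuous_finsetProd _ fun i _ =>
    b.continuous.comp (continuous_apply i)) hsupp
  rw [hper.integral_prod_mul_det_fderiv_eq_zero hΦ b.continuous] at hsum
  exact_mod_cast (mul_eq_zero.1 hsum.symm).resolve_right hint

end IntPeriodic

end TorusDegree

/-- The extension to a periodic function of the restriction of `c` to the centred unit cube. It is
as smooth as `c` when `c` vanishes near the boundary of the cube. -/
noncomputable def periodize {κ E : Type*} (c : (κ → ℝ) → E) (x : κ → ℝ) : E :=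
  c (x - fun i => (round (x i) : ℝ))

section Periodize

variable {κ E : Type*}

theorem intPeriodic_periodize (c : (κ → ℝ) → E) : IntPeriodic (periodize c) := by
  intro z x
  refine congrArg c (funext fun i => ?_)
  simp

variable [Fintype κ] [NormedAddCommGroup E] {c : (κ → ℝ) → E} {r : ℝ}

theorem periodize_eq_of_norm_lt (hc : ∀ x, r ≤ ‖x‖ → c x = 0) {x : κ → ℝ}
    (hx : ‖x‖ < 1 - r) : periodize c x = c x := by
  by_cases hround : ∀ i, round (x i) = 0
  · exact congrArg c (funext fun i => by simp [hround i])
  · obtain ⟨i, hi⟩ := not_forall.1 hround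
    have hxi : |x i| ≤ ‖x‖ := norm_le_pi_norm x i
    have hhalf : 1 / 2 ≤ |x i| := by
      by_contra! hlt
      exact hi (round_eq_zero_iff.2 ⟨(abs_lt.1 hlt).1.le, (abs_lt.1 hlt).2⟩)
    have hfract : r ≤ |x i - round (x i)| := by
      have hone : (1 : ℝ) ≤ |(round (x i) : ℝ)| := by exact_mod_cast Int.one_le_abs hi
      have := abs_sub_abs_le_abs_sub (round (x i) : ℝ) (x i)
      rw [abs_sub_comm]
      linarith
    rw [hc x (by linarith), periodize,
      hc _ (hfract.trans (norm_le_pi_norm (x - fun i => (round (x i) : ℝ)) i))]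

theorem periodize_eventuallyEq (hr : r < 1 / 2) (hc : ∀ x, r ≤ ‖x‖ → c x = 0) (x : κ → ℝ) :
    periodize c =ᶠ[𝓝 x] fun y => c (y - fun i => (round (x i) : ℝ)) := by
  have hcont : Continuous fun y : κ → ℝ => ‖y - fun i => (round (x i) : ℝ)‖ := by fun_prop
  have hlt : ‖x - fun i => (round (x i) : ℝ)‖ < 1 - r :=
    (norm_sub_round_le x).trans_lt (by linarith)
  filter_upwards [hcont.continuousAt.eventually (gt_mem_nhds hlt)] with y hy
  rw [← periodize_eq_of_norm_lt hc hy]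
  exact ((intPeriodic_periodize c fun i => round (x i)).sub_eq y).symm

theorem contDiff_periodize [NormedSpace ℝ E] {n : WithTop ℕ∞} (hr : r < 1 / 2)
    (hc : ∀ x, r ≤ ‖x‖ → c x = 0) (hcn : ContDiff ℝ n c) : ContDiff ℝ n (periodize c) :=
  contDiff_iff_contDiffAt.2 fun x =>
    (hcn.comp (contDiff_id.sub contDiff_const)).contDiffAt.congr_of_eventuallyEq
      (periodize_eventuallyEq hr hc x)

theorem IntPeriodic.sum_jacobianSign_eq_zero_of_eq [Nonempty κ] {P Λ : (κ → ℝ) → (κ → ℝ)}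
    (hPper : IntPeriodic P) (hP : ContDiff ℝ 1 P) (hΛ : ContDiff ℝ 1 Λ) (hr : r < 1 / 2)
    (hPΛ : ∀ x, r ≤ ‖x‖ → Λ x = P x) {Z : Finset (κ → ℝ)} (hZball : ∀ z ∈ Z, ‖z‖ < 1 / 2)
    (hZ : ∀ x, ‖x‖ ≤ 1 / 2 → (x ∈ Z ↔ Λ x = 0))
    (hreg : HasRegularZerosOn Λ (Metric.closedBall 0 (1 / 2))) :
    ∑ z ∈ Z, jacobianSign Λ z = 0 := by
  set Φ : (κ → ℝ) → (κ → ℝ) := fun x => P x + periodize (Λ - P) x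
  have hzero (x : κ → ℝ) (hx : r ≤ ‖x‖) : (Λ - P) x = 0 := sub_eq_zero.2 (hPΛ x hx)
  have hΦΛ (x : κ → ℝ) (hx : ‖x‖ < 1 - r) : Φ x = Λ x := by
    rw [show Φ x = P x + periodize (Λ - P) x from rfl, periodize_eq_of_norm_lt hzero hx,
      Pi.sub_apply, add_sub_cancel]
  have hΦΛnhds (x : κ → ℝ) (hx : ‖x‖ ≤ 1 / 2) : Φ =ᶠ[𝓝 x] Λ := by
    filter_upwards [continuous_norm.continuousAt.eventually
      (gt_mem_nhds (hx.trans_lt (by linarith : 1 / 2 < 1 - r)))] with y hy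
    exact hΦΛ y hy
  have hΦper : IntPeriodic Φ := fun z => (hPper z).add (intPeriodic_periodize _ z)
  rw [← hΦper.sum_jacobianSign_eq_zero (hP.add (contDiff_periodize hr hzero (hΛ.sub hP))) hZball]
  · exact Finset.sum_congr rfl fun z hz => (jacobianSign_congr (hΦΛnhds z (hZball z hz).le)).symm
  · intro x hx
    rw [(hΦΛnhds x hx).eq_of_nhds, hZ x hx]
  · intro x hx hx0
    have heq := hΦΛnhds x (mem_closedBall_zero_iff.1 hx)
    rw [heq.fderiv_eq]
    exact hreg x hx (heq.eq_of_nhds ▸ hx0)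

end Periodize

theorem card_dvd_sum_of_free {G α : Type*} [Group G] [Fintype G] [MulAction G α] {w : α → ℤ}
    {Z : Finset α} (hZ : ∀ g : G, ∀ z ∈ Z, g • z ∈ Z) (hfree : ∀ z ∈ Z, ∀ g : G, g • z = z → g = 1)
    (hw : ∀ g : G, ∀ z ∈ Z, w (g • z) = w z) : (Fintype.card G : ℤ) ∣ ∑ z ∈ Z, w z := by
  classical
  rw [Finset.sum_partition (MulAction.orbitRel G α)]
  refine Finset.dvd_sum fun q hq => ?_
  obtain ⟨z, hz, rfl⟩ := Finset.mem_image.1 hq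
  have horbit : ({y ∈ Z | (⟦y⟧ : Quotient (MulAction.orbitRel G α)) = ⟦z⟧} : Finset α) =
      Finset.univ.image fun g : G => g • z := by
    ext y
    simp only [Finset.mem_filter, Finset.mem_image, Finset.mem_univ, true_and]
    constructor
    · exact fun h => MulAction.orbitRel_apply.1 (Quotient.exact h.2)
    · rintro ⟨g, rfl⟩
      exact ⟨hZ g z hz, Quotient.sound ⟨g, rfl⟩⟩
  have hinj : Function.Injective fun g : G => g • z := fun g h hgh => by
    have hgh : g • z = h • z := hgh
    exact (inv_mul_eq_one.1 (hfree z hz (h⁻¹ * g) (by rw [mul_smul, hgh, inv_smul_smul]))).symm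
  rw [horbit, Finset.sum_image hinj.injOn, Finset.sum_congr rfl fun g _ => hw g z hz,
    Finset.sum_const, Finset.card_univ, nsmul_eq_mul]
  exact dvd_mul_right _ _

section Representation

variable {G V : Type*} [Group G] [NormedAddCommGroup V] [NormedSpace ℝ V]

theorem inv_apply_apply (T : G →* (V →L[ℝ] V)) (g : G) (x : V) : T g⁻¹ (T g x) = x := by
  rw [← mul_apply_eq_comp, ← map_mul, inv_mul_cancel, map_one, one_apply_eq_self]

theorem apply_inv_apply (T : G →* (V →L[ℝ] V)) (g : G) (x : V) : T g (T g⁻¹ x) = x := by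
  simpa only [inv_inv] using inv_apply_apply T g⁻¹ x

theorem det_fderiv_apply_of_equivariant (T : G →* (V →L[ℝ] V)) {Φ : V → V}
    (hΦ : Differentiable ℝ Φ) (hΦT : ∀ g x, Φ (T g x) = T g (Φ x)) (g : G) (x : V) :
    (fderiv ℝ Φ (T g x)).det = (fderiv ℝ Φ x).det := by
  have hcomp : HasFDerivAt (fun x => Φ (T g x)) (fderiv ℝ Φ (T g x) ∘L T g) x :=
    (hΦ (T g x)).hasFDerivAt.comp x (T g).hasFDerivAt
  have hcomp' : HasFDerivAt (fun x => Φ (T g x)) (T g ∘L fderiv ℝ Φ x) x := by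
    simp_rw [hΦT]
    exact (T g).hasFDerivAt.comp x (hΦ x).hasFDerivAt
  have hdet : (fderiv ℝ Φ (T g x)).det * (T g).det = (T g).det * (fderiv ℝ Φ x).det := by
    simpa only [ContinuousLinearMap.det, ContinuousLinearMap.toLinearMap_comp, LinearMap.det_comp]
      using congrArg ContinuousLinearMap.det (hcomp.unique hcomp')
  have hunit : IsUnit (T g).det := LinearMap.isUnit_det _
    (((Group.isUnit g).map T).map ContinuousLinearMap.toLinearMapRingHom)
  exact hunit.mul_left_cancel ((mul_comm _ _).trans hdet)

/-- The equivariant sum of the translates of the bump `x ↦ χ x • c` along an orbit. -/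
def orbitBump [Fintype G] (T : G →* (V →L[ℝ] V)) (χ : V → ℝ) (c x : V) : V :=
  ∑ g, χ (T g⁻¹ x) • T g c

section OrbitBump

variable [Fintype G] (T : G →* (V →L[ℝ] V)) {χ : V → ℝ}

theorem orbitBump_zero_right (χ : V → ℝ) (x : V) : orbitBump T χ 0 x = 0 := by
  simp [orbitBump]

theorem contDiff_orbitBump {n : WithTop ℕ∞} (hχ : ContDiff ℝ n χ) :
    ContDiff ℝ n (Function.uncurry (orbitBump T χ)) :=
  ContDiff.sum fun g _ => (hχ.comp ((T g⁻¹).contDiff.comp contDiff_snd)).smul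
    ((T g).contDiff.comp contDiff_fst)

theorem orbitBump_apply (χ : V → ℝ) (c : V) (h : G) (x : V) :
    orbitBump T χ c (T h x) = T h (orbitBump T χ c x) := by
  rw [orbitBump, orbitBump, map_sum]
  refine (Fintype.sum_equiv (Equiv.mulLeft h) _ _ fun g => ?_).symm
  rw [Equiv.coe_mulLeft, mul_inv_rev, map_mul, map_mul, mul_apply_eq_comp, mul_apply_eq_comp,
    inv_apply_apply, map_smul]

theorem orbitBump_of_notMem {U : Set V} (hU : ∀ g, ∀ x ∈ U, T g x ∈ U)
    (hχ : Function.support χ ⊆ U) (c : V) {x : V} (hx : x ∉ U) : orbitBump T χ c x = 0 := by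
  refine Finset.sum_eq_zero fun g _ => ?_
  rw [Function.notMem_support.1 fun h => hx (apply_inv_apply T g x ▸ hU g _ (hχ h)), zero_smul]

theorem orbitBump_of_eq_one {c x : V} (hx : χ x = 1)
    (hdisj : ∀ g, g ≠ 1 → χ (T g x) = 0) : orbitBump T χ c x = c := by
  rw [orbitBump, Fintype.sum_eq_single 1 fun g hg => by
    rw [hdisj g⁻¹ (inv_ne_one.2 hg), zero_smul]]
  simp [hx]

theorem norm_orbitBump_le (hχ0 : ∀ x, 0 ≤ χ x) (hχ1 : ∀ x, χ x ≤ 1) (c x : V) :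
    ‖orbitBump T χ c x‖ ≤ (∑ g, ‖T g‖) * ‖c‖ := by
  rw [Finset.sum_mul]
  refine norm_sum_le_of_le _ fun g _ => ?_
  rw [norm_smul, Real.norm_of_nonneg (hχ0 _)]
  exact (mul_le_of_le_one_left (norm_nonneg _) (hχ1 _)).trans ((T g).le_opNorm c)

end OrbitBump

end Representation

section Perturbation

variable {G V : Type*} [Group G] [NormedAddCommGroup V] [NormedSpace ℝ V]

theorem eventually_hasRegularZerosOn {P : Type*} [NormedAddCommGroup P] [NormedSpace ℝ P]
    {F : P → V → V} (hF : ContDiff ℝ 1 (Function.uncurry F)) {K : Set V} (hK : IsCompact K) {c : P}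
    (hreg : HasRegularZerosOn (F c) K) : ∀ᶠ c' in 𝓝 c, HasRegularZerosOn (F c') K := by
  have hderiv : Continuous fun q : P × V => fderiv ℝ (F q.1) q.2 := by
    refine (ContDiff.fderiv (n := 0) (m := 1) (f := fun q : P × V => F q.1) (g := Prod.snd)
      ?_ contDiff_snd (by norm_num)).continuous
    exact hF.comp (f := fun q : (P × V) × V => (q.1.1, q.2)) (by fun_prop)
  refine hK.eventually_forall_of_forall_eventually fun x hx => ?_
  by_cases h0 : F c x = 0
  · have hdet : ContinuousAt (fun q : P × V => (fderiv ℝ (F q.1) q.2).det) (c, x) :=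
      (ContinuousLinearMap.continuous_det.comp hderiv).continuousAt
    exact (hdet.eventually_ne (hreg x hx h0)).mono fun q hq _ => hq
  · have hne : ∀ᶠ q : P × V in 𝓝 (c, x), Function.uncurry F q ≠ 0 :=
      hF.continuous.continuousAt.eventually_ne h0
    exact hne.mono fun q hq hq0 => absurd hq0 hq

theorem hasRegularZerosOn_of_eventuallyEq_add_const {Φ Φ' : V → V} {S : Set V} {c : V}
    (heq : ∀ x ∈ S, Φ' =ᶠ[𝓝 x] fun y => Φ y + c)
    (hc : -c ∉ Φ '' {x | (fderiv ℝ Φ x).det = 0}) : HasRegularZerosOn Φ' S := by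
  intro x hx hx0 hdet
  rw [(heq x hx).fderiv_eq, fderiv_add_const] at hdet
  exact hc ⟨x, hdet, eq_neg_of_add_eq_zero_left ((heq x hx).eq_of_nhds ▸ hx0)⟩

theorem exists_pos_forall_ball_disjoint [Finite G] (T : G →* (V →L[ℝ] V)) {x₀ : V}
    (hx₀ : ∀ g, T g x₀ = x₀ → g = 1) {U : Set V} (hU : U ∈ 𝓝 x₀) :
    ∃ r > 0, Metric.ball x₀ r ⊆ U ∧
      ∀ g, g ≠ 1 → ∀ x ∈ Metric.ball x₀ r, T g x ∉ Metric.ball x₀ r := by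
  have hne : ∀ᶠ q : V × V in 𝓝 (x₀, x₀), ∀ g, g ≠ 1 → T g q.1 ≠ q.2 := by
    refine eventually_all.2 fun g => ?_
    by_cases hg : g = 1
    · simp [hg]
    · have hcont : Continuous fun q : V × V => T g q.1 - q.2 := by fun_prop
      exact (hcont.continuousAt.eventually_ne (x := (x₀, x₀))
        (sub_ne_zero.2 fun h => hg (hx₀ g h))).mono fun q hq _ => sub_ne_zero.1 hq
  obtain ⟨r, hr, hball⟩ := Metric.eventually_nhds_iff_ball.1
    (((continuous_fst (X := V) (Y := V)).continuousAt.eventually_mem hU).and hne)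
  simp only [← ball_prod_same] at hball
  exact ⟨r, hr, fun x hx => (hball (x, x) ⟨hx, hx⟩).1,
    fun g hg x hx hgx => (hball (x, T g x) ⟨hx, hgx⟩).2 g hg rfl⟩

/-- `Φ'` is a `C¹` equivariant map that agrees with `Φ` outside `U` and is uniformly `ε`-close to
it. -/
structure IsEquivariantPerturbation (T : G →* (V →L[ℝ] V)) (U : Set V) (ε : ℝ)
    (Φ Φ' : V → V) : Prop where
  contDiff : ContDiff ℝ 1 Φ'
  map_apply : ∀ g x, Φ' (T g x) = T g (Φ' x)
  eq_of_notMem : ∀ x ∉ U, Φ' x = Φ x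
  norm_sub_le : ∀ x, ‖Φ' x - Φ x‖ ≤ ε

namespace IsEquivariantPerturbation

variable {T : G →* (V →L[ℝ] V)} {U : Set V} {Φ Φ' Φ'' : V → V} {ε δ : ℝ}

theorem refl (hΦ : ContDiff ℝ 1 Φ) (hΦT : ∀ g x, Φ (T g x) = T g (Φ x)) (hε : 0 ≤ ε) :
    IsEquivariantPerturbation T U ε Φ Φ :=
  ⟨hΦ, hΦT, fun _ _ => rfl, by simpa using hε⟩

theorem trans (h : IsEquivariantPerturbation T U ε Φ Φ')
    (h' : IsEquivariantPerturbation T U δ Φ' Φ'') : IsEquivariantPerturbation T U (δ + ε) Φ Φ'' :=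
  ⟨h'.contDiff, h'.map_apply, fun x hx => (h'.eq_of_notMem x hx).trans (h.eq_of_notMem x hx),
    fun x => (norm_sub_le_norm_sub_add_norm_sub _ (Φ' x) _).trans
      (add_le_add (h'.norm_sub_le x) (h.norm_sub_le x))⟩

end IsEquivariantPerturbation

variable [FiniteDimensional ℝ V]

theorem dense_compl_image_det_fderiv_eq_zero {Φ : V → V} (hΦ : Differentiable ℝ Φ) :
    Dense (Φ '' {x | (fderiv ℝ Φ x).det = 0})ᶜ := by
  borelize V
  rw [← interior_eq_empty_iff_dense_compl]
  exact Measure.interior_eq_empty_of_null (μ := Measure.addHaar)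
    (addHaar_image_eq_zero_of_det_fderivWithin_eq_zero _
      (fun x _ => (hΦ x).hasFDerivAt.hasFDerivWithinAt) fun _ hx => hx)

theorem finite_setOf_mem_and_eq_zero {Φ : V → V} (hΦ : ContDiff ℝ 1 Φ) {K : Set V}
    (hK : IsCompact K) (hreg : HasRegularZerosOn Φ K) : {x ∈ K | Φ x = 0}.Finite := by
  have hcompact : IsCompact {x ∈ K | Φ x = 0} :=
    hK.inter_right (isClosed_eq hΦ.continuous continuous_const)
  refine hcompact.finite (isDiscrete_iff_forall_mem_exists_isOpen.2 ?_)
  rintro x ⟨hxK, hx⟩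
  obtain ⟨e, he, hxe⟩ := exists_openPartialHomeomorph_of_det_ne_zero hΦ (hreg x hxK hx)
  refine ⟨e.source, e.open_source, Subset.antisymm ?_ (singleton_subset_iff.2 ⟨hxe, hxK, hx⟩)⟩
  rintro y ⟨hye, -, hy⟩
  exact e.injOn hye hxe (by rw [he, hx, hy])

/-- Small equivariant perturbations supported in `U` suffice to make a map regular on `S`, keeping
it regular on any compact set on which it already is. -/
def IsRegularizable (T : G →* (V →L[ℝ] V)) (U S : Set V) : Prop :=
  ∀ (Φ : V → V) (K : Set V) (ε : ℝ), ContDiff ℝ 1 Φ → (∀ g x, Φ (T g x) = T g (Φ x)) →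
    IsCompact K → HasRegularZerosOn Φ K → 0 < ε →
      ∃ Φ', IsEquivariantPerturbation T U ε Φ Φ' ∧ HasRegularZerosOn Φ' (K ∪ S)

theorem exists_mem_nhds_isCompact_isRegularizable [Finite G] (T : G →* (V →L[ℝ] V)) {U : Set V}
    (hU : IsOpen U) (hTU : ∀ g, ∀ x ∈ U, T g x ∈ U) {x₀ : V} (hxU : x₀ ∈ U)
    (hx₀ : ∀ g, T g x₀ = x₀ → g = 1) :
    ∃ S ∈ 𝓝 x₀, IsCompact S ∧ IsRegularizable T U S := by
  have := Fintype.ofFinite G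
  obtain ⟨r, hr, hrU, hdisj⟩ := exists_pos_forall_ball_disjoint T hx₀ (hU.mem_nhds hxU)
  let χ : ContDiffBump x₀ := ⟨r / 2, r, by positivity, by linarith⟩
  refine ⟨Metric.closedBall x₀ (r / 3), Metric.closedBall_mem_nhds _ (by positivity),
    isCompact_closedBall _ _, fun Φ K ε hΦ hΦT hK hreg hε => ?_⟩
  have hsmooth : ContDiff ℝ 1 (Function.uncurry fun c x => Φ x + orbitBump T χ c x) :=
    (hΦ.comp contDiff_snd).add (contDiff_orbitBump T χ.contDiff)
  have hregK : ∀ᶠ c in 𝓝 (0 : V), HasRegularZerosOn (fun x => Φ x + orbitBump T χ c x) K :=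
    eventually_hasRegularZerosOn hsmooth hK (by simpa only [orbitBump_zero_right, add_zero])
  have hsmall : ∀ᶠ c in 𝓝 (0 : V), (∑ g, ‖T g‖) * ‖c‖ < ε := by
    have hcont : Continuous fun c : V => (∑ g, ‖T g‖) * ‖c‖ := by fun_prop
    exact hcont.continuousAt.eventually (gt_mem_nhds (by simpa using hε))
  have hvalue : ∃ᶠ c in 𝓝 (0 : V), -c ∈ (Φ '' {x | (fderiv ℝ Φ x).det = 0})ᶜ :=
    mem_closure_iff_frequently.1 ((dense_compl_image_det_fderiv_eq_zero
      (hΦ.differentiable one_ne_zero)).preimage (Homeomorph.neg V).isOpenMap 0)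
  obtain ⟨c, hcvalue, hcK, hcε⟩ := (hvalue.and_eventually (hregK.and hsmall)).exists
  refine ⟨fun x => Φ x + orbitBump T χ c x, ⟨?_, fun g x => ?_, fun x hx => ?_, fun x => ?_⟩, ?_⟩
  · exact hsmooth.comp (contDiff_const.prodMk contDiff_id)
  · rw [hΦT, orbitBump_apply, map_add]
  · rw [orbitBump_of_notMem T hTU (χ.support_eq.trans_subset hrU) c hx, add_zero]
  · rw [add_sub_cancel_left]
    exact (norm_orbitBump_le T (fun _ => χ.nonneg) (fun _ => χ.le_one) c x).trans hcε.le
  · refine union_subset hcK (hasRegularZerosOn_of_eventuallyEq_add_const (fun x hx => ?_) hcvalue)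
    filter_upwards [Metric.isOpen_ball.mem_nhds
      (Metric.closedBall_subset_ball (by linarith : r / 3 < r / 2) hx)] with y hy
    rw [orbitBump_of_eq_one T (χ.one_of_mem_closedBall (Metric.ball_subset_closedBall hy))
      fun g hg => χ.zero_of_le_dist (not_lt.1 (hdisj g hg y
        (Metric.ball_subset_ball (by linarith) hy)))]

theorem exists_isEquivariantPerturbation_hasRegularZerosOn [Finite G] (T : G →* (V →L[ℝ] V))
    {U : Set V} (hU : IsOpen U) (hTU : ∀ g, ∀ x ∈ U, T g x ∈ U) {C : Set V} (hC : IsCompact C)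
    (hCU : C ⊆ U) (hfree : ∀ x ∈ C, ∀ g, T g x = x → g = 1) {Φ : V → V} (hΦ : ContDiff ℝ 1 Φ)
    (hΦT : ∀ g x, Φ (T g x) = T g (Φ x)) {ε : ℝ} (hε : 0 < ε) :
    ∃ Φ', IsEquivariantPerturbation T U ε Φ Φ' ∧ HasRegularZerosOn Φ' C := by
  obtain ⟨L, -, hCL, hL⟩ : ∃ L, IsCompact L ∧ C ⊆ L ∧ IsRegularizable T U L := by
    refine hC.induction_on (p := fun S => ∃ L, IsCompact L ∧ S ⊆ L ∧ IsRegularizable T U L)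
      ⟨∅, isCompact_empty, subset_rfl, fun Φ K ε hΦ hΦT _ hreg hε =>
        ⟨Φ, .refl hΦ hΦT hε.le, by rwa [union_empty]⟩⟩
      (fun S S' hS ⟨L, hL, hSL, h⟩ => ⟨L, hL, hS.trans hSL, h⟩) ?_ fun x hx => ?_
    · rintro S S' ⟨L, hL, hSL, h⟩ ⟨L', hL', hSL', h'⟩
      refine ⟨L ∪ L', hL.union hL', union_subset_union hSL hSL', fun Φ K ε hΦ hΦT hK hreg hε => ?_⟩
      obtain ⟨Φ', hΦ', hreg'⟩ := h Φ K (ε / 2) hΦ hΦT hK hreg (half_pos hε)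
      obtain ⟨Φ'', hΦ'', hreg''⟩ := h' Φ' (K ∪ L) (ε / 2) hΦ'.contDiff hΦ'.map_apply
        (hK.union hL) hreg' (half_pos hε)
      exact ⟨Φ'', add_halves ε ▸ hΦ'.trans hΦ'', by rwa [← union_assoc]⟩
    · obtain ⟨S, hS, hSc, hreg⟩ :=
        exists_mem_nhds_isCompact_isRegularizable T hU hTU (hCU hx) (hfree x hx)
      exact ⟨S, mem_nhdsWithin_of_mem_nhds hS, S, hSc, subset_rfl, hreg⟩
  obtain ⟨Φ', hΦ', hreg⟩ := hL Φ ∅ ε hΦ hΦT isCompact_empty (fun _ => False.elim) hε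
  exact ⟨Φ', hΦ', fun x hx => hreg x (Or.inr (hCL hx))⟩

end Perturbation

section LocalDegreeAtZero

variable {G V : Type*} [Group G] [NormedAddCommGroup V] [NormedSpace ℝ V]

theorem exists_isClosed_mem_nhds_zero_subset_forall_map_mem [Finite G] (T : G →* (V →L[ℝ] V))
    {N : Set V} (hN : N ∈ 𝓝 0) :
    ∃ B ∈ 𝓝 (0 : V), IsClosed B ∧ B ⊆ N ∧ ∀ g, ∀ x ∈ B, T g x ∈ B := by
  obtain ⟨A, hA, hAclosed, hAN⟩ := exists_mem_nhds_isClosed_subset hN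
  refine ⟨⋂ g, T g ⁻¹' A, iInter_mem.2 fun g => ?_,
    isClosed_iInter fun g => hAclosed.preimage (T g).continuous, fun x hx => hAN ?_,
    fun g x hx => mem_iInter.2 fun h => ?_⟩
  · exact (T g).continuous.continuousAt.preimage_mem_nhds (by rwa [map_zero])
  · simpa using mem_iInter.1 hx 1
  · rw [mem_preimage, ← mul_apply_eq_comp, ← map_mul]
    exact mem_iInter.1 hx (h * g)

theorem exists_contDiff_forall_map_eq_eq_one_eq_zero [Finite G] [FiniteDimensional ℝ V]
    (T : G →* (V →L[ℝ] V)) {B N : Set V} (hB : IsClosed B) (hN : IsOpen N) (hBN : B ⊆ N)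
    (hTB : ∀ g, ∀ x ∈ B, T g x ∈ B) (hTN : ∀ g, ∀ x ∈ N, T g x ∈ N) :
    ∃ t : V → ℝ, ContDiff ℝ 1 t ∧ (∀ g x, t (T g x) = t x) ∧ (∀ x ∈ B, t x = 1) ∧
      ∀ x ∉ N, t x = 0 := by
  have := Fintype.ofFinite G
  obtain ⟨χ, hχ0, hχ1, -⟩ := exists_contMDiffMap_zero_one_of_isClosed (modelWithCornersSelf ℝ V)
    (n := 1) hN.isClosed_compl hB (disjoint_compl_left_iff_subset.2 hBN)
  refine ⟨fun x => (Fintype.card G : ℝ)⁻¹ * ∑ g, χ (T g x), ?_, fun h x => ?_, fun x hx => ?_,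
    fun x hx => ?_⟩
  · exact contDiff_const.mul
      (ContDiff.sum fun g _ => χ.contMDiff.contDiff.comp (T g).contDiff)
  · refine congrArg _ (Fintype.sum_equiv (Equiv.mulRight h) _ _ fun g => ?_)
    rw [Equiv.coe_mulRight, map_mul, mul_apply_eq_comp]
  · simp [fun g => hχ1 (hTB g x hx)]
  · have hgx (g : G) : T g x ∉ N := fun h => hx (inv_apply_apply T g x ▸ hTN g⁻¹ _ h)
    simp [fun g => hχ0 (hgx g)]

theorem exists_isEquivariantPerturbation_hasRegularZerosOn_of_zeros_subset [Finite G]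
    [FiniteDimensional ℝ V] (T : G →* (V →L[ℝ] V)) {U : Set V} (hU : IsOpen U)
    (hTU : ∀ g, ∀ x ∈ U, T g x ∈ U) (hfree : ∀ x ∈ U, ∀ g, T g x = x → g = 1) {C : Set V}
    (hC : IsCompact C) {Φ : V → V} (hΦ : ContDiff ℝ 1 Φ) (hΦT : ∀ g x, Φ (T g x) = T g (Φ x))
    (hCU : ∀ x ∈ C, Φ x = 0 → x ∈ U) {ε : ℝ} (hε : 0 < ε) :
    ∃ Φ', IsEquivariantPerturbation T U ε Φ Φ' ∧ HasRegularZerosOn Φ' C := by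
  have hzeros : IsCompact (C ∩ {x | Φ x = 0}) :=
    hC.inter_right (isClosed_eq hΦ.continuous continuous_const)
  obtain ⟨L, hL, hzerosL, hLU⟩ := exists_compact_between hzeros hU fun x hx => hCU x hx.1 hx.2
  obtain ⟨η, hη, hηΦ⟩ := (hC.diff isOpen_interior).exists_forall_le' hΦ.continuous.norm.continuousOn
    fun x (hx : x ∈ C \ interior L) => norm_pos_iff.2 fun h => hx.2 (hzerosL ⟨hx.1, h⟩)
  obtain ⟨Φ', hΦ', hreg⟩ := exists_isEquivariantPerturbation_hasRegularZerosOn T hU hTU hL hLU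
    (fun x hx => hfree x (hLU hx)) hΦ hΦT (lt_min hε (half_pos hη))
  refine ⟨Φ', ⟨hΦ'.contDiff, hΦ'.map_apply, hΦ'.eq_of_notMem,
    fun x => (hΦ'.norm_sub_le x).trans (min_le_left _ _)⟩, fun x hx hx0 => ?_⟩
  refine hreg x (by_contra fun hxL => ?_) hx0
  have hle : ‖Φ x‖ ≤ η / 2 := by
    simpa [hx0] using (hΦ'.norm_sub_le x).trans (min_le_right _ _)
  linarith [hηΦ x ⟨hx, fun h => hxL (interior_subset h)⟩]

theorem det_fderiv_id (x : V) : (fderiv ℝ id x).det = 1 := by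
  rw [fderiv_id]
  exact LinearMap.det_id

theorem sum_jacobianSign_modEq_one [Fintype G] (T : G →* (V →L[ℝ] V)) {N : Set V}
    (hTN : ∀ g, ∀ x ∈ N, T g x ∈ N) (hfree : ∀ x, x ≠ 0 → ∀ g, T g x = x → g = 1) {Φ : V → V}
    (hΦ : Differentiable ℝ Φ) (hΦT : ∀ g x, Φ (T g x) = T g (Φ x)) (hΦid : Φ =ᶠ[𝓝 0] id)
    {Z : Finset V} (h0Z : 0 ∈ Z) (hZ : ∀ x, x ∈ Z ↔ x ∈ N ∧ Φ x = 0) :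
    ∑ z ∈ Z, jacobianSign Φ z ≡ 1 [ZMOD Fintype.card G] := by
  classical
  let _ := MulAction.compHom V T
  have hdvd : (Fintype.card G : ℤ) ∣ ∑ z ∈ Z.erase 0, jacobianSign Φ z := by
    refine card_dvd_sum_of_free (fun g z hz => ?_)
      (fun z hz => hfree z (Finset.ne_of_mem_erase hz)) fun g z _ => ?_
    · change T g z ∈ Z.erase 0
      have hz0 : T g z ≠ 0 := fun h => Finset.ne_of_mem_erase hz <| by
        rw [← inv_apply_apply T g z, h, map_zero]
      obtain ⟨hzN, hΦz⟩ := (hZ z).1 (Finset.mem_of_mem_erase hz)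
      exact Finset.mem_erase.2 ⟨hz0, (hZ _).2 ⟨hTN g z hzN, by rw [hΦT, hΦz, map_zero]⟩⟩
    · change jacobianSign Φ (T g z) = jacobianSign Φ z
      rw [jacobianSign, jacobianSign, det_fderiv_apply_of_equivariant T hΦ hΦT]
  have hone : jacobianSign Φ 0 = 1 := by
    rw [jacobianSign, hΦid.fderiv_eq, det_fderiv_id, sign_one, SignType.coe_one]
  rw [← Finset.sum_erase_add _ _ h0Z, hone]
  exact (Int.modEq_zero_iff_dvd.2 hdvd).add_right 1

theorem exists_equivariant_eq_id_near_zero [Finite G] [FiniteDimensional ℝ V]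
    (T : G →* (V →L[ℝ] V)) {N : Set V} (hN : IsOpen N) (h0N : 0 ∈ N)
    (hTN : ∀ g, ∀ x ∈ N, T g x ∈ N) {Θ : V → V} (hΘ : ContDiff ℝ 1 Θ)
    (hΘT : ∀ g x, Θ (T g x) = T g (Θ x)) :
    ∃ B ∈ 𝓝 (0 : V), IsClosed B ∧ (∀ g, ∀ x ∈ B, T g x ∈ B) ∧ ∃ F : V → V, ContDiff ℝ 1 F ∧
      (∀ g x, F (T g x) = T g (F x)) ∧ (∀ x ∈ B, F x = x) ∧ ∀ x ∉ N, F x = Θ x := by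
  obtain ⟨B, hB0, hB, hBN, hTB⟩ :=
    exists_isClosed_mem_nhds_zero_subset_forall_map_mem T (hN.mem_nhds h0N)
  obtain ⟨t, ht, htT, htB, htN⟩ :=
    exists_contDiff_forall_map_eq_eq_one_eq_zero T hB hN hBN hTB hTN
  refine ⟨B, hB0, hB, hTB, fun x => (1 - t x) • Θ x + t x • x,
    ((contDiff_const.sub ht).smul hΘ).add (ht.smul contDiff_id), fun g x => ?_, fun x hx => ?_,
    fun x hx => ?_⟩
  · simp only [htT, hΘT, map_add, map_smul]
  · simp [htB x hx]
  · simp [htN x hx]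

theorem exists_eq_on_compl_sum_jacobianSign_modEq_one [Fintype G] [FiniteDimensional ℝ V]
    (T : G →* (V →L[ℝ] V)) (hfree : ∀ x, x ≠ 0 → ∀ g, T g x = x → g = 1) {N : Set V}
    (hN : IsOpen N) (hNc : IsCompact (closure N)) (h0N : 0 ∈ N) (hTN : ∀ g, ∀ x ∈ N, T g x ∈ N)
    {Θ : V → V} (hΘ : ContDiff ℝ 1 Θ) (hΘT : ∀ g x, Θ (T g x) = T g (Θ x))
    (hΘ0 : ∀ x ∈ frontier N, Θ x ≠ 0) :
    ∃ (Φ : V → V) (Z : Finset V), ContDiff ℝ 1 Φ ∧ (∀ x ∉ N, Φ x = Θ x) ∧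
      (∀ x, x ∈ Z ↔ x ∈ N ∧ Φ x = 0) ∧ HasRegularZerosOn Φ N ∧
      ∑ z ∈ Z, jacobianSign Φ z ≡ 1 [ZMOD Fintype.card G] := by
  obtain ⟨B, hB0, hB, hTB, F, hF, hFT, hFB, hFN⟩ :=
    exists_equivariant_eq_id_near_zero T hN h0N hTN hΘ hΘT
  have h0B : 0 ∈ interior B := mem_interior_iff_mem_nhds.2 hB0
  have hTNB (g : G) (x : V) (hx : x ∈ N \ B) : T g x ∈ N \ B :=
    ⟨hTN g x hx.1, fun h => hx.2 (inv_apply_apply T g x ▸ hTB g⁻¹ _ h)⟩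
  have hzeros (x : V) (hx : x ∈ closure N \ interior B) (hx0 : F x = 0) : x ∈ N \ B := by
    refine ⟨by_contra fun hxN => ?_, fun hxB => ?_⟩
    · exact hΘ0 x (hN.frontier_eq ▸ ⟨hx.1, hxN⟩) (hFN x hxN ▸ hx0)
    · exact hx.2 ((hFB x hxB).symm.trans hx0 ▸ h0B)
  obtain ⟨Φ, hΦ, hreg⟩ := exists_isEquivariantPerturbation_hasRegularZerosOn_of_zeros_subset T
    (hN.sdiff hB) hTNB (fun x hx => hfree x fun h => hx.2 (h ▸ mem_of_mem_nhds hB0))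
    (hNc.diff isOpen_interior) hF hFT hzeros one_pos
  have hΦid (x : V) (hx : x ∈ interior B) : Φ =ᶠ[𝓝 x] id := by
    filter_upwards [isOpen_interior.mem_nhds hx] with y hy
    rw [hΦ.eq_of_notMem y fun h => h.2 (interior_subset hy), hFB y (interior_subset hy), id]
  have hΦN : HasRegularZerosOn Φ (closure N) := by
    intro x hx hx0
    by_cases hxB : x ∈ interior B
    · rw [(hΦid x hxB).fderiv_eq, det_fderiv_id]
      exact one_ne_zero
    · exact hreg x ⟨hx, hxB⟩ hx0
  have hfin : {x ∈ N | Φ x = 0}.Finite :=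
    (finite_setOf_mem_and_eq_zero hΦ.contDiff hNc hΦN).subset fun x hx =>
      ⟨subset_closure hx.1, hx.2⟩
  refine ⟨Φ, hfin.toFinset, hΦ.contDiff, fun x hx => ?_, fun x => hfin.mem_toFinset,
    fun x hx => hΦN x (subset_closure hx), sum_jacobianSign_modEq_one T hTN hfree
      (hΦ.contDiff.differentiable one_ne_zero) hΦ.map_apply (hΦid 0 h0B)
      (hfin.mem_toFinset.2 ⟨h0N, (hΦid 0 h0B).eq_of_nhds⟩) fun x => hfin.mem_toFinset⟩
  rw [hΦ.eq_of_notMem x fun h => hx h.1, hFN x hx]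

end LocalDegreeAtZero

theorem exists_zero_of_equivariant_of_intPeriodic {G κ : Type*} [Group G] [Finite G]
    [Nontrivial G] [Fintype κ] [Nonempty κ] (T : G →* ((κ → ℝ) →L[ℝ] (κ → ℝ)))
    (hfree : ∀ x, x ≠ 0 → ∀ g, T g x = x → g = 1) {N : Set (κ → ℝ)} (hN : IsOpen N) (h0N : 0 ∈ N)
    (hTN : ∀ g, ∀ x ∈ N, T g x ∈ N) {r : ℝ} (hr : r < 1 / 2) (hNr : N ⊆ Metric.ball 0 r)
    {Θ P Ξ : (κ → ℝ) → (κ → ℝ)} (hΘ : ContDiff ℝ 1 Θ) (hΘT : ∀ g x, Θ (T g x) = T g (Θ x))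
    (hP : ContDiff ℝ 1 P) (hPper : IntPeriodic P) (hΞ : ContDiff ℝ 1 Ξ)
    (hΞΘ : ∀ x ∈ N, Ξ x = Θ x) (hΞP : ∀ x, r ≤ ‖x‖ → Ξ x = P x) :
    ∃ x ∉ N, ‖x‖ ≤ 1 / 2 ∧ Ξ x = 0 := by
  have := Fintype.ofFinite G
  by_contra! hne
  have hclosure : closure N ⊆ Metric.closedBall 0 r :=
    closure_minimal (hNr.trans Metric.ball_subset_closedBall) Metric.isClosed_closedBall
  have hΘ0 (x : κ → ℝ) (hx : x ∈ frontier N) : Θ x ≠ 0 := by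
    have hxr : ‖x‖ ≤ r := mem_closedBall_zero_iff.1 (hclosure (frontier_subset_closure hx))
    rw [← (EqOn.closure hΞΘ hΞ.continuous hΘ.continuous) (frontier_subset_closure hx)]
    exact hne x (hN.frontier_eq ▸ hx).2 (hxr.trans hr.le)
  obtain ⟨Φ, Z, hΦ, hΦN, hZ, hreg, hsum⟩ := exists_eq_on_compl_sum_jacobianSign_modEq_one T hfree hN
    ((isCompact_closedBall _ _).of_isClosed_subset isClosed_closure hclosure) h0N hTN hΘ hΘT hΘ0
  set Λ : (κ → ℝ) → (κ → ℝ) := fun x => Ξ x + (Φ x - Θ x)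
  have hΛN (x : κ → ℝ) (hx : x ∈ N) : Λ x = Φ x := by simp [Λ, hΞΘ x hx]
  have hΛc (x : κ → ℝ) (hx : x ∉ N) : Λ x = Ξ x := by simp [Λ, hΦN x hx]
  have hΛΦ (x : κ → ℝ) (hx : x ∈ N) : Λ =ᶠ[𝓝 x] Φ := (hN.eventually_mem hx).mono hΛN
  have hΛzero (x : κ → ℝ) (hx : ‖x‖ ≤ 1 / 2) (hx0 : Λ x = 0) : x ∈ N :=
    by_contra fun hxN => hne x hxN hx (hΛc x hxN ▸ hx0)
  have hsum0 : ∑ z ∈ Z, jacobianSign Λ z = 0 := by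
    refine hPper.sum_jacobianSign_eq_zero_of_eq hP (hΞ.add (hΦ.sub hΘ)) hr
      (fun x hx => ?_) (fun z hz => ?_) (fun x hx => ?_) fun x hx hx0 => ?_
    · rw [← hΞP x hx]
      exact hΛc x fun hxN => (mem_ball_zero_iff.1 (hNr hxN)).not_ge hx
    · exact (mem_ball_zero_iff.1 (hNr ((hZ z).1 hz).1)).trans hr
    · rw [hZ]
      exact ⟨fun h => (hΛN x h.1).trans h.2,
        fun h => ⟨hΛzero x hx h, hΛN x (hΛzero x hx h) ▸ h⟩⟩
    · have hxN := hΛzero x (mem_closedBall_zero_iff.1 hx) hx0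
      rw [(hΛΦ x hxN).fderiv_eq]
      exact hreg x hxN (hΛN x hxN ▸ hx0)
  rw [Finset.sum_congr rfl fun z hz => (jacobianSign_congr (hΛΦ z ((hZ z).1 hz).1))] at hsum0
  have hcard := Int.le_of_dvd one_pos (Int.modEq_zero_iff_dvd.1 (hsum0 ▸ hsum).symm)
  exact hcard.not_gt (mod_cast Fintype.one_lt_card)

section Smoothing

variable {κ E : Type*}

theorem IntPeriodic.uniformContinuous [Finite κ] [PseudoMetricSpace E] {F : (κ → ℝ) → E}
    (hF : IntPeriodic F) (hc : Continuous F) : UniformContinuous F := by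
  have := Fintype.ofFinite κ
  refine Metric.uniformContinuous_iff.2 fun ε hε => ?_
  obtain ⟨δ, hδ, h⟩ := Metric.mem_uniformity_dist.1
    ((isCompact_closedBall (0 : κ → ℝ) (1 / 2)).uniformContinuousAt_of_continuousAt F
      (fun x _ => hc.continuousAt) (Metric.dist_mem_uniformity hε))
  refine ⟨δ, hδ, fun {x y} hxy => ?_⟩
  have hround := h (a := x - fun i => (round (x i) : ℝ)) (b := y - fun i => (round (x i) : ℝ))
    (by rwa [dist_sub_right]) (mem_closedBall_zero_iff.2 (norm_sub_round_le x))
  have hper := hF fun i => round (x i)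
  rwa [mem_ofPred_eq, hper.sub_eq, hper.sub_eq] at hround

variable [Fintype κ] [NormedAddCommGroup E] [NormedSpace ℝ E] [CompleteSpace E]

theorem IntPeriodic.exists_contDiff_norm_sub_le {F : (κ → ℝ) → E} (hF : IntPeriodic F)
    (hc : Continuous F) {ε : ℝ} (hε : 0 < ε) :
    ∃ H : (κ → ℝ) → E, ContDiff ℝ 1 H ∧ IntPeriodic H ∧ ∀ x, ‖H x - F x‖ ≤ ε := by
  obtain ⟨r, hr, hFr⟩ := Metric.uniformContinuous_iff.1 (hF.uniformContinuous hc) ε hε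
  let φ : ContDiffBump (0 : κ → ℝ) := ⟨r / 2, r, half_pos hr, half_lt_self hr⟩
  refine ⟨convolution (φ.normed volume) F (ContinuousLinearMap.lsmul ℝ ℝ) volume,
    φ.hasCompactSupport_normed.contDiff_convolution_left (n := 1) _ φ.contDiff_normed
      hc.locallyIntegrable, fun z x => ?_, fun x => ?_⟩
  · simp_rw [convolution_def, add_sub_right_comm, hF z _]
  · rw [← dist_eq_norm]
    exact φ.dist_normed_convolution_le hc.aestronglyMeasurable fun y hy => (hFr hy).le

theorem IntPeriodic.exists_contDiff_equivariant_norm_sub_le {G : Type*} [Group G] [Finite G]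
    (σ : G →* ((κ → ℝ) →L[ℝ] (κ → ℝ))) (τ : G →* (E →L[ℝ] E)) (hτ : ∀ g v, ‖τ g v‖ ≤ ‖v‖)
    (hσ : ∀ g (z : κ → ℤ), ∃ w : κ → ℤ, σ g (fun i => (z i : ℝ)) = fun i => (w i : ℝ))
    {F : (κ → ℝ) → E} (hF : IntPeriodic F) (hc : Continuous F)
    (hFσ : ∀ g x, F (σ g x) = τ g (F x)) {ε : ℝ} (hε : 0 < ε) :
    ∃ H : (κ → ℝ) → E, ContDiff ℝ 1 H ∧ IntPeriodic H ∧ (∀ g x, H (σ g x) = τ g (H x)) ∧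
      ∀ x, ‖H x - F x‖ ≤ ε := by
  have := Fintype.ofFinite G
  obtain ⟨H, hH, hHper, hHF⟩ := hF.exists_contDiff_norm_sub_le hc hε
  refine ⟨fun x => (Fintype.card G : ℝ)⁻¹ • ∑ g, τ g⁻¹ (H (σ g x)), ?_, fun z x => ?_,
    fun h x => ?_, fun x => ?_⟩
  · exact (ContDiff.sum fun g _ => (τ g⁻¹).contDiff.comp (hH.comp (σ g).contDiff)).const_smul _
  · refine congrArg _ (Finset.sum_congr rfl fun g _ => ?_)
    obtain ⟨w, hw⟩ := hσ g z
    rw [map_add, hw, hHper w]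
  · rw [map_smul, map_sum]
    refine congrArg _ (Fintype.sum_equiv (Equiv.mulRight h) _ _ fun g => ?_)
    rw [Equiv.coe_mulRight, mul_inv_rev, map_mul, map_mul, mul_apply_eq_comp, mul_apply_eq_comp,
      apply_inv_apply]
  · have hmean : (Fintype.card G : ℝ)⁻¹ • ∑ g, τ g⁻¹ (H (σ g x)) - F x =
        (Fintype.card G : ℝ)⁻¹ • ∑ g, τ g⁻¹ (H (σ g x) - F (σ g x)) := by
      simp [hFσ, inv_apply_apply, smul_sub, ← Nat.cast_smul_eq_nsmul ℝ]
    rw [hmean, norm_smul, norm_inv, Real.norm_natCast, inv_mul_le_iff₀ (by positivity)]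
    simpa using norm_sum_le_of_le Finset.univ fun g _ => (hτ g⁻¹ _).trans (hHF (σ g x))

end Smoothing

section IndexShift

/-- The mean of a family over `A`, as a family that is constant along `A`. -/
noncomputable def indexMean (A ι : Type*) [Fintype A] : (A × ι → ℝ) →L[ℝ] (A × ι → ℝ) :=
  ContinuousLinearMap.pi fun q => (Fintype.card A : ℝ)⁻¹ • ∑ k, ContinuousLinearMap.proj (k, q.2)

theorem indexMean_apply {A ι : Type*} [Fintype A] (y : A × ι → ℝ) (q : A × ι) :
    indexMean A ι y q = (Fintype.card A : ℝ)⁻¹ * ∑ k, y (k, q.2) := by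
  simp [indexMean]

variable (A ι : Type*) [AddGroup A]

/-- Extension by zero of a family indexed by the nonzero elements of `A`. -/
def extendZero [DecidableEq A] : ({k : A // k ≠ 0} × ι → ℝ) →L[ℝ] (A × ι → ℝ) :=
  ContinuousLinearMap.pi fun q =>
    if h : q.1 ≠ 0 then ContinuousLinearMap.proj (⟨q.1, h⟩, q.2) else 0

/-- Differences of the entries of a family with its entry at zero. The kernel consists of the
families that are constant along `A`, so that this is the quotient by the constant families. -/
def subZeroEntry : (A × ι → ℝ) →L[ℝ] ({k : A // k ≠ 0} × ι → ℝ) :=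
  ContinuousLinearMap.pi fun q =>
    (ContinuousLinearMap.proj (R := ℝ) (φ := fun _ : A × ι => ℝ) (q.1.1, q.2) -
      ContinuousLinearMap.proj (0, q.2))

/-- The action of `A` on families by translation of the index. -/
def indexShift : Multiplicative A →* ((A × ι → ℝ) →L[ℝ] (A × ι → ℝ)) where
  toFun g := ContinuousLinearMap.pi fun q => ContinuousLinearMap.proj (q.1 + g.toAdd, q.2)
  map_one' := by
    ext y q
    simp
  map_mul' g h := by
    ext y q
    simp [add_assoc]

variable {A ι}

section

variable [DecidableEq A]

theorem extendZero_apply (x : {k : A // k ≠ 0} × ι → ℝ) (q : A × ι) :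
    extendZero A ι x q = if h : q.1 ≠ 0 then x (⟨q.1, h⟩, q.2) else 0 := by
  by_cases h : q.1 = 0 <;> simp [extendZero, h]

theorem extendZero_apply_zero (x : {k : A // k ≠ 0} × ι → ℝ) (i : ι) :
    extendZero A ι x (0, i) = 0 := by
  simp [extendZero_apply]

theorem IntPeriodic.comp_extendZero {E : Type*} {F : (A × ι → ℝ) → E} (hF : IntPeriodic F) :
    IntPeriodic fun x => F (extendZero A ι x) := by
  intro z x
  have hz : extendZero A ι (fun q => (z q : ℝ)) =
      fun q => ((if h : q.1 ≠ 0 then z (⟨q.1, h⟩, q.2) else 0 : ℤ) : ℝ) := by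
    funext q
    rw [extendZero_apply]
    split_ifs <;> simp
  change F (extendZero A ι (x + _)) = F (extendZero A ι x)
  rw [map_add, hz, hF]

end

theorem subZeroEntry_apply (y : A × ι → ℝ) (q : {k : A // k ≠ 0} × ι) :
    subZeroEntry A ι y q = y (q.1, q.2) - y (0, q.2) := rfl

theorem indexShift_apply (g : Multiplicative A) (y : A × ι → ℝ) (q : A × ι) :
    indexShift A ι g y q = y (q.1 + g.toAdd, q.2) := rfl

theorem subZeroEntry_extendZero [DecidableEq A] (x : {k : A // k ≠ 0} × ι → ℝ) :
    subZeroEntry A ι (extendZero A ι x) = x := by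
  funext q
  rw [subZeroEntry_apply, extendZero_apply_zero, extendZero_apply, dif_pos q.1.2, sub_zero]

theorem subZeroEntry_eq_zero_iff {y : A × ι → ℝ} :
    subZeroEntry A ι y = 0 ↔ ∀ k i, y (k, i) = y (0, i) := by
  rw [funext_iff]
  simp only [subZeroEntry_apply, Pi.zero_apply, sub_eq_zero]
  refine ⟨fun h k i => ?_, fun h q => h _ _⟩
  by_cases hk : k = 0
  · rw [hk]
  · exact h (⟨k, hk⟩, i)

theorem subZeroEntry_indexShift_congr {y z : A × ι → ℝ}
    (h : subZeroEntry A ι y = subZeroEntry A ι z) (g : Multiplicative A) :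
    subZeroEntry A ι (indexShift A ι g y) = subZeroEntry A ι (indexShift A ι g z) := by
  rw [← sub_eq_zero, ← map_sub, subZeroEntry_eq_zero_iff] at h
  rw [← sub_eq_zero, ← map_sub, ← map_sub, subZeroEntry_eq_zero_iff]
  intro k i
  rw [indexShift_apply, indexShift_apply, h, h (0 + _)]

section Mean

variable [Fintype A]

theorem indexMean_eq_self {y : A × ι → ℝ} (hy : subZeroEntry A ι y = 0) :
    indexMean A ι y = y := by
  rw [subZeroEntry_eq_zero_iff] at hy
  funext q
  simp [indexMean_apply, hy _ q.2]

theorem sub_indexMean_congr {y z : A × ι → ℝ} (h : subZeroEntry A ι y = subZeroEntry A ι z) :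
    y - indexMean A ι y = z - indexMean A ι z := by
  rw [← sub_eq_zero, ← map_sub] at h
  rw [← sub_eq_zero, sub_sub_sub_comm, ← map_sub, indexMean_eq_self h, sub_self]

theorem subZeroEntry_indexMean (y : A × ι → ℝ) : subZeroEntry A ι (indexMean A ι y) = 0 := by
  rw [subZeroEntry_eq_zero_iff]
  intro k i
  rw [indexMean_apply, indexMean_apply]

theorem indexMean_indexShift (g : Multiplicative A) (y : A × ι → ℝ) :
    indexMean A ι (indexShift A ι g y) = indexShift A ι g (indexMean A ι y) := by
  funext q
  rw [indexShift_apply, indexMean_apply, indexMean_apply]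
  exact congrArg _ (Fintype.sum_equiv (Equiv.addRight g.toAdd) _ _ fun k => rfl)

end Mean

theorem eq_apply_zero_of_periodic {α : Type*} {p : ℕ} [Fact p.Prime] (hA : Nat.card A = p)
    {x : A → α} {j : A} (hj : j ≠ 0) (hx : Function.Periodic x j) (k : A) : x k = x 0 := by
  obtain ⟨n, rfl⟩ := AddSubgroup.mem_zmultiples_iff.1 (mem_zmultiples_of_prime_card hA hj (g' := k))
  exact hx.zsmul_eq n

section ReducedShift

variable [DecidableEq A]

variable (A ι) in
/-- The action of `A` that `indexShift` induces on families modulo those that are constant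
along `A`. -/
def reducedShift :
    Multiplicative A →* (({k : A // k ≠ 0} × ι → ℝ) →L[ℝ] ({k : A // k ≠ 0} × ι → ℝ)) where
  toFun g := subZeroEntry A ι ∘L indexShift A ι g ∘L extendZero A ι
  map_one' := by
    refine ContinuousLinearMap.ext fun x => ?_
    simp [subZeroEntry_extendZero]
  map_mul' g h := by
    refine ContinuousLinearMap.ext fun x => ?_
    change subZeroEntry A ι (indexShift A ι (g * h) (extendZero A ι x)) =
      subZeroEntry A ι (indexShift A ι g (extendZero A ι
        (subZeroEntry A ι (indexShift A ι h (extendZero A ι x)))))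
    rw [map_mul, mul_apply_eq_comp]
    exact subZeroEntry_indexShift_congr (subZeroEntry_extendZero _).symm g

theorem reducedShift_apply (g : Multiplicative A) (x : {k : A // k ≠ 0} × ι → ℝ) :
    reducedShift A ι g x = subZeroEntry A ι (indexShift A ι g (extendZero A ι x)) := rfl

theorem reducedShift_subZeroEntry (g : Multiplicative A) (y : A × ι → ℝ) :
    reducedShift A ι g (subZeroEntry A ι y) = subZeroEntry A ι (indexShift A ι g y) :=
  subZeroEntry_indexShift_congr (subZeroEntry_extendZero _) g

theorem eq_one_of_reducedShift_eq [Finite A] {p : ℕ} [Fact p.Prime] (hA : Nat.card A = p)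
    {x : {k : A // k ≠ 0} × ι → ℝ} (hx : x ≠ 0) {g : Multiplicative A}
    (h : reducedShift A ι g x = x) : g = 1 := by
  have := Fintype.ofFinite A
  by_contra hg
  set y := extendZero A ι x with hy
  have hconst : subZeroEntry A ι (indexShift A ι g y - y) = 0 := by
    rw [map_sub, ← reducedShift_apply, h, hy, subZeroEntry_extendZero, sub_self]
  have hmean : indexMean A ι (indexShift A ι g y - y) = 0 := by
    have hshift : indexShift A ι g (indexMean A ι y) = indexMean A ι y := by
      funext q
      rw [indexShift_apply, indexMean_apply, indexMean_apply]
    rw [map_sub, indexMean_indexShift, hshift, sub_self]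
  have hfix : indexShift A ι g y = y := sub_eq_zero.1 ((indexMean_eq_self hconst).symm.trans hmean)
  refine hx ?_
  rw [← subZeroEntry_extendZero x, ← hy, subZeroEntry_eq_zero_iff]
  exact fun k i => eq_apply_zero_of_periodic (x := fun k => y (k, i)) hA
    (fun h0 => hg (toAdd_eq_zero.1 h0)) (fun k => congrFun hfix (k, i)) k

end ReducedShift

section Norm

variable [Fintype A] [Fintype ι]

theorem norm_extendZero_le [DecidableEq A] (x : {k : A // k ≠ 0} × ι → ℝ) :
    ‖extendZero A ι x‖ ≤ ‖x‖ := by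
  refine (pi_norm_le_iff_of_nonneg (norm_nonneg _)).2 fun q => ?_
  rw [extendZero_apply]
  split_ifs
  · exact norm_le_pi_norm x _
  · simp

theorem norm_subZeroEntry_le [DecidableEq A] (y : A × ι → ℝ) : ‖subZeroEntry A ι y‖ ≤ 2 * ‖y‖ := by
  refine (pi_norm_le_iff_of_nonneg (by positivity)).2 fun q => ?_
  rw [subZeroEntry_apply, two_mul]
  exact norm_sub_le_of_le (norm_le_pi_norm y _) (norm_le_pi_norm y _)

theorem norm_indexShift_le (g : Multiplicative A) (y : A × ι → ℝ) :
    ‖indexShift A ι g y‖ ≤ ‖y‖ :=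
  (pi_norm_le_iff_of_nonneg (norm_nonneg _)).2 fun _ => norm_le_pi_norm y _

theorem norm_indexMean_le (y : A × ι → ℝ) : ‖indexMean A ι y‖ ≤ ‖y‖ := by
  refine (pi_norm_le_iff_of_nonneg (norm_nonneg _)).2 fun q => ?_
  rw [indexMean_apply, norm_mul, norm_inv, Real.norm_natCast, inv_mul_le_iff₀ (by positivity)]
  simpa using norm_sum_le_of_le Finset.univ fun k _ => norm_le_pi_norm y (k, q.2)

end Norm

end IndexShift

section IndexShiftZero

variable {A ι : Type*} [AddGroup A] [Fintype A] [Fintype ι] {p : ℕ} [Fact p.Prime]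
  {F : (A × ι → ℝ) → (A × ι → ℝ)}

section Cutoff

variable [DecidableEq A] {N : Set ({k : A // k ≠ 0} × ι → ℝ)}
  {s : ({k : A // k ≠ 0} × ι → ℝ) → ℝ} {r : ℝ}

/-- With `y = extendZero x`, the map `x ↦ F y` is periodic, and `x ↦ F (y - indexMean y)` is
equivariant modulo constant families. The cutoff `s` passes from the second to the first. -/
theorem exists_subZeroEntry_eq_zero_of_contDiff [Nonempty ι] (hA : Nat.card A = p) (hN : IsOpen N)
    (h0N : 0 ∈ N) (hTN : ∀ g, ∀ x ∈ N, reducedShift A ι g x ∈ N) (hr : r < 1 / 2)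
    (hNr : N ⊆ Metric.ball 0 r) (hs : ContDiff ℝ 1 s) (hs1 : ∀ x ∈ N, s x = 1)
    (hs0 : ∀ x, r ≤ ‖x‖ → s x = 0) (hF : ContDiff ℝ 1 F) (hFper : IntPeriodic F)
    (hFσ : ∀ g y, F (indexShift A ι g y) = indexShift A ι g (F y)) :
    ∃ x ∉ N, ‖x‖ ≤ 1 / 2 ∧ subZeroEntry A ι
      (F (extendZero A ι x - s x • indexMean A ι (extendZero A ι x))) = 0 := by
  have : Nontrivial A := Finite.one_lt_card_iff_nontrivial.1
    (hA ▸ (Fact.out : p.Prime).one_lt)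
  have : Nonempty {k : A // k ≠ 0} := nonempty_subtype.2 (exists_ne 0)
  have hJ := (extendZero A ι).contDiff (n := 1)
  have hM := (indexMean A ι).contDiff.comp hJ
  have hR := (subZeroEntry A ι).contDiff (n := 1)
  refine exists_zero_of_equivariant_of_intPeriodic (reducedShift A ι)
    (fun x hx g => eq_one_of_reducedShift_eq hA hx) hN h0N hTN hr hNr
    (Θ := fun x => subZeroEntry A ι (F (extendZero A ι x - indexMean A ι (extendZero A ι x))))
    (P := fun x => subZeroEntry A ι (F (extendZero A ι x)))
    (hR.comp (hF.comp (hJ.sub hM))) (fun g x => ?_) (hR.comp (hF.comp hJ)) (fun z x => ?_)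
    (hR.comp (hF.comp (hJ.sub (hs.smul hM)))) (fun x hx => ?_) (fun x hx => ?_)
  · have hshift : extendZero A ι (reducedShift A ι g x) -
        indexMean A ι (extendZero A ι (reducedShift A ι g x)) =
        indexShift A ι g (extendZero A ι x - indexMean A ι (extendZero A ι x)) := by
      rw [map_sub, ← indexMean_indexShift]
      exact sub_indexMean_congr (subZeroEntry_extendZero _)
    rw [hshift, hFσ, reducedShift_subZeroEntry]
  · exact congrArg (subZeroEntry A ι) (hFper.comp_extendZero z x)
  · rw [hs1 x hx, one_smul]
  · rw [hs0 x hx, zero_smul, sub_zero]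

theorem exists_subZeroEntry_eq_zero_of_continuous [Nonempty ι] (hA : Nat.card A = p)
    (hN : IsOpen N) (h0N : 0 ∈ N) (hTN : ∀ g, ∀ x ∈ N, reducedShift A ι g x ∈ N) (hr : r < 1 / 2)
    (hNr : N ⊆ Metric.ball 0 r) (hs : ContDiff ℝ 1 s) (hs1 : ∀ x ∈ N, s x = 1)
    (hs0 : ∀ x, r ≤ ‖x‖ → s x = 0) (hF : Continuous F) (hFper : IntPeriodic F)
    (hFσ : ∀ g y, F (indexShift A ι g y) = indexShift A ι g (F y)) :
    ∃ x ∉ N, ‖x‖ ≤ 1 / 2 ∧ subZeroEntry A ι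
      (F (extendZero A ι x - s x • indexMean A ι (extendZero A ι x))) = 0 := by
  by_contra! hne
  let Y x := extendZero A ι x - s x • indexMean A ι (extendZero A ι x)
  have hY : Continuous Y := by
    have := hs.continuous
    fun_prop
  obtain ⟨η, hη, hηF⟩ := ((isCompact_closedBall 0 (1 / 2)).diff hN).exists_forall_le' (a := 0)
    (f := fun x => ‖subZeroEntry A ι (F (Y x))‖) (Continuous.continuousOn (by fun_prop))
    fun x hx => norm_pos_iff.2 (hne x hx.2 (mem_closedBall_zero_iff.1 hx.1))
  obtain ⟨H, hH, hHper, hHσ, hHF⟩ := hFper.exists_contDiff_equivariant_norm_sub_le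
    (indexShift A ι) (indexShift A ι) norm_indexShift_le
    (fun g z => ⟨fun q => z (q.1 + g.toAdd, q.2), rfl⟩) hF hFσ (show 0 < η / 4 by positivity)
  obtain ⟨x, hxN, hx, hx0⟩ := exists_subZeroEntry_eq_zero_of_contDiff hA hN h0N hTN hr hNr hs hs1
    hs0 hH hHper hHσ
  have hle := hηF x ⟨mem_closedBall_zero_iff.2 hx, hxN⟩
  have hsub := norm_subZeroEntry_le (H (Y x) - F (Y x))
  rw [map_sub, hx0, zero_sub, norm_neg] at hsub
  linarith [hHF (Y x)]

theorem isOpen_setOf_forall_norm_reducedShift_lt (b : ℝ) :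
    IsOpen {x | ∀ g, ‖reducedShift A ι g x‖ < b} := by
  rw [ofPred_forall]
  exact isOpen_iInter_of_finite fun g =>
    isOpen_lt (reducedShift A ι g).continuous.norm continuous_const

end Cutoff

theorem exists_subZeroEntry_eq_zero_of_intPeriodic [Nonempty ι] (hA : Nat.card A = p)
    (hF : Continuous F) (hFper : IntPeriodic F)
    (hFσ : ∀ g y, F (indexShift A ι g y) = indexShift A ι g (F y)) {δ : ℝ} (hδ : 0 < δ) :
    ∃ y, subZeroEntry A ι (F y) = 0 ∧ subZeroEntry A ι y ≠ 0 ∧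
      (‖y‖ ≤ δ ∨ ‖y‖ ≤ 1 / 2 ∧ ∀ i, y (0, i) = 0) := by
  classical
  obtain ⟨b, hb, hb1, hb2⟩ : ∃ b > 0, 2 * b < 1 / 2 ∧ 4 * b ≤ δ :=
    ⟨min (1 / 8) (δ / 4), by positivity, by linarith [min_le_left (1 / 8) (δ / 4)], by
      linarith [min_le_right (1 / 8) (δ / 4)]⟩
  let s : ContDiffBump (0 : {k : A // k ≠ 0} × ι → ℝ) := ⟨b, 2 * b, hb, by linarith⟩
  have hNb : ∀ x : {k : A // k ≠ 0} × ι → ℝ, (∀ g, ‖reducedShift A ι g x‖ < b) → ‖x‖ < b :=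
    fun x hx => by simpa using hx 1
  obtain ⟨x, hxN, hx, hx0⟩ := exists_subZeroEntry_eq_zero_of_continuous (s := s) (r := 2 * b) hA
    (isOpen_setOf_forall_norm_reducedShift_lt b) (by simpa using hb)
    (fun g x hx h => by simpa [← mul_apply_eq_comp, ← map_mul] using hx (h * g)) hb1
    (fun x hx => mem_ball_zero_iff.2 ((hNb x hx).trans (by linarith))) s.contDiff
    (fun x hx => s.one_of_mem_closedBall (mem_closedBall_zero_iff.2 (hNb x hx).le))
    (fun x hx => s.zero_of_le_dist (by rwa [dist_zero_right])) hF hFper hFσ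
  refine ⟨_, hx0, ?_, ?_⟩
  · rw [map_sub, map_smul, subZeroEntry_extendZero, subZeroEntry_indexMean, smul_zero, sub_zero]
    rintro rfl
    exact hxN (by simpa using hb)
  · rcases le_or_gt (2 * b) ‖x‖ with h | h
    · have hsx : s x = 0 := s.zero_of_le_dist (by rwa [dist_zero_right])
      rw [hsx, zero_smul, sub_zero]
      exact Or.inr ⟨(norm_extendZero_le x).trans hx, extendZero_apply_zero x⟩
    · left
      have hmean : ‖s x • indexMean A ι (extendZero A ι x)‖ ≤ 1 * ‖x‖ := by
        rw [norm_smul, Real.norm_of_nonneg s.nonneg]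
        gcongr
        · exact s.le_one
        · exact (norm_indexMean_le _).trans (norm_extendZero_le x)
      linarith [norm_sub_le (extendZero A ι x) (s x • indexMean A ι (extendZero A ι x)),
        norm_extendZero_le x]

end IndexShiftZero

theorem exists_ne_apply_zero_and_comp_add_right_eq {A ι M : Type*} [AddGroup A] [Finite A]
    [Fintype ι] [Nonempty ι] [TopologicalSpace M] {p : ℕ} [Fact p.Prime] (hA : Nat.card A = p)
    {φ : (ι → ℝ) → M} (hφ : Continuous φ) (hφper : IntPeriodic φ) {U : Set (ι → ℝ)}
    (hU : U ∈ 𝓝 0) (hφU : InjOn φ U) (hφ0 : ∀ x, ‖x‖ ≤ 1 / 2 → φ x = φ 0 → x = 0)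
    {h : (A → M) → ι → ℝ} (hh : Continuous h) :
    ∃ x : A → M, (∃ k, x k ≠ x 0) ∧ ∀ k, h (fun l => x (l + k)) = h x := by
  classical
  have := Fintype.ofFinite A
  obtain ⟨δ, hδ, hδU⟩ := Metric.nhds_basis_closedBall.mem_iff.1 hU
  have hrow {y : A × ι → ℝ} {c : ℝ} (hc : 0 ≤ c) (hy : ‖y‖ ≤ c) (k : A) :
      ‖fun i => y (k, i)‖ ≤ c :=
    (pi_norm_le_iff_of_nonneg hc).2 fun i => (norm_le_pi_norm y _).trans hy
  obtain ⟨y, hy, hy0, hsmall⟩ := exists_subZeroEntry_eq_zero_of_intPeriodic hA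
    (F := fun y q => h (fun l => φ fun i => y (l + q.1, i)) q.2) (by fun_prop)
    (fun z y => funext fun q => congrArg (fun x => h x q.2) (funext fun l =>
      hφper (fun i => z (l + q.1, i)) fun i => y (l + q.1, i)))
    (fun g y => by simp only [indexShift_apply, add_assoc, funext_iff, implies_true]) hδ
  rw [subZeroEntry_eq_zero_iff] at hy
  refine ⟨fun k => φ fun i => y (k, i), ?_, fun k => funext fun i => by simpa using hy k i⟩
  by_contra! hconst
  refine hy0 (subZeroEntry_eq_zero_iff.2 fun k i => ?_)
  rcases hsmall with hyδ | ⟨hy1, hyz⟩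
  · have hmem (k : A) : (fun i => y (k, i)) ∈ U :=
      hδU (mem_closedBall_zero_iff.2 (hrow hδ.le hyδ k))
    exact congrFun (hφU (hmem k) (hmem 0) (hconst k)) i
  · have hz : (fun i => y (0, i)) = 0 := funext hyz
    have hk := hconst k
    simp only [hz] at hk
    rw [hyz]
    exact congrFun (hφ0 _ (hrow (by norm_num) hy1 k) hk) i

section TorusToSphere

variable {d : ℕ} {x y : Fin d → ℝ}

/-- The sum of `1 - cos (2 π xᵢ)`, a periodic measure of the distance of `x` to the integer
lattice. -/
noncomputable def cosDefect (x : Fin d → ℝ) : ℝ :=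
  ∑ i, (1 - Real.cos (2 * Real.pi * x i))

/-- An integer-periodic map from `ℝᵈ` to `ℝᵈ⁺¹` without zeros. The last coordinate is truncated so
as to be constant near the origin, where the map is therefore injective up to scaling. -/
noncomputable def torusVector (x : Fin d → ℝ) : EuclideanSpace ℝ (Fin (d + 1)) :=
  WithLp.toLp 2 (Fin.snoc (α := fun _ => ℝ) (fun i => Real.sin (2 * Real.pi * x i))
    (min 1 (3 / 2 - cosDefect x)))

theorem torusVector_castSucc (x : Fin d → ℝ) (i : Fin d) :
    torusVector x i.castSucc = Real.sin (2 * Real.pi * x i) := by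
  simp [torusVector]

theorem torusVector_last (x : Fin d → ℝ) :
    torusVector x (Fin.last d) = min 1 (3 / 2 - cosDefect x) := by
  simp [torusVector]

theorem continuous_cosDefect : Continuous (cosDefect (d := d)) := by
  unfold cosDefect
  fun_prop

theorem cosDefect_zero : cosDefect (0 : Fin d → ℝ) = 0 := by
  simp [cosDefect]

theorem cosDefect_eq_zero_iff : cosDefect x = 0 ↔ ∀ i, Real.cos (2 * Real.pi * x i) = 1 := by
  rw [cosDefect, Finset.sum_eq_zero_iff_of_nonneg fun i _ => sub_nonneg.2 (Real.cos_le_one _)]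
  simp only [Finset.mem_univ, true_imp_iff, sub_eq_zero, eq_comm (a := (1 : ℝ))]

theorem continuous_torusVector : Continuous (torusVector (d := d)) := by
  refine (PiLp.continuous_toLp 2 _).comp (continuous_pi fun i => ?_)
  cases i using Fin.lastCases with
  | last =>
    simp only [Fin.snoc_last]
    exact continuous_const.min (continuous_const.sub continuous_cosDefect)
  | cast i =>
    simp only [Fin.snoc_castSucc]
    fun_prop

theorem intPeriodic_torusVector : IntPeriodic (torusVector (d := d)) := by
  intro z x
  have hadd (i : Fin d) : 2 * Real.pi * (x + fun i => (z i : ℝ)) i =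
      2 * Real.pi * x i + z i * (2 * Real.pi) := by
    rw [Pi.add_apply]
    ring
  simp only [torusVector, cosDefect, hadd, Real.sin_add_int_mul_two_pi, Real.cos_add_int_mul_two_pi]

theorem cosDefect_eq_zero_of_sin_eq_zero (hs : ∀ i, Real.sin (2 * Real.pi * x i) = 0)
    (hx : cosDefect x < 2) : cosDefect x = 0 := by
  refine cosDefect_eq_zero_iff.2 fun i =>
    (Real.sin_eq_zero_iff_cos_eq.1 (hs i)).resolve_right fun h => ?_
  have hle : 1 - Real.cos (2 * Real.pi * x i) ≤ cosDefect x :=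
    Finset.single_le_sum (f := fun i => 1 - Real.cos (2 * Real.pi * x i))
      (fun i _ => sub_nonneg.2 (Real.cos_le_one _)) (Finset.mem_univ i)
  linarith

theorem torusVector_ne_zero (x : Fin d → ℝ) : torusVector x ≠ 0 := by
  intro h
  have hs (i : Fin d) : Real.sin (2 * Real.pi * x i) = 0 := by
    rw [← torusVector_castSucc, h, PiLp.zero_apply]
  have hl := torusVector_last x
  rw [h, PiLp.zero_apply] at hl
  rcases lt_or_ge (cosDefect x) 2 with hc | hc
  · norm_num [cosDefect_eq_zero_of_sin_eq_zero hs hc] at hl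
  · linarith [min_le_right 1 (3 / 2 - cosDefect x)]

/-- The radial projection of `torusVector` to the unit sphere. -/
noncomputable def torusToSphere (x : Fin d → ℝ) :
    Metric.sphere (0 : EuclideanSpace ℝ (Fin (d + 1))) 1 :=
  ⟨NormedSpace.normalize (torusVector x), mem_sphere_zero_iff_norm.2
    (NormedSpace.norm_normalize_eq_one_iff.2 (torusVector_ne_zero x))⟩

theorem continuous_torusToSphere : Continuous (torusToSphere (d := d)) :=
  Continuous.subtype_mk ((continuous_torusVector.norm.inv₀ fun x =>
    norm_ne_zero_iff.2 (torusVector_ne_zero x)).smul continuous_torusVector) _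

theorem intPeriodic_torusToSphere : IntPeriodic (torusToSphere (d := d)) := fun z x =>
  Subtype.ext (congrArg NormedSpace.normalize (intPeriodic_torusVector z x))

theorem exists_torusVector_eq_smul (h : torusToSphere x = torusToSphere y) :
    ∃ r : ℝ, 0 < r ∧ torusVector x = r • torusVector y :=
  ((sameRay_iff_inv_norm_smul_eq_of_ne (torusVector_ne_zero x) (torusVector_ne_zero y)).2
    (congrArg Subtype.val h)).exists_pos_right (torusVector_ne_zero x) (torusVector_ne_zero y)

theorem eq_zero_of_torusToSphere_eq (hx : ‖x‖ ≤ 1 / 2) (h : torusToSphere x = torusToSphere 0) :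
    x = 0 := by
  obtain ⟨r, hr, hxr⟩ := exists_torusVector_eq_smul h
  have hs (i : Fin d) : Real.sin (2 * Real.pi * x i) = 0 := by
    rw [← torusVector_castSucc, hxr, PiLp.smul_apply, torusVector_castSucc]
    simp
  have hlast : min 1 (3 / 2 - cosDefect x) = r := by
    rw [← torusVector_last, hxr, PiLp.smul_apply, torusVector_last, cosDefect_zero]
    norm_num
  have hc : cosDefect x < 2 := by linarith [min_le_right 1 (3 / 2 - cosDefect x)]
  funext i
  have hi := abs_le.1 ((norm_le_pi_norm x i).trans hx)
  have hpi := Real.pi_pos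
  have hzero := (Real.cos_eq_one_iff_of_lt_of_lt (x := 2 * Real.pi * x i) (by nlinarith)
    (by nlinarith)).1 (cosDefect_eq_zero_iff.1 (cosDefect_eq_zero_of_sin_eq_zero hs hc) i)
  simpa [hpi.ne'] using hzero

theorem exists_mem_nhds_injOn_torusToSphere (d : ℕ) :
    ∃ U ∈ 𝓝 (0 : Fin d → ℝ), InjOn torusToSphere U := by
  refine ⟨{x | cosDefect x < 1 / 2} ∩ Metric.closedBall 0 (1 / 4),
    inter_mem (continuous_cosDefect.continuousAt.eventually_lt_const (by norm_num [cosDefect_zero]))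
      (Metric.closedBall_mem_nhds _ (by norm_num)), ?_⟩
  rintro x ⟨hxc, hx⟩ y ⟨hyc, hy⟩ h
  have hlast {x : Fin d → ℝ} (hx : cosDefect x < 1 / 2) : torusVector x (Fin.last d) = 1 := by
    rw [torusVector_last, min_eq_left (by linarith)]
  have hmem {x : Fin d → ℝ} (hx : x ∈ Metric.closedBall 0 (1 / 4)) (i : Fin d) :
      2 * Real.pi * x i ∈ Icc (-(Real.pi / 2)) (Real.pi / 2) := by
    have hi := abs_le.1 ((norm_le_pi_norm x i).trans (mem_closedBall_zero_iff.1 hx))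
    have hpi := Real.pi_pos
    constructor <;> nlinarith
  obtain ⟨r, -, hr⟩ := exists_torusVector_eq_smul h
  have hr1 : r = 1 := by
    have := hlast hxc
    rwa [hr, PiLp.smul_apply, hlast hyc, smul_eq_mul, mul_one] at this
  rw [hr1, one_smul] at hr
  funext i
  have hsin : Real.sin (2 * Real.pi * x i) = Real.sin (2 * Real.pi * y i) := by
    rw [← torusVector_castSucc, hr, torusVector_castSucc]
  exact mul_left_cancel₀ (by positivity) (Real.injOn_sin (hmem hx i) (hmem hy i) hsin)

end TorusToSphere

section CyclicConfiguration

variable {p : ℕ}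

theorem exists_natCast_eq_sub_or_eq_sub [NeZero p] {a b : ZMod p} (hab : a ≠ b) :
    ∃ j : ℕ, 1 ≤ j ∧ j ≤ p / 2 ∧ (b = a + j ∨ a = b + j) := by
  refine ⟨(b - a).valMinAbs.natAbs, ?_, ZMod.natAbs_valMinAbs_le _, ?_⟩
  · rw [Nat.one_le_iff_ne_zero, Int.natAbs_ne_zero, Ne, ZMod.valMinAbs_eq_zero, sub_eq_zero]
    exact hab.symm
  · have hcast := ZMod.coe_valMinAbs (b - a)
    rcases Int.natAbs_eq (b - a).valMinAbs with h | h
    · left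
      rw [h, Int.cast_natCast] at hcast
      rw [hcast, add_sub_cancel]
    · right
      rw [h, Int.cast_neg, Int.cast_natCast, neg_eq_iff_eq_neg, neg_sub] at hcast
      rw [hcast, add_sub_cancel]

theorem injective_of_forall_apply_eq [Fact p.Prime] {α : Type*} {D : ℕ → α → α → ℝ}
    (hD : ∀ j, 1 ≤ j → j ≤ p / 2 → ∀ x y, D j x y = 0 ↔ x = y) {x : ZMod p → α}
    (hx : ∀ j : ℕ, 1 ≤ j → j ≤ p / 2 → ∀ k : ZMod p, D j (x k) (x (k + j)) = D j (x 0) (x j))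
    (hne : ∃ k, x k ≠ x 0) : Function.Injective x := by
  by_contra! hninj
  obtain ⟨a, b, hxab, hab⟩ := Function.not_injective_iff.1 hninj
  obtain ⟨j, hj1, hj, l, hl⟩ : ∃ j : ℕ, 1 ≤ j ∧ j ≤ p / 2 ∧ ∃ l : ZMod p, x l = x (l + j) := by
    obtain ⟨j, hj1, hj, rfl | rfl⟩ := exists_natCast_eq_sub_or_eq_sub hab
    · exact ⟨j, hj1, hj, a, hxab⟩
    · exact ⟨j, hj1, hj, b, hxab.symm⟩
  have hj0 : (j : ZMod p) ≠ 0 := by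
    rw [Ne, ZMod.natCast_eq_zero_iff]
    exact Nat.not_dvd_of_pos_of_lt hj1 (hj.trans_lt (Nat.div_lt_self Fin.pos' one_lt_two))
  have hper : Function.Periodic x j := fun k =>
    ((hD j hj1 hj _ _).1 (by rw [hx j hj1 hj, ← hx j hj1 hj l, (hD j hj1 hj _ _).2 hl])).symm
  obtain ⟨k, hk⟩ := hne
  exact hk (eq_apply_zero_of_periodic (Nat.card_zmod p) hj0 hper k)

theorem admissible_pair_of_even_general {d : ℕ} (hp : p.Prime) (hpd : p ≤ 2 * d + 1)
    {D : ℕ → Metric.sphere (0 : EuclideanSpace ℝ (Fin (d + 1))) 1 →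
      Metric.sphere (0 : EuclideanSpace ℝ (Fin (d + 1))) 1 → ℝ}
    (hD : ∀ j, 1 ≤ j → j ≤ p / 2 → Continuous (Function.uncurry (D j)))
    (hD0 : ∀ j, 1 ≤ j → j ≤ p / 2 → ∀ x y, D j x y = 0 ↔ x = y) :
    ∃ x : ZMod p → Metric.sphere (0 : EuclideanSpace ℝ (Fin (d + 1))) 1,
      Function.Injective x ∧ ∀ j : ℕ, 1 ≤ j → j ≤ p / 2 → ∀ k : ZMod p,
        D j (x (k * j)) (x ((k + 1) * j)) = D j (x 0) (x j) := by
  have : Fact p.Prime := ⟨hp⟩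
  have : Nonempty (Fin d) := ⟨⟨0, by have := hp.two_le; omega⟩⟩
  obtain ⟨U, hU, hinj⟩ := exists_mem_nhds_injOn_torusToSphere d
  let h (x : ZMod p → Metric.sphere (0 : EuclideanSpace ℝ (Fin (d + 1))) 1) (i : Fin d) : ℝ :=
    if (i : ℕ) + 1 ≤ p / 2 then D (i + 1) (x 0) (x ((i + 1 : ℕ) : ZMod p)) else 0
  have hh : Continuous h := continuous_pi fun i => by
    by_cases hi : (i : ℕ) + 1 ≤ p / 2
    · simp only [h, if_pos hi]
      exact (hD _ (Nat.le_add_left 1 _) hi).comp₂ (by fun_prop) (by fun_prop)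
    · simp only [h, if_neg hi, continuous_const]
  obtain ⟨x, hne, hx⟩ := exists_ne_apply_zero_and_comp_add_right_eq (Nat.card_zmod p)
    continuous_torusToSphere intPeriodic_torusToSphere hU hinj
    (fun x => eq_zero_of_torusToSphere_eq) hh
  have hxj (j : ℕ) (hj1 : 1 ≤ j) (hj : j ≤ p / 2) (k : ZMod p) :
      D j (x k) (x (k + j)) = D j (x 0) (x j) := by
    have hxk := congrFun (hx k) ⟨j - 1, by omega⟩
    simpa only [h, Nat.sub_add_cancel hj1, if_pos hj, zero_add, add_comm (j : ZMod p) k] using hxk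
  refine ⟨x, injective_of_forall_apply_eq hD0 hxj hne, fun j hj1 hj k => ?_⟩
  rw [add_mul, one_mul, hxj j hj1 hj]

end CyclicConfiguration

section Metric

variable {E : Type*} [TopologicalSpace E] {ρ : E → E → ℝ}

theorem IsMetricEquivToStd.eventually_lt (h : IsMetricEquivToStd ρ) (x : E) {ε : ℝ}
    (hε : 0 < ε) : ∀ᶠ y in 𝓝 x, ρ x y < ε := by
  obtain ⟨-, hzero, htri, hopen⟩ := h
  refine IsOpen.mem_nhds (s := {y | ρ x y < ε}) ((hopen _).2 fun y hy => ?_)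
    (((hzero x x).2 rfl).trans_lt hε)
  exact ⟨ε - ρ x y, sub_pos.2 hy, fun z hz => (htri x y z).trans_lt (lt_sub_iff_add_lt'.1 hz)⟩

theorem IsMetricEquivToStd.continuous_uncurry (h : IsMetricEquivToStd ρ) :
    Continuous (Function.uncurry ρ) := by
  refine continuous_iff_continuousAt.2 fun ⟨x, y⟩ => Metric.tendsto_nhds.2 fun ε hε => ?_
  filter_upwards [(continuous_fst.tendsto (x, y)).eventually (h.eventually_lt x (half_pos hε)),
    (continuous_snd.tendsto (x, y)).eventually (h.eventually_lt y (half_pos hε))]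
    with ⟨x', y'⟩ hx hy
  obtain ⟨hsymm, -, htri, -⟩ := h
  rw [Real.dist_eq, abs_lt, Function.uncurry_apply_pair, Function.uncurry_apply_pair]
  constructor
  · linarith [htri x x' y, htri x' y' y, hsymm y' y]
  · linarith [htri x' x y', htri x y y', hsymm x' x]

end Metric

/-- Corollary: if `p ≤ 2d + 1` and `d` is even, then the pair `(d, p)` is admissible. -/
theorem admissible_pair_of_even
    (p d : ℕ) (hp : p.Prime) (hodd : Odd p) (hd : 1 ≤ d)
    (hpd : p ≤ 2 * d + 1) (hdeven : Even d)
    (f : Metric.sphere (0 : EuclideanSpace ℝ (Fin (d + 1))) 1 → EuclideanSpace ℝ (Fin (d + 1)))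
    (hf : Continuous f) (hfinj : Function.Injective f)
    (ρ : ℕ → EuclideanSpace ℝ (Fin (d + 1)) → EuclideanSpace ℝ (Fin (d + 1)) → ℝ)
    (hρ : ∀ j, 1 ≤ j → j ≤ (p - 1) / 2 → IsMetricEquivToStd (ρ j)) :
    ∃ x : ZMod p → Metric.sphere (0 : EuclideanSpace ℝ (Fin (d + 1))) 1,
      Function.Injective x ∧
      ∀ j : ℕ, 1 ≤ j → j ≤ (p - 1) / 2 →
        ∀ k : ZMod p,
          ρ j (f (x (k * (j : ZMod p)))) (f (x ((k + 1) * (j : ZMod p)))) =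
            ρ j (f (x 0)) (f (x (j : ZMod p))) := by
  rw [show (p - 1) / 2 = p / 2 by grind] at *
  exact admissible_pair_of_even_general hp hpd (D := fun j x y => ρ j (f x) (f y))
    (fun j hj1 hj => (hρ j hj1 hj).continuous_uncurry.comp (hf.prodMap hf))
    fun j hj1 hj x y => ((hρ j hj1 hj).2.1 _ _).trans hfinj.eq_iff
end

section
/- For every continuous injective map f : S² → ℝ³ there exist five distinct points y₀, y₁, y₂, y₃, y₄ in the image of f such that, with d the Euclidean metric of ℝ³, d(y₀,y₁) = d(y₁,y₂) = d(y₂,y₃) = d(y₃,y₄) = d(y₄,y₀) and d(y₀,y₂) = d(y₂,y₄) = d(y₄,y₁) = d(y₁,y₃) = d(y₃,y₀). -/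
/-!
Let `p` be an odd prime. Subtracting from two functions of `p` points of the sphere their means over
cyclic shifts gives an equivariant map from configurations to pairs of vectors with zero sum. Where
it has no zero, it leads to an equivariant labelling of configurations by the vertices of the join
of two boundaries of simplices with vertex set `ZMod p`, a sphere of dimension `2 * p - 3`.

The unit sphere of the nonzero Fourier modes of planar configurations has the same dimension, and an
explicit equivariant cycle in it shows that the degree modulo `p` of such a labelling is nonzero. On
the other hand, map the plane to the sphere by collapsing the complement of the unit disc, deform
these configurations to their Fourier coefficients, and expand them until some coordinate leaves the
disc: the result factors through a space of smaller dimension, so that the degree is zero. Hence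
some nonconstant configuration has constant values on its orbit. For `p = 5`, with the side
`d(y₀, y₁)` and the diagonal `d(y₀, y₂)` as the two functions, it is the required pentagon.
-/

namespace DeformedSphere

/-! ### Ordered simplicial cochains -/

section Cochains

variable {R X Y Z : Type*}

/-- Ordered simplicial cochains on the full simplex with vertex set `X`: a value for every list of
vertices, repetitions allowed. The value at the empty list makes the complex augmented. -/
abbrev Cochain (R X : Type*) := List X → R

section Adjacent

/-- Some two consecutive entries of the list are related by `r`. -/
def Adjacent (r : X → X → Prop) (l : List X) : Prop :=
  ¬ l.IsChain fun x y => ¬ r x y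

theorem adjacent_cons_cons {r : X → X → Prop} {x y : X} {l : List X} :
    Adjacent r (x :: y :: l) ↔ r x y ∨ Adjacent r (y :: l) := by
  rw [Adjacent, Adjacent, List.isChain_cons_cons, not_and_or, not_not]

theorem Adjacent.map {r : X → X → Prop} {s : Y → Y → Prop} {f : X → Y} {l : List X}
    (h : Adjacent r l) (hf : ∀ x ∈ l, ∀ y ∈ l, r x y → s (f x) (f y)) :
    Adjacent s (l.map f) := by
  induction l with
  | nil => exact absurd .nil h
  | cons x l ih =>
    cases l with
    | nil => exact absurd (.singleton x) h
    | cons y l =>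
      rw [adjacent_cons_cons] at h
      rw [List.map_cons, List.map_cons, adjacent_cons_cons]
      exact h.imp (hf x (by simp) y (by simp)) fun h =>
        ih h fun z hz w hw => hf z (.tail x hz) w (.tail x hw)

/-- Cochains vanishing on degenerate simplices and on the empty one. -/
structure Normalized [Zero R] (α : Cochain R X) : Prop where
  nil : α [] = 0
  eq_zero {l : List X} (h : Adjacent (· = ·) l) : α l = 0

end Adjacent

variable [CommRing R]

/-- Simplicial chains, encoded as functionals on cochains. -/
abbrev Chain (R X : Type*) [CommRing R] := Cochain R X →ₗ[R] R

/-- The restriction of a cochain to the simplices with first vertex `x`. -/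
def link (x : X) : Cochain R X →ₗ[R] Cochain R X := LinearMap.funLeft R R (List.cons x)

@[simp] theorem link_apply (x : X) (α : Cochain R X) (l : List X) : link x α l = α (x :: l) := rfl

/-- The pullback of cochains along a map of vertices. -/
def pullback (f : X → Y) : Cochain R Y →ₗ[R] Cochain R X := LinearMap.funLeft R R (List.map f)

@[simp] theorem pullback_apply (f : X → Y) (α : Cochain R Y) (l : List X) :
    pullback f α l = α (l.map f) := rfl

theorem pullback_pullback (f : X → Y) (g : Y → Z) (α : Cochain R Z) :
    pullback f (pullback g α) = pullback (g ∘ f) α := by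
  funext l; simp only [pullback_apply, List.map_map]

theorem pullback_id (α : Cochain R X) : pullback id α = α := by
  funext l; simp only [pullback_apply, List.map_id]

theorem link_pullback (f : X → Y) (x : X) (α : Cochain R Y) :
    link x (pullback f α) = pullback f (link (f x) α) := rfl

/-- The alternating sum of the faces of a simplex. -/
def boundary : List X → Chain R X
  | [] => 0
  | x :: l => LinearMap.proj l - boundary l ∘ₗ link x

/-- The simplicial coboundary operator. -/
def coboundary : Cochain R X →ₗ[R] Cochain R X := LinearMap.pi boundary

@[simp] theorem coboundary_nil (α : Cochain R X) : coboundary α [] = 0 := rfl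

theorem coboundary_cons (α : Cochain R X) (x : X) (l : List X) :
    coboundary α (x :: l) = α l - coboundary (link x α) l := rfl

theorem link_coboundary (α : Cochain R X) (x : X) :
    link x (coboundary α) = α - coboundary (link x α) := rfl

theorem coboundary_coboundary (α : Cochain R X) : coboundary (coboundary α) = 0 := by
  funext l
  induction l generalizing α with
  | nil => rfl
  | cons x l ih => simp [coboundary_cons, link_coboundary, ih]

theorem coboundary_pullback (f : X → Y) (α : Cochain R Y) :
    coboundary (pullback f α) = pullback f (coboundary α) := by
  funext l
  induction l generalizing α with
  | nil => rfl
  | cons x l ih =>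
    rw [coboundary_cons, link_pullback, ih, pullback_apply, pullback_apply, pullback_apply,
      List.map_cons, coboundary_cons]

theorem coboundary_congr {α β : Cochain R X} {l : List X}
    (h : ∀ l', l'.Sublist l → α l' = β l') : coboundary α l = coboundary β l := by
  induction l generalizing α β with
  | nil => rfl
  | cons x l ih =>
    rw [coboundary_cons, coboundary_cons, h l (List.sublist_cons_self x l),
      ih (α := link x α) (β := link x β) fun l' hl' => h (x :: l') (hl'.cons_cons x)]

/-- The chain triangulating the prism over a simplex, with bottom `f₀` and top `f₁`. -/
def prismChain (f₀ f₁ : X → Y) : List X → Chain R Y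
  | [] => 0
  | x :: l => LinearMap.proj (f₀ x :: f₁ x :: l.map f₁) - prismChain f₀ f₁ l ∘ₗ link (f₀ x)

/-- The prism operator of a pair of maps. -/
def prism (f₀ f₁ : X → Y) : Cochain R Y →ₗ[R] Cochain R X := LinearMap.pi (prismChain f₀ f₁)

@[simp] theorem prism_nil (f₀ f₁ : X → Y) (α : Cochain R Y) : prism f₀ f₁ α [] = 0 := rfl

theorem prism_cons (f₀ f₁ : X → Y) (α : Cochain R Y) (x : X) (l : List X) :
    prism f₀ f₁ α (x :: l) =
      α (f₀ x :: f₁ x :: l.map f₁) - prism f₀ f₁ (link (f₀ x) α) l := rfl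

theorem link_prism (f₀ f₁ : X → Y) (α : Cochain R Y) (x : X) :
    link x (prism f₀ f₁ α) =
      pullback f₁ (link (f₁ x) (link (f₀ x) α)) - prism f₀ f₁ (link (f₀ x) α) := rfl

theorem coboundary_prism_add_prism_coboundary (f₀ f₁ : X → Y) (α : Cochain R Y) :
    coboundary (prism f₀ f₁ α) + prism f₀ f₁ (coboundary α) = pullback f₁ α - pullback f₀ α := by
  funext l
  induction l generalizing α with
  | nil => simp
  | cons x l ih =>
    have h := ih (link (f₀ x) α)
    simp only [Pi.add_apply, Pi.sub_apply, pullback_apply, link_apply, List.map_cons,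
      coboundary_cons, prism_cons, link_prism, link_coboundary, map_sub, coboundary_pullback]
      at h ⊢
    linear_combination h

theorem prism_pullback (f₀ f₁ : X → Y) (g : Y → Z) (α : Cochain R Z) :
    prism f₀ f₁ (pullback g α) = prism (g ∘ f₀) (g ∘ f₁) α := by
  funext l
  induction l generalizing α with
  | nil => rfl
  | cons x l ih =>
    rw [prism_cons, prism_cons, link_pullback, ih, pullback_apply, List.map_cons, List.map_cons,
      List.map_map]
    rfl

theorem pullback_prism (f₀ f₁ : Y → Z) (g : X → Y) (α : Cochain R Z) :
    pullback g (prism f₀ f₁ α) = prism (f₀ ∘ g) (f₁ ∘ g) α := by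
  funext l
  induction l generalizing α with
  | nil => rfl
  | cons x l ih =>
    rw [prism_cons, ← ih, pullback_apply, List.map_cons, prism_cons, List.map_map]
    rfl

theorem prism_congr {f₀ f₁ g₀ g₁ : X → Y} (α : Cochain R Y) {l : List X}
    (h₀ : ∀ x ∈ l, f₀ x = g₀ x) (h₁ : ∀ x ∈ l, f₁ x = g₁ x) :
    prism f₀ f₁ α l = prism g₀ g₁ α l := by
  induction l generalizing α with
  | nil => rfl
  | cons x l ih =>
    rw [List.forall_mem_cons] at h₀ h₁
    rw [prism_cons, prism_cons, ih _ h₀.2 h₁.2, h₀.1, h₁.1, List.map_congr_left h₁.2]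

/-- `PrismSimplex f₀ f₁ l w` says that `w` is one of the top-dimensional simplices in the
triangulation of the prism over the simplex `l`. -/
inductive PrismSimplex (f₀ f₁ : X → Y) : List X → List Y → Prop
  | head (x : X) (l : List X) : PrismSimplex f₀ f₁ (x :: l) (f₀ x :: f₁ x :: l.map f₁)
  | cons (x : X) {l : List X} {w : List Y} (h : PrismSimplex f₀ f₁ l w) :
      PrismSimplex f₀ f₁ (x :: l) (f₀ x :: w)

theorem prism_eq_zero {f₀ f₁ : X → Y} {α : Cochain R Y} {l : List X}
    (h : ∀ w, PrismSimplex f₀ f₁ l w → α w = 0) : prism f₀ f₁ α l = 0 := by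
  induction l generalizing α with
  | nil => rfl
  | cons x l ih =>
    rw [prism_cons, h _ (.head x l), ih (α := link (f₀ x) α) fun w hw => h _ (.cons x hw),
      sub_zero]

theorem PrismSimplex.length_eq {f₀ f₁ : X → Y} {l : List X} {w : List Y}
    (h : PrismSimplex f₀ f₁ l w) : w.length = l.length + 1 := by
  induction h with
  | head x l => simp
  | cons x _ ih => simp [ih]

theorem PrismSimplex.exists_eq_or_eq {f₀ f₁ : X → Y} {l : List X} {w : List Y}
    (h : PrismSimplex f₀ f₁ l w) : ∀ y ∈ w, ∃ x ∈ l, y = f₀ x ∨ y = f₁ x := by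
  induction h with
  | head x l => aesop
  | cons x _ ih => aesop

theorem PrismSimplex.adjacent {r : X → X → Prop} {s : Y → Y → Prop} {f₀ f₁ : X → Y}
    (h₀ : ∀ x y, r x y → s (f₀ x) (f₀ y)) (h₁ : ∀ x y, r x y → s (f₁ x) (f₁ y))
    {l : List X} {w : List Y} (h : PrismSimplex f₀ f₁ l w) (hl : Adjacent r l) :
    Adjacent s w := by
  induction h with
  | head x l =>
    exact adjacent_cons_cons.2 (.inr (hl.map (f := f₁) fun x _ y _ => h₁ x y))
  | cons x h ih =>
    cases h <;>
      exact adjacent_cons_cons.2 ((adjacent_cons_cons.1 hl).imp (h₀ _ _) ih)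

theorem PrismSimplex.adjacent_of_forall {s : Y → Y → Prop} {f₀ f₁ : X → Y} {l : List X}
    {w : List Y} (h : PrismSimplex f₀ f₁ l w) (hs : ∀ x ∈ l, s (f₀ x) (f₁ x)) : Adjacent s w := by
  induction h with
  | head x l => exact adjacent_cons_cons.2 (.inl (hs x (by simp)))
  | cons x h ih =>
    have hw := ih fun y hy => hs y (.tail x hy)
    cases h <;> exact adjacent_cons_cons.2 (.inr hw)

theorem Normalized.pullback {α : Cochain R Y} (h : Normalized α) (f : X → Y) :
    Normalized (pullback f α) :=
  ⟨h.nil, fun hl => h.eq_zero (hl.map fun _ _ _ _ => congr_arg f)⟩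

theorem Normalized.prism {α : Cochain R Y} (h : Normalized α) (f₀ f₁ : X → Y) :
    Normalized (prism f₀ f₁ α) :=
  ⟨rfl, fun hl => prism_eq_zero fun _ hw =>
    h.eq_zero (hw.adjacent (r := (· = ·)) (fun _ _ => congr_arg f₀) (fun _ _ => congr_arg f₁) hl)⟩

theorem Normalized.prism_eq_zero_of_eqOn {α : Cochain R Y} (h : Normalized α) {f₀ f₁ : X → Y}
    {l : List X} (hl : ∀ x ∈ l, f₀ x = f₁ x) : DeformedSphere.prism f₀ f₁ α l = 0 :=
  prism_eq_zero fun _ hw => h.eq_zero (hw.adjacent_of_forall hl)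

/-- Cochains changing sign when two neighbouring vertices are exchanged. -/
def Alternating (α : Cochain R X) : Prop :=
  ∀ l₁ x y l₂, α (l₁ ++ x :: y :: l₂) = -α (l₁ ++ y :: x :: l₂)

theorem Alternating.link {α : Cochain R X} (h : Alternating α) (x : X) :
    Alternating (link x α) :=
  fun l₁ => h (x :: l₁)

theorem Alternating.coboundary {α : Cochain R X} (h : Alternating α) :
    Alternating (coboundary α) := by
  intro l₁
  induction l₁ generalizing α with
  | nil =>
    intro x y l
    have hlink : DeformedSphere.link y (DeformedSphere.link x α) =
        -DeformedSphere.link x (DeformedSphere.link y α) := funext (h [] x y)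
    simp only [List.nil_append, coboundary_cons, hlink, map_neg, Pi.neg_apply, link_apply]
    ring
  | cons z l₁ ih =>
    intro x y l₂
    rw [List.cons_append, List.cons_append, coboundary_cons, coboundary_cons, h l₁,
      ih (h.link z)]
    ring

theorem Alternating.eq_or_eq_neg_of_perm {α : Cochain R X} (h : Alternating α) {l l' : List X}
    (hl : l.Perm l') : α l = α l' ∨ α l = -α l' := by
  induction hl generalizing α with
  | nil => exact .inl rfl
  | cons x _ ih => exact ih (h.link x)
  | swap x y l => exact .inr (h [] y x l)
  | trans _ _ ih₁ ih₂ =>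
    rcases ih₁ h with e₁ | e₁ <;> rcases ih₂ h with e₂ | e₂ <;> simp [e₁, e₂]

theorem Alternating.eq_zero_of_not_nodup (h2 : IsUnit (2 : R)) {α : Cochain R X}
    (h : Alternating α) {l : List X} (hl : ¬ l.Nodup) : α l = 0 := by
  obtain ⟨x, hx⟩ := List.exists_duplicate_iff_not_nodup.2 hl
  obtain ⟨t, ht⟩ := (List.duplicate_iff_sublist.1 hx).exists_perm_append
  have hzero : α (x :: x :: t) = 0 := by
    have hneg : α (x :: x :: t) = -α (x :: x :: t) := h [] x x t
    rw [← h2.mul_right_eq_zero]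
    linear_combination hneg
  simpa [hzero] using h.eq_or_eq_neg_of_perm ht

theorem Alternating.normalized (h2 : IsUnit (2 : R)) {α : Cochain R X} (h : Alternating α)
    (hnil : α [] = 0) : Normalized α :=
  ⟨hnil, fun hl => h.eq_zero_of_not_nodup h2 fun hn => hl hn.isChain⟩

/-- The prism operator of a homotopy, with the unit interval cut into `n` pieces. -/
noncomputable def gridPrism (H : ℝ → X → Y) (n : ℕ) : Cochain R Y →ₗ[R] Cochain R X :=
  ∑ i ∈ Finset.range n, prism (H ((i : ℝ) / n)) (H (((i + 1 : ℕ) : ℝ) / n))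

theorem gridPrism_apply (H : ℝ → X → Y) (n : ℕ) (α : Cochain R Y) (l : List X) :
    gridPrism H n α l =
      ∑ i ∈ Finset.range n, prism (H ((i : ℝ) / n)) (H (((i + 1 : ℕ) : ℝ) / n)) α l := by
  simp only [gridPrism, LinearMap.sum_apply, Finset.sum_apply]

theorem gridPrism_coboundary (H : ℝ → X → Y) {n : ℕ} (hn : n ≠ 0) (α : Cochain R Y) :
    gridPrism H n (coboundary α) =
      pullback (H 1) α - pullback (H 0) α - coboundary (gridPrism H n α) := by
  have hn' : (n : ℝ) ≠ 0 := Nat.cast_ne_zero.2 hn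
  have htelescope := Finset.sum_range_sub (fun i : ℕ => pullback (H ((i : ℝ) / n)) α) n
  rw [div_self hn', Nat.cast_zero, zero_div] at htelescope
  simp only [gridPrism, LinearMap.sum_apply, map_sum]
  rw [← htelescope, ← Finset.sum_sub_distrib]
  exact Finset.sum_congr rfl fun i _ =>
    eq_sub_of_add_eq' (coboundary_prism_add_prism_coboundary _ _ α)

/-- `GridPrismSimplex H n l w` says that `w` is one of the top-dimensional simplices involved in
`gridPrism H n` over the simplex `l`. -/
def GridPrismSimplex (H : ℝ → X → Y) (n : ℕ) (l : List X) (w : List Y) : Prop :=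
  ∃ i < n, PrismSimplex (H ((i : ℝ) / n)) (H (((i + 1 : ℕ) : ℝ) / n)) l w

theorem gridPrism_eq_zero {H : ℝ → X → Y} {n : ℕ} {α : Cochain R Y} {l : List X}
    (h : ∀ w, GridPrismSimplex H n l w → α w = 0) : gridPrism H n α l = 0 := by
  rw [gridPrism_apply]
  exact Finset.sum_eq_zero fun i hi => prism_eq_zero fun w hw =>
    h w ⟨i, Finset.mem_range.1 hi, hw⟩

theorem Normalized.gridPrism {α : Cochain R Y} (h : Normalized α) (H : ℝ → X → Y) (n : ℕ) :
    Normalized (gridPrism H n α) where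
  nil := by simp only [gridPrism_apply, prism_nil, Finset.sum_const_zero]
  eq_zero hl := by
    rw [gridPrism_apply]
    exact Finset.sum_eq_zero fun i _ => (h.prism _ _).eq_zero hl

/-- Chains that only involve the simplices in `S`. -/
def Supported (I : Chain R X) (S : Set (List X)) : Prop :=
  ∀ α, (∀ l ∈ S, α l = 0) → I α = 0

theorem Supported.congr {I : Chain R X} {S : Set (List X)} (h : Supported I S)
    {α β : Cochain R X} (hαβ : ∀ l ∈ S, α l = β l) : I α = I β := by
  rw [← sub_eq_zero, ← map_sub]
  exact h _ fun l hl => sub_eq_zero.2 (hαβ l hl)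

theorem Supported.mono {I : Chain R X} {S T : Set (List X)} (h : Supported I S) (hST : S ⊆ T) :
    Supported I T :=
  fun α hα => h α fun l hl => hα l (hST hl)

theorem Supported.comp_gridPrism {I : Chain R X} {S : Set (List X)} (h : Supported I S)
    {H : ℝ → X → Y} {n : ℕ} {T : Set (List Y)}
    (hT : ∀ l ∈ S, ∀ w, GridPrismSimplex H n l w → w ∈ T) : Supported (I ∘ₗ gridPrism H n) T :=
  fun _ hα => h _ fun l hl => gridPrism_eq_zero fun w hw => hα w (hT l hl w hw)

end Cochains

/-! ### Equivariant choices of residues -/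

section Residues

theorem sum_range_natCast {p : ℕ} [NeZero p] {R : Type*} [AddCommMonoid R] (f : ZMod p → R) :
    ∑ j ∈ Finset.range p, f j = ∑ j, f j :=
  Finset.sum_bij' (fun j _ => (j : ZMod p)) (fun j _ => j.val) (by simp)
    (fun j _ => Finset.mem_range.2 j.val_lt)
    (fun _ hj => ZMod.val_cast_of_lt (Finset.mem_range.1 hj)) (fun j _ => ZMod.natCast_zmod_val j)
    fun _ _ => rfl

variable {p : ℕ}

theorem isUnit_two_of_odd (hp : Odd p) : IsUnit (2 : ZMod p) :=
  (ZMod.isUnit_iff_coprime 2 p).2 (Nat.coprime_two_left.2 hp)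

theorem sum_image_add_right (M : Finset (ZMod p)) (j : ZMod p) :
    ∑ x ∈ M.image (· + j), x = ∑ x ∈ M, x + M.card * j := by
  rw [Finset.sum_image fun _ _ _ _ h => add_right_cancel h, Finset.sum_add_distrib,
    Finset.sum_const, nsmul_eq_mul]

variable [Fact p.Prime]

theorem natCast_card_ne_zero {M : Finset (ZMod p)} (h : M.Nonempty) (h' : M ≠ Finset.univ) :
    (M.card : ZMod p) ≠ 0 := by
  rw [Ne, ZMod.natCast_eq_zero_iff]
  have hlt : M.card < p := by
    simpa only [ZMod.card] using (Finset.card_lt_iff_ne_univ M).2 h'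
  exact Nat.not_dvd_of_pos_of_lt h.card_pos hlt

/-- The mean of a set of residues, meaningful when the cardinality is not a multiple of `p`. -/
def center (M : Finset (ZMod p)) : ZMod p := (∑ x ∈ M, x) / M.card

theorem center_image_add_right {M : Finset (ZMod p)} (h : M.Nonempty) (h' : M ≠ Finset.univ)
    (j : ZMod p) : center (M.image (· + j)) = center M + j := by
  rw [center, center, sum_image_add_right, Finset.card_image_of_injective _ (add_left_injective j)]
  field_simp [natCast_card_ne_zero h h']

/-- The first element of a set of residues met when walking upwards from its mean. -/
noncomputable def select (M : Finset (ZMod p)) : ZMod p :=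
  center M + (sInf {k : ℕ | center M + k ∈ M} : ℕ)

theorem select_mem {M : Finset (ZMod p)} (h : M.Nonempty) : select M ∈ M := by
  obtain ⟨x, hx⟩ := h
  refine Nat.sInf_mem (s := {k : ℕ | center M + k ∈ M}) ⟨(x - center M).val, ?_⟩
  simpa using hx

theorem select_image_add_right {M : Finset (ZMod p)} (h : M.Nonempty) (h' : M ≠ Finset.univ)
    (j : ZMod p) : select (M.image (· + j)) = select M + j := by
  have hmem (k : ℕ) : center M + j + k ∈ M.image (· + j) ↔ center M + k ∈ M := by
    rw [add_right_comm, (add_left_injective j).mem_finset_image]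
  simp only [select, center_image_add_right h h', hmem, add_right_comm]

end Residues

section LeadingBlock

variable {X Y : Type*}

/-- The index of the first nonempty set in a pair of sets. -/
def leadingBlock (M : Bool → Finset X) : Bool := decide (M true).Nonempty

theorem leadingBlock_nonempty {M : Bool → Finset X} (h : ∃ b, (M b).Nonempty) :
    (M (leadingBlock M)).Nonempty := by
  by_cases ht : (M true).Nonempty
  · simp [leadingBlock, ht]
  · simpa [leadingBlock, ht] using h

theorem leadingBlock_image [DecidableEq Y] (M : Bool → Finset X) (f : X → Y) :
    leadingBlock (fun b => (M b).image f) = leadingBlock M := by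
  simp only [leadingBlock, Finset.image_nonempty]

end LeadingBlock

/-! ### Classes on the label complex -/

/-- The vertices of the join of two simplices with `p` vertices each. -/
abbrev Label (p : ℕ) := ZMod p × Bool

section Labels

variable {p : ℕ}

/-- The cyclic symmetry of the labels. -/
def shift (j : ZMod p) (a : Label p) : Label p := (a.1 + j, a.2)

theorem shift_comp (i j : ZMod p) : shift i ∘ shift j = shift (j + i) := by
  funext a; simp only [Function.comp_apply, shift, add_assoc]

theorem shift_zero : shift (0 : ZMod p) = id := by
  funext a; simp only [shift, add_zero, id]

theorem shift_mem_map_shift {a : Label p} {l : List (Label p)} {j : ZMod p} :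
    shift j a ∈ l.map (shift j) ↔ a ∈ l :=
  List.mem_map_of_injective fun a b h => by
    simpa [shift, Prod.ext_iff] using h

/-- The labels in `l` span a simplex of the join of the boundaries of two simplices. -/
def IsSimplex (l : List (Label p)) : Prop := ∀ b, ∃ i, (i, b) ∉ l

theorem IsSimplex.mono {l l' : List (Label p)} (h : IsSimplex l) (hl : l' ⊆ l) : IsSimplex l' :=
  fun b => (h b).imp fun _ hi hi' => hi (hl hi')

theorem IsSimplex.shift {l : List (Label p)} (h : IsSimplex l) (j : ZMod p) :
    IsSimplex (l.map (shift j)) :=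
  fun b => (h b).elim fun i hi => ⟨i + j, fun hm => hi (shift_mem_map_shift.1 hm)⟩

theorem coboundary_eq_of_isSimplex {R : Type*} [CommRing R] {α β : Cochain R (Label p)}
    (h : ∀ l, IsSimplex l → α l = β l) {l : List (Label p)} (hl : IsSimplex l) :
    coboundary α l = coboundary β l :=
  coboundary_congr fun l' hl' => h l' (hl.mono hl'.subset)

variable [NeZero p]

theorem IsSimplex.length_le_of_nodup {l : List (Label p)} (h : IsSimplex l) (hl : l.Nodup) :
    l.length ≤ 2 * (p - 1) := by
  choose i hi using h
  have hsub : l.toFinset ⊆ Finset.univ \ Finset.univ.image fun b => (i b, b) := by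
    intro a ha
    simp only [Finset.mem_sdiff, Finset.mem_univ, true_and, Finset.mem_image, not_exists]
    rintro b rfl
    exact hi b (List.mem_toFinset.1 ha)
  have hcard := Finset.card_le_card hsub
  have hinj : Function.Injective fun b => (i b, b) := fun b c h => (Prod.ext_iff.1 h).2
  rw [List.toFinset_card_of_nodup hl, Finset.card_univ_sdiff, Finset.card_image_of_injective _ hinj,
    Fintype.card_prod, ZMod.card, Finset.card_univ, Fintype.card_bool] at hcard
  omega

/-- The indices of the labels in `l`, block by block. -/
def indices (l : List (Label p)) (b : Bool) : Finset (ZMod p) := {i | (i, b) ∈ l}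

theorem mem_indices {l : List (Label p)} {b : Bool} {i : ZMod p} :
    i ∈ indices l b ↔ (i, b) ∈ l := by
  simp only [indices, Finset.mem_filter, Finset.mem_univ, true_and]

theorem indices_map_shift (l : List (Label p)) (j : ZMod p) :
    indices (l.map (shift j)) = fun b => (indices l b).image (· + j) := by
  funext b
  ext i
  obtain ⟨i, rfl⟩ := add_right_surjective j i
  rw [(add_left_injective j).mem_finset_image, mem_indices, mem_indices]
  exact shift_mem_map_shift (a := (i, b))

theorem IsSimplex.indices_ne_univ {l : List (Label p)} (h : IsSimplex l) (b : Bool) :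
    indices l b ≠ Finset.univ :=
  fun e => (h b).elim fun i hi => hi (mem_indices.1 (e ▸ Finset.mem_univ i))

theorem exists_indices_nonempty {l : List (Label p)} (h : l ≠ []) :
    ∃ b, (indices l b).Nonempty :=
  (List.exists_mem_of_ne_nil l h).elim fun a ha => ⟨a.2, a.1, mem_indices.2 ha⟩

theorem sum_range_sub_translate {R : Type*} [CommRing R] (w a : ZMod p → R) :
    (∑ j ∈ Finset.range p, ∑ i ∈ Finset.range j, w (i + 1) * a (i + 1 - j)) -
        ∑ j ∈ Finset.range p, ∑ i ∈ Finset.range j, w i * a (i - j) =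
      (∑ j, w j) * a 0 - w 0 * ∑ j, a j := by
  have htelescope (j : ℕ) : (∑ i ∈ Finset.range j, w (i + 1) * a (i + 1 - j)) -
      ∑ i ∈ Finset.range j, w i * a (i - j) = w j * a 0 - w 0 * a (-j) := by
    have h := Finset.sum_range_sub (fun i : ℕ => w i * a (i - j)) j
    rw [Finset.sum_sub_distrib] at h
    simpa only [Nat.cast_add, Nat.cast_one, Nat.cast_zero, sub_self, zero_sub] using h
  rw [← Finset.sum_sub_distrib, Finset.sum_congr rfl fun j _ => htelescope j,
    sum_range_natCast fun j => w j * a 0 - w 0 * a (-j), Finset.sum_sub_distrib,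
    ← Finset.sum_mul, ← Finset.mul_sum, Fintype.sum_equiv (Equiv.neg _) (fun j => a (-j)) a
      fun _ => rfl]

end Labels

section Zigzag

variable {p : ℕ} [Fact p.Prime]

/-- A weight on the simplices of the label complex whose translates form a partition of unity. -/
def weight (l : List (Label p)) : ZMod p :=
  if center (indices l (leadingBlock (indices l))) = 0 then 1 else 0

theorem sum_weight_map_shift {l : List (Label p)} (hl : l ≠ []) (h : IsSimplex l) :
    ∑ j, weight (l.map (shift j)) = 1 := by
  have hcenter := center_image_add_right (leadingBlock_nonempty (exists_indices_nonempty hl))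
    (h.indices_ne_univ _)
  simp only [weight, indices_map_shift, leadingBlock_image, hcenter, ← neg_eq_iff_add_eq_zero,
    Finset.sum_ite_eq, Finset.mem_univ, if_true]

theorem weight_eq_of_perm {l l' : List (Label p)} (h : l.Perm l') : weight l = weight l' := by
  have hindices : indices l = indices l' := by
    funext b
    simp only [indices, h.mem_iff]
  rw [weight, weight, hindices]

/-- The product of a cochain with `weight`. On invariant cochains it is a right inverse of the sum
over all shifts. -/
def weighted (α : Cochain (ZMod p) (Label p)) : Cochain (ZMod p) (Label p) :=
  fun l => weight l * α l

theorem Alternating.weighted {α : Cochain (ZMod p) (Label p)} (h : Alternating α) :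
    Alternating (weighted α) := by
  intro l₁ x y l₂
  simp only [DeformedSphere.weighted]
  rw [h, weight_eq_of_perm ((List.Perm.swap y x l₂).append_left l₁), mul_neg]

theorem sum_weighted_map_shift {α : Cochain (ZMod p) (Label p)} {l : List (Label p)}
    (hnil : α [] = 0) (hα : ∀ j, α (l.map (shift j)) = α l) (hl : IsSimplex l) :
    ∑ j, weighted α (l.map (shift j)) = α l := by
  simp only [weighted, hα, ← Finset.sum_mul]
  rcases eq_or_ne l [] with rfl | hne
  · rw [hnil, mul_zero]
  · rw [sum_weight_map_shift hne hl, one_mul]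

/-- A primitive for the difference operator of `shift 1` of a cochain whose shifts add up to
zero. -/
def primitive (α : Cochain (ZMod p) (Label p)) : Cochain (ZMod p) (Label p) := fun l =>
  ∑ j ∈ Finset.range p, ∑ i ∈ Finset.range j,
    weight (l.map (shift i)) * α (l.map (shift (i - j)))

theorem Alternating.primitive {α : Cochain (ZMod p) (Label p)} (h : Alternating α) :
    Alternating (primitive α) := by
  intro l₁ x y l₂
  simp only [DeformedSphere.primitive, ← Finset.sum_neg_distrib, ← mul_neg, List.map_append,
    List.map_cons]
  refine Finset.sum_congr rfl fun j _ => Finset.sum_congr rfl fun i _ => ?_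
  rw [h, weight_eq_of_perm ((List.Perm.swap _ _ _).append_left _)]

theorem primitive_nil {α : Cochain (ZMod p) (Label p)} (h : α [] = 0) : primitive α [] = 0 := by
  simp only [primitive, List.map_nil, h, mul_zero, Finset.sum_const_zero]

theorem primitive_map_shift_one_sub {α : Cochain (ZMod p) (Label p)} {l : List (Label p)}
    (hnil : α [] = 0) (hα : ∑ j, α (l.map (shift j)) = 0) (hl : IsSimplex l) :
    primitive α (l.map (shift 1)) - primitive α l = α l := by
  rcases eq_or_ne l [] with rfl | hne
  · rw [List.map_nil, hnil, sub_self]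
  have h := sum_range_sub_translate (fun j => weight (l.map (shift j)))
    fun j => α (l.map (shift j))
  rw [sum_weight_map_shift hne hl, hα, mul_zero, sub_zero, one_mul, shift_zero, List.map_id] at h
  simpa only [primitive, List.map_map, shift_comp, add_comm (1 : ZMod p), sub_add_eq_add_sub]
    using h

/-- A zigzag of cochains in the double complex of the label complex and the periodic resolution of
`ZMod p`: `zigzag m` lives on lists of length `2 * m`, and `zigzag 0` is the augmentation. -/
def zigzag : ℕ → Cochain (ZMod p) (Label p)
  | 0 => Pi.single [] 1
  | m + 1 => weighted (coboundary (primitive (coboundary (zigzag m))))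

/-- The cocycles in the zigzag whose shifts add up to zero. -/
def evenClass (m : ℕ) : Cochain (ZMod p) (Label p) := coboundary (zigzag m)

/-- The shift-invariant cocycles in the zigzag. -/
def oddClass (m : ℕ) : Cochain (ZMod p) (Label p) := coboundary (primitive (evenClass m))

theorem evenClass_zero_singleton (a : Label p) : evenClass 0 [a] = 1 := by
  simp [evenClass, coboundary_cons, zigzag]

theorem coboundary_evenClass (m : ℕ) : coboundary (evenClass (p := p) m) = 0 :=
  coboundary_coboundary _

theorem alternating_zigzag (m : ℕ) : Alternating (zigzag (p := p) m) := by
  induction m with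
  | zero => intro l₁ x y l₂; simp [zigzag]
  | succ m ih => exact ih.coboundary.primitive.coboundary.weighted

theorem oddClass_map_shift_of_sum_eq_zero {m : ℕ}
    (h : ∀ l, IsSimplex l → ∑ j, evenClass (p := p) m (l.map (shift j)) = 0) {l : List (Label p)}
    (hl : IsSimplex l) (j : ZMod p) : oddClass m (l.map (shift j)) = oddClass m l := by
  have hone {l : List (Label p)} (hl : IsSimplex l) :
      oddClass m (l.map (shift 1)) = oddClass m l := by
    have e := coboundary_eq_of_isSimplex
      (α := pullback (shift 1) (primitive (evenClass m)) - primitive (evenClass m))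
      (β := evenClass m)
      (fun l hl => primitive_map_shift_one_sub (coboundary_nil _) (h l hl) hl) hl
    rw [coboundary_evenClass, map_sub, coboundary_pullback] at e
    exact sub_eq_zero.1 e
  obtain ⟨n, rfl⟩ := ZMod.natCast_zmod_surjective j
  induction n with
  | zero => rw [Nat.cast_zero, shift_zero, List.map_id]
  | succ n ih => rw [← ih, ← hone (hl.shift n), List.map_map, shift_comp, Nat.cast_succ]

theorem sum_evenClass_map_shift (m : ℕ) {l : List (Label p)} (hl : IsSimplex l) :
    ∑ j, evenClass m (l.map (shift j)) = 0 := by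
  have hsum (m : ℕ) (l : List (Label p)) : ∑ j, evenClass m (l.map (shift j)) =
      coboundary (∑ j, pullback (shift j) (zigzag m)) l := by
    simp only [map_sum, coboundary_pullback, Finset.sum_apply, pullback_apply, evenClass]
  induction m generalizing l with
  | zero =>
    have hzero : ∑ j, pullback (shift j) (zigzag (p := p) 0) = 0 := by
      funext l
      cases l <;> simp [zigzag]
    rw [hsum, hzero, map_zero, Pi.zero_apply]
  | succ m ih =>
    rw [hsum, coboundary_eq_of_isSimplex (β := oddClass m) _ hl, oddClass, coboundary_coboundary,
      Pi.zero_apply]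
    intro l hl
    rw [Finset.sum_apply]
    exact sum_weighted_map_shift (coboundary_nil _)
      (oddClass_map_shift_of_sum_eq_zero (fun _ => ih) hl) hl

theorem sum_zigzag_succ_map_shift (m : ℕ) {l : List (Label p)} (hl : IsSimplex l) :
    ∑ j, zigzag (m + 1) (l.map (shift j)) = oddClass m l :=
  sum_weighted_map_shift (coboundary_nil _)
    (oddClass_map_shift_of_sum_eq_zero (fun _ => sum_evenClass_map_shift m) hl) hl

theorem primitive_evenClass_map_shift_one_sub (m : ℕ) {l : List (Label p)} (hl : IsSimplex l) :
    primitive (evenClass m) (l.map (shift 1)) - primitive (evenClass m) l = evenClass m l :=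
  primitive_map_shift_one_sub (coboundary_nil _) (sum_evenClass_map_shift m hl) hl

variable (hp : Odd p)
include hp

theorem normalized_primitive_evenClass (m : ℕ) :
    Normalized (primitive (evenClass (p := p) m)) :=
  (alternating_zigzag m).coboundary.primitive.normalized (isUnit_two_of_odd hp)
    (primitive_nil (coboundary_nil _))

theorem normalized_zigzag_succ (m : ℕ) : Normalized (zigzag (p := p) (m + 1)) :=
  (alternating_zigzag (m + 1)).normalized (isUnit_two_of_odd hp) (mul_zero _)

theorem evenClass_eq_zero_of_length (m : ℕ) {l : List (Label p)} (hl : IsSimplex l)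
    (hlength : 2 * (p - 1) < l.length) : evenClass m l = 0 :=
  (alternating_zigzag m).coboundary.eq_zero_of_not_nodup (isUnit_two_of_odd hp) fun hn =>
    hlength.not_ge (hl.length_le_of_nodup hn)

end Zigzag

/-! ### Fine simplices and equivariant labellings -/

section Fine

variable {R V W : Type*} [CommRing R] [PseudoMetricSpace V] [PseudoMetricSpace W]

/-- Lists of points of `K` at pairwise distances less than `ε`. -/
def Fine (K : Set V) (ε : ℝ) (l : List V) : Prop :=
  (∀ x ∈ l, x ∈ K) ∧ ∀ x ∈ l, ∀ y ∈ l, dist x y < ε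

theorem Fine.mono {K K' : Set V} {ε ε' : ℝ} {l : List V} (h : Fine K ε l) (hK : K ⊆ K')
    (hε : ε ≤ ε') : Fine K' ε' l :=
  ⟨fun x hx => hK (h.1 x hx), fun x hx y hy => (h.2 x hx y hy).trans_le hε⟩

theorem Fine.map_isometry {K : Set V} {ε : ℝ} {l : List V} (h : Fine K ε l) {f : V → W}
    (hf : Isometry f) : Fine (f '' K) ε (l.map f) := by
  simpa only [Fine, List.forall_mem_map, hf.dist_eq] using
    ⟨fun x hx => Set.mem_image_of_mem f (h.1 x hx), h.2⟩

/-- The region swept out by a homotopy. -/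
def sweep {X Y : Type*} (H : ℝ → X → Y) (K : Set X) : Set Y :=
  (fun q : ℝ × X => H q.1 q.2) '' (Set.Icc 0 1 ×ˢ K)

theorem mem_sweep {X Y : Type*} {H : ℝ → X → Y} {K : Set X} {t : ℝ} (ht : t ∈ Set.Icc 0 1) {x : X}
    (hx : x ∈ K) : H t x ∈ sweep H K :=
  ⟨(t, x), ⟨ht, hx⟩, rfl⟩

theorem subset_sweep {X : Type*} {H : ℝ → X → X} (h0 : H 0 = id) (K : Set X) : K ⊆ sweep H K :=
  fun x hx => by simpa only [h0, id] using mem_sweep (H := H) (Set.left_mem_Icc.2 zero_le_one) hx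

theorem isCompact_sweep {X Y : Type*} [TopologicalSpace X] [TopologicalSpace Y] {H : ℝ → X → Y}
    (hH : Continuous fun q : ℝ × X => H q.1 q.2) {K : Set X} (hK : IsCompact K) :
    IsCompact (sweep H K) :=
  (isCompact_Icc.prod hK).image hH

theorem exists_forall_fine_sweep {H : ℝ → V → W} (hH : Continuous fun q : ℝ × V => H q.1 q.2)
    {K : Set V} (hK : IsCompact K) {ε : ℝ} (hε : 0 < ε) :
    ∃ δ > 0, ∀ (s : ℝ) (l : List V) (w : List W), Fine K δ l →
      (∀ y ∈ w, ∃ r ∈ Set.Icc (0 : ℝ) 1, dist r s < δ ∧ ∃ x ∈ l, y = H r x) →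
      Fine (sweep H K) ε w := by
  have huniform := (isCompact_Icc.prod hK).uniformContinuousOn_of_continuous
    (s := Set.Icc (0 : ℝ) 1 ×ˢ K) hH.continuousOn
  obtain ⟨δ, hδ, hdist⟩ := Metric.uniformContinuousOn_iff.1 huniform ε hε
  refine ⟨δ / 2, half_pos hδ, fun s l w hl hw => ⟨fun y hy => ?_, fun y hy y' hy' => ?_⟩⟩
  · obtain ⟨r, hr, -, x, hx, rfl⟩ := hw y hy
    exact mem_sweep hr (hl.1 x hx)
  · obtain ⟨r, hr, hrs, x, hx, rfl⟩ := hw y hy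
    obtain ⟨r', hr', hrs', x', hx', rfl⟩ := hw y' hy'
    refine hdist (r, x) ⟨hr, hl.1 x hx⟩ (r', x') ⟨hr', hl.1 x' hx'⟩ (max_lt ?_ ?_)
    · linarith [dist_triangle_right r r' s]
    · linarith [hl.2 x hx x' hx']

theorem exists_fine_gridPrismSimplex {H : ℝ → V → W}
    (hH : Continuous fun q : ℝ × V => H q.1 q.2) {K : Set V} (hK : IsCompact K) {ε : ℝ}
    (hε : 0 < ε) :
    ∃ n ≠ 0, ∃ δ > 0, ∀ l, Fine K δ l → Fine (sweep H K) ε (l.map (H 0)) ∧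
      ∀ w, GridPrismSimplex H n l w → Fine (sweep H K) ε w := by
  obtain ⟨δ, hδ, hfine⟩ := exists_forall_fine_sweep hH hK hε
  obtain ⟨n, hn⟩ := exists_nat_one_div_lt hδ
  refine ⟨n + 1, n.succ_ne_zero, δ, hδ, fun l hl => ⟨hfine 0 l _ hl ?_, ?_⟩⟩
  · simp only [List.forall_mem_map]
    exact fun x hx => ⟨0, Set.left_mem_Icc.2 zero_le_one, by simpa using hδ, x, hx, rfl⟩
  · rintro w ⟨i, hi, hw⟩
    have hpos : (0 : ℝ) < (n + 1 : ℕ) := Nat.cast_pos.2 n.succ_pos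
    have hunit {j : ℕ} (hj : j ≤ n + 1) : (j : ℝ) / (n + 1 : ℕ) ∈ Set.Icc (0 : ℝ) 1 :=
      ⟨by positivity, (div_le_one hpos).2 (Nat.cast_le.2 hj)⟩
    refine hfine ((i : ℝ) / (n + 1 : ℕ)) l w hl fun y hy => ?_
    obtain ⟨x, hx, rfl | rfl⟩ := hw.exists_eq_or_eq y hy
    · exact ⟨_, hunit hi.le, by simpa using hδ, x, hx, rfl⟩
    · refine ⟨_, hunit hi, ?_, x, hx, rfl⟩
      rw [Real.dist_eq, ← sub_div, Nat.cast_succ i, add_sub_cancel_left, Nat.cast_succ,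
        abs_of_pos (by positivity)]
      exact hn

end Fine

section Labelling

variable {p : ℕ} {X : Type*} [PseudoMetricSpace X] {T : ZMod p → X → X}

/-- Labellings that are equivariant on `K` and simplicial on the simplices of `K` of size `ε`. -/
structure IsLabelling (T : ZMod p → X → X) (lab : X → Label p) (K : Set X) (ε : ℝ) : Prop where
  map_eq_shift {a : X} (ha : a ∈ K) (j : ZMod p) : lab (T j a) = shift j (lab a)
  isSimplex {l : List X} (hl : Fine K ε l) : IsSimplex (l.map lab)

theorem IsLabelling.mono {lab : X → Label p} {K K' : Set X} {ε ε' : ℝ}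
    (h : IsLabelling T lab K ε) (hK : K' ⊆ K) (hε : ε' ≤ ε) : IsLabelling T lab K' ε' :=
  ⟨fun ha => h.map_eq_shift (hK ha), fun hl => h.isSimplex (hl.mono hK hε)⟩

theorem IsLabelling.map_map {lab : X → Label p} {K : Set X} {ε : ℝ} (h : IsLabelling T lab K ε)
    {l : List X} (hl : Fine K ε l) (j : ZMod p) :
    (l.map (T j)).map lab = (l.map lab).map (shift j) := by
  rw [List.map_map, List.map_map]
  exact List.map_congr_left fun a ha => h.map_eq_shift (hl.1 a ha) j

end Labelling

section OrbitChain

/-- The sum of the translates of a chain under a family of symmetries. -/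
def orbitChain {R G X : Type*} [CommRing R] [Fintype G] (T : G → X → X) (P : Chain R X) :
    Chain R X :=
  ∑ j, P ∘ₗ pullback (T j)

theorem orbitChain_apply {R G X : Type*} [CommRing R] [Fintype G] (T : G → X → X) (P : Chain R X)
    (α : Cochain R X) : orbitChain T P α = ∑ j, P (pullback (T j) α) := by
  simp only [orbitChain, LinearMap.sum_apply, LinearMap.comp_apply]

variable {R G X : Type*} [CommRing R] [AddGroup G] [Fintype G] {T : G → X → X}

theorem orbitChain_pullback (hT : ∀ i j, T (i + j) = T i ∘ T j) (P : Chain R X) (i : G)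
    (α : Cochain R X) : orbitChain T P (pullback (T i) α) = orbitChain T P α := by
  simp only [orbitChain_apply, pullback_pullback, ← hT]
  exact Equiv.sum_comp (Equiv.addLeft i) fun j => P (pullback (T j) α)

theorem orbitChain_coboundary (hT : ∀ i j, T (i + j) = T i ∘ T j) {P I : Chain R X} {i : G}
    (hP : ∀ α, Normalized α → P (coboundary α) = I (pullback (T i) α) - I α) {α : Cochain R X}
    (hα : Normalized α) : orbitChain T P (coboundary α) = 0 := by
  simp only [orbitChain_apply, ← coboundary_pullback, hP _ (hα.pullback _), pullback_pullback,
    ← hT, Finset.sum_sub_distrib]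
  exact sub_eq_zero.2 (Equiv.sum_comp (Equiv.addRight i) fun j => I (pullback (T j) α))

theorem orbitChain_zigzag_succ {p : ℕ} [Fact p.Prime] (hp : Odd p) {X : Type*}
    [PseudoMetricSpace X] {T : ZMod p → X → X} {lab : X → Label p} {K : Set X} {ε : ℝ}
    (hlab : IsLabelling T lab K ε) {P I : Chain (ZMod p) X} (hPK : Supported P {l | Fine K ε l})
    (hIK : Supported I {l | Fine K ε l})
    (hP : ∀ α, Normalized α → P (coboundary α) = I (pullback (T 1) α) - I α) (m : ℕ) :
    orbitChain T P (pullback lab (zigzag (m + 1))) = I (pullback lab (evenClass m)) := by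
  calc
    _ = P (pullback lab (oddClass m)) := by
      rw [orbitChain_apply, ← map_sum]
      refine hPK.congr fun l hl => ?_
      simp only [Finset.sum_apply, pullback_apply, hlab.map_map hl]
      exact sum_zigzag_succ_map_shift m (hlab.isSimplex hl)
    _ = P (coboundary (pullback lab (primitive (evenClass m)))) := by
      rw [coboundary_pullback, oddClass]
    _ = I (pullback (T 1) (pullback lab (primitive (evenClass m))) -
          pullback lab (primitive (evenClass m))) := by
      rw [hP _ ((normalized_primitive_evenClass hp m).pullback lab), map_sub]
    _ = I (pullback lab (evenClass m)) := by
      refine hIK.congr fun l hl => ?_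
      simp only [Pi.sub_apply, pullback_apply, hlab.map_map hl]
      exact primitive_evenClass_map_shift_one_sub m (hlab.isSimplex hl)

end OrbitChain

/-! ### Cycles in the coefficient space -/

/-- Fourier coefficients of a configuration of `p` points of the plane. -/
abbrev Coeff (p : ℕ) := ZMod p → ℂ

section TestSpace

variable {p : ℕ}

/-- The nonzero vectors with coordinates in `S`. -/
def punctured (S : Finset (ZMod p)) : Set (Coeff p) := {a | a ≠ 0 ∧ ∀ k ∉ S, a k = 0}

theorem mem_punctured_of_factors {S : Finset (ZMod p)} {a b : Coeff p} {c : ZMod p → ℂ}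
    (ha : a ∈ punctured S) (hc : ∀ k, c k ≠ 0) (hb : ∀ k, b k = c k * a k) : b ∈ punctured S := by
  refine ⟨fun h0 => ha.1 (funext fun k => ?_), fun k hk => by rw [hb, ha.2 k hk, mul_zero]⟩
  exact (mul_eq_zero.1 ((hb k).symm.trans (congr_fun h0 k))).resolve_left (hc k)

/-- The vectors `a` and `b` lie on a line parallel to the `j`-th axis. -/
def EqOff (j : ZMod p) (a b : Coeff p) : Prop := ∀ i ≠ j, a i = b i

/-- The straight-line contraction to `q`. -/
noncomputable def cone (q : Coeff p) (t : ℝ) (a : Coeff p) : Coeff p :=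
  fun i => (1 - t) * a i + t * q i

theorem continuous_cone (q : Coeff p) : Continuous fun r : ℝ × Coeff p => cone q r.1 r.2 := by
  unfold cone; fun_prop

theorem cone_zero (q : Coeff p) : cone q 0 = id := by
  funext a i; simp [cone]

theorem cone_one (q : Coeff p) : cone q 1 = fun _ => q := by
  funext a i; simp [cone]

theorem EqOff.cone {j : ZMod p} {a b : Coeff p} (h : EqOff j a b) (q : Coeff p) (t : ℝ) :
    EqOff j (cone q t a) (cone q t b) :=
  fun i hi => by simp only [DeformedSphere.cone, h i hi]

theorem sweep_cone_single_subset_punctured {S : Finset (ZMod p)} {k : ZMod p} (hk : k ∉ S)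
    {K : Set (Coeff p)} (h : K ⊆ punctured S) :
    sweep (cone (Pi.single k 1)) K ⊆ punctured (insert k S) := by
  rintro _ ⟨⟨t, a⟩, ⟨-, ha : a ∈ K⟩, rfl⟩
  refine ⟨fun h0 => (h ha).1 ?_, fun i hi => ?_⟩
  · have ht : (t : ℂ) = 0 := by simpa [cone, (h ha).2 k hk] using congr_fun h0 k
    rw [← h0]
    funext i
    simp [cone, ht]
  · rw [Finset.mem_insert, not_or] at hi
    simp [cone, hi.1, (h ha).2 i hi.2]

theorem single_mem_punctured (k : ZMod p) : Pi.single k 1 ∈ punctured {k} :=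
  ⟨Pi.single_ne_zero_iff.2 one_ne_zero,
    fun _ hi => Pi.single_eq_of_ne (Finset.notMem_singleton.1 hi) _⟩

variable [NeZero p]

theorem stdAddChar_ne_zero (k : ZMod p) : ZMod.stdAddChar k ≠ 0 :=
  norm_ne_zero_iff.1 (by rw [AddChar.norm_apply]; exact one_ne_zero)

/-- Cyclic shifts of configurations, in terms of Fourier coefficients. -/
noncomputable def act (j : ZMod p) (a : Coeff p) : Coeff p :=
  fun k => ZMod.stdAddChar (j * k) * a k

theorem act_zero : act (0 : ZMod p) = id := by
  funext a k; simp [act]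

theorem act_add (i j : ZMod p) : act (i + j) = act i ∘ act j := by
  funext a k; simp only [act, Function.comp_apply, add_mul, AddChar.map_add_eq_mul, mul_assoc]

theorem act_single (j k : ZMod p) :
    act j (Pi.single k 1) = Pi.single k (ZMod.stdAddChar (j * k)) := by
  funext i
  rcases eq_or_ne i k with rfl | h
  · simp [act]
  · simp [act, h]

theorem isometry_act (j : ZMod p) : Isometry (act j) :=
  Isometry.piMap (fun k (z : ℂ) => ZMod.stdAddChar (j * k) * z) fun k =>
    Isometry.of_dist_eq fun z w => by
      rw [dist_eq_norm, ← mul_sub, norm_mul, AddChar.norm_apply, one_mul, dist_eq_norm]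

/-- The union of the translates of a set under `act`. -/
def saturate (K : Set (Coeff p)) : Set (Coeff p) := ⋃ j, act j '' K

theorem isCompact_saturate {K : Set (Coeff p)} (hK : IsCompact K) : IsCompact (saturate K) :=
  isCompact_iUnion fun j => hK.image (isometry_act j).continuous

theorem image_act_subset_saturate (j : ZMod p) (K : Set (Coeff p)) : act j '' K ⊆ saturate K :=
  Set.subset_iUnion (fun j => act j '' K) j

theorem subset_saturate (K : Set (Coeff p)) : K ⊆ saturate K := by
  simpa only [act_zero, Set.image_id] using image_act_subset_saturate 0 K

theorem saturate_subset_punctured {S : Finset (ZMod p)} {K : Set (Coeff p)}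
    (h : K ⊆ punctured S) : saturate K ⊆ punctured S := by
  rintro _ ⟨_, ⟨j, rfl⟩, a, ha, rfl⟩
  exact mem_punctured_of_factors (h ha) (fun k => stdAddChar_ne_zero (j * k)) fun _ => rfl

/-- The simplices with `n` vertices of size `ε` in `K` having, for every `j ∈ S`, an edge parallel
to the `j`-th axis. -/
def axialSimplices (K : Set (Coeff p)) (ε : ℝ) (S : Finset (ZMod p)) (n : ℕ) :
    Set (List (Coeff p)) :=
  {l | l.length = n ∧ Fine K ε l ∧ ∀ j ∈ S, Adjacent (EqOff j) l}

theorem map_act_mem_axialSimplices {K : Set (Coeff p)} {ε : ℝ} {S : Finset (ZMod p)} {n : ℕ}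
    {l : List (Coeff p)} (h : l ∈ axialSimplices K ε S n) (j : ZMod p) :
    l.map (act j) ∈ axialSimplices (saturate K) ε S n :=
  ⟨(List.length_map _).trans h.1,
    (h.2.1.map_isometry (isometry_act j)).mono (image_act_subset_saturate j K) le_rfl,
    fun k hk => (h.2.2 k hk).map fun _ _ _ _ hab i hi => congr_arg _ (hab i hi)⟩

theorem axialSimplices_subset_fine {K K' : Set (Coeff p)} {ε ε' : ℝ} {S : Finset (ZMod p)} {n : ℕ}
    (hK : K ⊆ K') (hε : ε ≤ ε') : axialSimplices K ε S n ⊆ {l | Fine K' ε' l} :=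
  fun _ hl => hl.2.1.mono hK hε

theorem gridPrismSimplex_mem_axialSimplices {H : ℝ → Coeff p → Coeff p}
    (hH : ∀ t j a b, EqOff j a b → EqOff j (H t a) (H t b)) {K K' : Set (Coeff p)} {ε δ : ℝ}
    {S : Finset (ZMod p)} {n N : ℕ} {l w : List (Coeff p)} (hl : l ∈ axialSimplices K δ S n)
    (hw : GridPrismSimplex H N l w) (hfine : Fine K' ε w) :
    w ∈ axialSimplices K' ε S (n + 1) := by
  obtain ⟨i, -, hw⟩ := hw
  exact ⟨hw.length_eq.trans (congr_arg _ hl.1), hfine,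
    fun j hj => hw.adjacent (hH _ j) (hH _ j) (hl.2.2 j hj)⟩

/-- The rotation of the `k`-th coordinate by the character, along a chord. -/
noncomputable def rot (k : ZMod p) (t : ℝ) (a : Coeff p) : Coeff p :=
  Function.update a k ((1 - t + t * ZMod.stdAddChar k) * a k)

theorem one_sub_add_mul_stdAddChar_ne_zero (hp : Odd p) (k : ZMod p) (t : ℝ) :
    (1 - t + t * ZMod.stdAddChar k : ℂ) ≠ 0 := by
  intro h
  have ht : (t : ℂ) ≠ 0 := by
    rintro h0
    simp [h0] at h
  have hreal : ZMod.stdAddChar k = (((t - 1) / t : ℝ) : ℂ) := by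
    push_cast
    rw [eq_div_iff ht]
    linear_combination h
  have hpow : ZMod.stdAddChar k ^ p = (1 : ℂ) := by
    rw [← AddChar.map_nsmul_eq_pow, nsmul_eq_mul, CharP.cast_eq_zero, zero_mul,
      AddChar.map_zero_eq_one]
  rw [hreal] at hpow h
  have hone : (t - 1) / t = 1 := hp.pow_injective (by simpa using mod_cast hpow)
  norm_num [hone] at h

theorem continuous_rot (k : ZMod p) : Continuous fun q : ℝ × Coeff p => rot k q.1 q.2 :=
  continuous_snd.update k (by fun_prop)

theorem rot_zero (k : ZMod p) : rot k 0 = id := by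
  funext a; simp [rot]

theorem rot_of_eq_zero {k : ZMod p} {a : Coeff p} (h : a k = 0) (t : ℝ) : rot k t a = a := by
  rw [rot, h, mul_zero, ← h, Function.update_eq_self]

theorem eqOff_rot_rot (k : ZMod p) (s t : ℝ) (a : Coeff p) : EqOff k (rot k s a) (rot k t a) :=
  fun i hi => by simp only [rot, Function.update_of_ne hi]

theorem EqOff.rot {j : ZMod p} {a b : Coeff p} (h : EqOff j a b) (k : ZMod p) (t : ℝ) :
    EqOff j (rot k t a) (rot k t b) := fun i hi => by
  rcases eq_or_ne i k with rfl | hik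
  · simp only [DeformedSphere.rot, Function.update_self, h i hi]
  · simp only [DeformedSphere.rot, Function.update_of_ne hik, h i hi]

theorem sweep_rot_subset_punctured (hp : Odd p) (k : ZMod p) {S : Finset (ZMod p)}
    {K : Set (Coeff p)} (h : K ⊆ punctured S) : sweep (rot k) K ⊆ punctured S := by
  rintro _ ⟨⟨t, a⟩, ⟨-, ha⟩, rfl⟩
  refine mem_punctured_of_factors (h ha)
    (c := Function.update 1 k (1 - t + t * ZMod.stdAddChar k)) (fun i => ?_) fun i => ?_ <;>
  rcases eq_or_ne i k with rfl | hik
  · simpa using one_sub_add_mul_stdAddChar_ne_zero hp i t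
  · simp [hik]
  · simp [rot]
  · simp [rot, hik]

theorem act_cone (j : ZMod p) (q : Coeff p) (t : ℝ) (a : Coeff p) :
    act j (cone q t a) = cone (act j q) t (act j a) := by
  funext i; simp only [act, cone]; ring

theorem rot_one_single (k : ZMod p) : rot k 1 (Pi.single k 1) = act 1 (Pi.single k 1) := by
  rw [act_single, one_mul, rot, Pi.single, Function.update_idem]
  simp [Pi.single]

theorem rot_one_cone_single {k : ZMod p} {a : Coeff p} (h : a k = 0) (t : ℝ) :
    rot k 1 (cone (Pi.single k 1) t a) = cone (act 1 (Pi.single k 1)) t a := by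
  funext i
  rcases eq_or_ne i k with rfl | hi
  · simp [rot, cone, act, h]; ring
  · simp [rot, cone, act, hi]

theorem gridPrism_cone_pullback_act {R : Type*} [CommRing R] (q : Coeff p) (n : ℕ) (j : ZMod p)
    (α : Cochain R (Coeff p)) :
    gridPrism (cone q) n (pullback (act j) α) =
      pullback (act j) (gridPrism (cone (act j q)) n α) := by
  have hcone (t : ℝ) : act j ∘ cone q t = cone (act j q) t ∘ act j := funext (act_cone j q t)
  simp only [gridPrism, LinearMap.sum_apply, map_sum, prism_pullback, pullback_prism, hcone]

end TestSpace

section Cycles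

variable {p : ℕ} [Fact p.Prime]

/-- An invariant `(2 * m + 1)`-cycle on which the odd class evaluates to `(-1) ^ m`. -/
structure IsCycle (K : Set (Coeff p)) (ε : ℝ) (S : Finset (ZMod p)) (m : ℕ)
    (J : Chain (ZMod p) (Coeff p)) : Prop where
  supported : Supported J (axialSimplices K ε S (2 * m + 2))
  invariant (j : ZMod p) (α : Cochain (ZMod p) (Coeff p)) : J (pullback (act j) α) = J α
  closed {α : Cochain (ZMod p) (Coeff p)} (hα : Normalized α) : J (coboundary α) = 0
  eval {lab : Coeff p → Label p} (hlab : IsLabelling act lab K ε) :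
    J (pullback lab (zigzag (m + 1))) = (-1) ^ m

/-- A `2 * m`-chain whose boundary lies in the hyperplane `a k = 0`, on which the even class
evaluates to `(-1) ^ m`, and whose translate is its rotation around that hyperplane. -/
structure IsCell (K : Set (Coeff p)) (ε : ℝ) (S : Finset (ZMod p)) (k : ZMod p) (m : ℕ)
    (I : Chain (ZMod p) (Coeff p)) : Prop where
  supported : Supported I (axialSimplices K ε S (2 * m + 1))
  closed {α : Cochain (ZMod p) (Coeff p)} (hα : Normalized α)
    (h : ∀ l, (∀ a ∈ l, a k = 0) → α l = 0) : I (coboundary α) = 0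
  act_eq_rot (α : Cochain (ZMod p) (Coeff p)) :
    I (pullback (act 1) α) = I (pullback (rot k 1) α)
  eval {lab : Coeff p → Label p} (hlab : IsLabelling act lab K ε) :
    I (pullback lab (evenClass m)) = (-1) ^ m

/-- Some compact set of nonzero vectors with coordinates in `S` carries arbitrarily fine cycles. -/
def HasCycles (S : Finset (ZMod p)) (m : ℕ) : Prop :=
  ∃ K, IsCompact K ∧ K ⊆ punctured S ∧ ∀ ε > 0, ∃ J, IsCycle K ε S m J

/-- Some compact set of nonzero vectors with coordinates in `insert k S` carries arbitrarily fine
cells. -/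
def HasCells (S : Finset (ZMod p)) (k : ZMod p) (m : ℕ) : Prop :=
  ∃ K, IsCompact K ∧ K ⊆ punctured (insert k S) ∧ ∀ ε > 0, ∃ I, IsCell K ε S k m I

section Rotation

variable {K K' : Set (Coeff p)} {δ ε : ℝ} {S : Finset (ZMod p)} {k : ZMod p} {n : ℕ}
  {I : Chain (ZMod p) (Coeff p)}

theorem Supported.comp_gridPrism_rot {N : ℕ} (hI : Supported I (axialSimplices K δ S N))
    (hfine : ∀ l, Fine K δ l → ∀ w, GridPrismSimplex (rot k) n l w → Fine K' ε w) :
    Supported (I ∘ₗ gridPrism (rot k) n) (axialSimplices K' ε (insert k S) (N + 1)) := by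
  refine hI.comp_gridPrism fun l hl w hw => ?_
  obtain ⟨hlength, hwfine, hadj⟩ := gridPrismSimplex_mem_axialSimplices
    (fun t _ _ _ h => h.rot k t) hl hw (hfine l hl.2.1 w hw)
  obtain ⟨i, -, hw⟩ := hw
  refine ⟨hlength, hwfine, Finset.forall_mem_insert _ _ _ |>.2 ⟨?_, hadj⟩⟩
  exact hw.adjacent_of_forall fun a _ => eqOff_rot_rot k _ _ a

theorem IsCell.comp_gridPrism_coboundary {m : ℕ} (hI : IsCell K ε S k m I) (hn : n ≠ 0)
    {α : Cochain (ZMod p) (Coeff p)} (hα : Normalized α) :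
    (I ∘ₗ gridPrism (rot k) n) (coboundary α) = I (pullback (act 1) α) - I α := by
  have hclosed : I (coboundary (gridPrism (rot k) n α)) = 0 := by
    refine hI.closed (hα.gridPrism _ _) fun l hl => ?_
    rw [gridPrism_apply]
    refine Finset.sum_eq_zero fun i _ => hα.prism_eq_zero_of_eqOn fun a ha => ?_
    rw [rot_of_eq_zero (hl a ha), rot_of_eq_zero (hl a ha)]
  rw [LinearMap.comp_apply, gridPrism_coboundary _ hn, map_sub, map_sub, hclosed, hI.act_eq_rot,
    rot_zero, pullback_id, sub_zero]

theorem Supported.orbitChain_act {N : ℕ} (hI : Supported I (axialSimplices K ε S N)) :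
    Supported (orbitChain act I) (axialSimplices (saturate K) ε S N) := fun α hα => by
  rw [orbitChain_apply]
  exact Finset.sum_eq_zero fun j _ => hI _ fun l hl => hα _ (map_act_mem_axialSimplices hl j)

end Rotation

theorem hasCycles_of_hasCells (hp : Odd p) {S : Finset (ZMod p)} {k : ZMod p} {m : ℕ}
    (h : HasCells S k m) : HasCycles (insert k S) m := by
  obtain ⟨K, hK, hKS, hcells⟩ := h
  have hsub := subset_saturate (sweep (rot k) K)
  refine ⟨saturate (sweep (rot k) K), isCompact_saturate (isCompact_sweep (continuous_rot k) hK),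
    saturate_subset_punctured (sweep_rot_subset_punctured hp k hKS), fun ε hε => ?_⟩
  obtain ⟨n, hn, δ, hδ, hfine⟩ := exists_fine_gridPrismSimplex (continuous_rot k) hK hε
  obtain ⟨I, hI⟩ := hcells (min ε δ) (lt_min hε hδ)
  have hP : Supported (I ∘ₗ gridPrism (rot k) n) _ := hI.supported.comp_gridPrism_rot
    fun l hl => (hfine l (hl.mono subset_rfl (min_le_right ε δ))).2
  have hcoboundary (α) (hα : Normalized α) := hI.comp_gridPrism_coboundary hn hα
  refine ⟨orbitChain act (I ∘ₗ gridPrism (rot k) n), hP.orbitChain_act,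
    orbitChain_pullback act_add _, orbitChain_coboundary act_add hcoboundary, fun hlab => ?_⟩
  have hKK' := (subset_sweep (rot_zero k) K).trans hsub
  rw [orbitChain_zigzag_succ hp hlab (hP.mono (axialSimplices_subset_fine hsub le_rfl))
    (hI.supported.mono (axialSimplices_subset_fine hKK' (min_le_left ε δ))) hcoboundary]
  exact hI.eval (hlab.mono hKK' (min_le_left ε δ))

theorem hasCells_empty (k : ZMod p) : HasCells ∅ k 0 := by
  refine ⟨{Pi.single k 1}, isCompact_singleton,
    Set.singleton_subset_iff.2 (single_mem_punctured k), fun ε hε =>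
      ⟨LinearMap.proj [Pi.single k 1], fun α hα => hα _ ⟨rfl, ⟨?_, ?_⟩, ?_⟩, fun hα _ => ?_,
        fun α => ?_, fun _ => ?_⟩⟩
  · simp
  · simpa using hε
  · simp
  · simp [coboundary_cons, hα.nil]
  · simp [rot_one_single]
  · simp [evenClass_zero_singleton]

section Cone

variable {K K' : Set (Coeff p)} {δ ε : ℝ} {S : Finset (ZMod p)} {k : ZMod p} {n m : ℕ}
  {J : Chain (ZMod p) (Coeff p)}

theorem IsCycle.comp_gridPrism_cone_coboundary (hJ : IsCycle K ε S m J) (hS : S.Nonempty)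
    (hn : n ≠ 0) (q : Coeff p) {α : Cochain (ZMod p) (Coeff p)} (hα : Normalized α) :
    (J ∘ₗ gridPrism (cone q) n) (coboundary α) = -J α := by
  obtain ⟨j, hj⟩ := hS
  have hapex : J (pullback (cone q 1) α) = 0 := by
    refine hJ.supported _ fun l hl => hα.eq_zero ?_
    rw [cone_one]
    exact (hl.2.2 j hj).map fun _ _ _ _ _ => rfl
  rw [LinearMap.comp_apply, gridPrism_coboundary _ hn, map_sub, map_sub,
    hJ.closed (hα.gridPrism _ _), hapex, cone_zero, pullback_id, sub_zero, zero_sub]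

theorem IsCycle.comp_gridPrism_cone_act (hJ : IsCycle K ε S m J) (hK : ∀ a ∈ K, a k = 0)
    (α : Cochain (ZMod p) (Coeff p)) :
    (J ∘ₗ gridPrism (cone (Pi.single k 1)) n) (pullback (act 1) α) =
      (J ∘ₗ gridPrism (cone (Pi.single k 1)) n) (pullback (rot k 1) α) := by
  rw [LinearMap.comp_apply, LinearMap.comp_apply, gridPrism_cone_pullback_act, hJ.invariant]
  refine hJ.supported.congr fun l hl => ?_
  rw [gridPrism_apply, gridPrism_apply]
  refine Finset.sum_congr rfl fun i _ => ?_
  have hrot (t : ℝ) (a) (ha : a ∈ l) := (rot_one_cone_single (hK a (hl.2.1.1 a ha)) t).symm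
  rw [prism_pullback]
  exact prism_congr α (hrot _) (hrot _)

theorem IsCycle.comp_gridPrism_cone (hJ : IsCycle K δ S m J) (hS : S.Nonempty)
    (hKS : K ⊆ punctured S) (hk : k ∉ S) (hn : n ≠ 0) (hp : Odd p) (hK : K ⊆ K') (hδ : δ ≤ ε)
    (hfine : ∀ l, Fine K δ l → ∀ w, GridPrismSimplex (cone (Pi.single k 1)) n l w → Fine K' ε w) :
    IsCell K' ε S k (m + 1) (J ∘ₗ gridPrism (cone (Pi.single k 1)) n) where
  supported := hJ.supported.comp_gridPrism fun l hl w hw =>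
    gridPrismSimplex_mem_axialSimplices (fun t _ _ _ h => h.cone _ t) hl hw (hfine l hl.2.1 w hw)
  closed hα h := by
    rw [hJ.comp_gridPrism_cone_coboundary hS hn _ hα, neg_eq_zero]
    exact hJ.supported _ fun l hl => h l fun a ha => (hKS (hl.2.1.1 a ha)).2 k hk
  act_eq_rot := hJ.comp_gridPrism_cone_act fun a ha => (hKS ha).2 k hk
  eval hlab := by
    rw [evenClass, ← coboundary_pullback, hJ.comp_gridPrism_cone_coboundary hS hn _
      ((normalized_zigzag_succ hp m).pullback _), hJ.eval (hlab.mono hK hδ), pow_succ, mul_neg_one]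

end Cone

theorem hasCells_of_hasCycles (hp : Odd p) {S : Finset (ZMod p)} (hS : S.Nonempty) {k : ZMod p}
    (hk : k ∉ S) {m : ℕ} (h : HasCycles S m) : HasCells S k (m + 1) := by
  obtain ⟨K, hK, hKS, hcycles⟩ := h
  have hcone := continuous_cone (Pi.single k 1 : Coeff p)
  refine ⟨sweep (cone (Pi.single k 1)) K, isCompact_sweep hcone hK,
    sweep_cone_single_subset_punctured hk hKS, fun ε hε => ?_⟩
  obtain ⟨n, hn, δ, hδ, hfine⟩ := exists_fine_gridPrismSimplex hcone hK hε
  obtain ⟨J, hJ⟩ := hcycles (min ε δ) (lt_min hε hδ)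
  exact ⟨_, hJ.comp_gridPrism_cone hS hKS hk hn hp (subset_sweep (cone_zero _) K) (min_le_left ε δ)
    fun l hl => (hfine l (hl.mono subset_rfl (min_le_right ε δ))).2⟩

theorem hasCells (hp : Odd p) (S : Finset (ZMod p)) {k : ZMod p} (hk : k ∉ S) :
    HasCells S k S.card := by
  induction S using Finset.induction_on generalizing k with
  | empty => exact hasCells_empty k
  | insert j S hj ih =>
    rw [Finset.card_insert_of_notMem hj]
    exact hasCells_of_hasCycles hp (Finset.insert_nonempty j S) hk
      (hasCycles_of_hasCells hp (ih hj))

theorem hasCycles (hp : Odd p) {S : Finset (ZMod p)} (hS : S.Nonempty) :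
    HasCycles S (S.card - 1) := by
  obtain ⟨k, hk⟩ := hS
  have h := hasCycles_of_hasCells hp (hasCells hp (S.erase k) (Finset.notMem_erase k S))
  rwa [Finset.insert_erase hk, Finset.card_erase_of_mem hk] at h

end Cycles

/-! ### Labelling configurations -/

section Peak

variable {p : ℕ} [Fact p.Prime] {δ : ℝ} {d : Label p → ℝ}

/-- The indices in each block at which `d` is at least `δ`. -/
noncomputable def largeIndices (δ : ℝ) (d : Label p → ℝ) (b : Bool) : Finset (ZMod p) :=
  {i | δ ≤ d (i, b)}

theorem mem_largeIndices {b : Bool} {i : ZMod p} : i ∈ largeIndices δ d b ↔ δ ≤ d (i, b) := by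
  simp only [largeIndices, Finset.mem_filter, Finset.mem_univ, true_and]

theorem largeIndices_ne_univ (hδ : 0 < δ) {b : Bool} (hd : ∑ i, d (i, b) = 0) :
    largeIndices δ d b ≠ Finset.univ := fun h => by
  refine (Finset.sum_pos (fun i _ => ?_) Finset.univ_nonempty).ne' hd
  exact hδ.trans_le (mem_largeIndices.1 (h ▸ Finset.mem_univ i))

theorem largeIndices_comp_shift (δ : ℝ) (d : Label p → ℝ) (j : ZMod p) (b : Bool) :
    largeIndices δ (d ∘ shift (-j)) b = (largeIndices δ d b).image (· + j) := by
  ext i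
  simp [mem_largeIndices, shift]

theorem exists_largeIndices_nonempty (h : ∃ a, δ ≤ d a) : ∃ b, (largeIndices δ d b).Nonempty :=
  h.elim fun a ha => ⟨a.2, a.1, mem_largeIndices.2 ha⟩

/-- An equivariant choice of a label at which `d` is at least `δ`, when there is one. -/
noncomputable def peak (δ : ℝ) (d : Label p → ℝ) : Label p :=
  (select (largeIndices δ d (leadingBlock (largeIndices δ d))), leadingBlock (largeIndices δ d))

theorem le_apply_peak (h : ∃ a, δ ≤ d a) : δ ≤ d (peak δ d) :=
  mem_largeIndices.1 (select_mem (leadingBlock_nonempty (exists_largeIndices_nonempty h)))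

theorem peak_comp_shift (hδ : 0 < δ) (hd : ∀ b, ∑ i, d (i, b) = 0) (h : ∃ a, δ ≤ d a)
    (j : ZMod p) : peak δ (d ∘ shift (-j)) = shift j (peak δ d) := by
  have hblock : leadingBlock (largeIndices δ (d ∘ shift (-j))) =
      leadingBlock (largeIndices δ d) := by
    simp only [funext (largeIndices_comp_shift δ d j), leadingBlock_image]
  rw [peak, hblock, largeIndices_comp_shift, select_image_add_right
    (leadingBlock_nonempty (exists_largeIndices_nonempty h)) (largeIndices_ne_univ hδ (hd _))]
  rfl

variable {X : Type*} [PseudoMetricSpace X] {D : X → Label p → ℝ} {K : Set X}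

theorem exists_forall_exists_le (hD : Continuous D) (hsum : ∀ x b, ∑ i, D x (i, b) = 0)
    (hK : IsCompact K) (hne : ∀ x ∈ K, D x ≠ 0) : ∃ δ > 0, ∀ x ∈ K, ∃ a, δ ≤ D x a := by
  obtain ⟨δ, hδ, hmin⟩ := hK.exists_forall_le' (a := (0 : ℝ))
    (f := fun x => Finset.univ.sup' Finset.univ_nonempty (D x))
    (Continuous.continuousOn (Continuous.finset_sup'_apply _ fun a _ =>
      (continuous_apply a).comp hD)) fun x hx => by
      obtain ⟨⟨i, b⟩, hi⟩ := Function.ne_iff.1 (hne x hx)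
      obtain ⟨j, -, hj⟩ := Finset.exists_pos_of_sum_zero_of_exists_nonzero
        (fun j => D x (j, b)) (hsum x b) ⟨i, Finset.mem_univ i, hi⟩
      exact hj.trans_le (Finset.le_sup' _ (Finset.mem_univ (j, b)))
  refine ⟨δ, hδ, fun x hx => ?_⟩
  obtain ⟨a, -, ha⟩ := (Finset.le_sup'_iff _).1 (hmin x hx)
  exact ⟨a, ha⟩

theorem exists_forall_fine_isSimplex (hD : Continuous D) (hsum : ∀ x b, ∑ i, D x (i, b) = 0)
    (hK : IsCompact K) (hδ : 0 < δ) (h : ∀ x ∈ K, ∃ a, δ ≤ D x a) :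
    ∃ ε > 0, ∀ l, Fine K ε l → IsSimplex (l.map (peak δ ∘ D)) := by
  obtain ⟨ε, hε, hdist⟩ := Metric.uniformContinuousOn_iff.1
    (hK.uniformContinuousOn_of_continuous hD.continuousOn) δ hδ
  refine ⟨ε, hε, fun l hl b => ?_⟩
  by_contra! hall
  obtain ⟨x, hx, -⟩ := List.mem_map.1 (hall 0)
  refine (Finset.sum_pos (fun i _ => ?_) Finset.univ_nonempty).ne' (hsum x b)
  obtain ⟨y, hy, hpeak⟩ := List.mem_map.1 (hall i)
  have hle : δ ≤ D y (i, b) := hpeak ▸ le_apply_peak (h y (hl.1 y hy))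
  have hlt := (dist_le_pi_dist _ _ (i, b)).trans_lt
    (hdist x (hl.1 x hx) y (hl.1 y hy) (hl.2 x hx y hy))
  rw [Real.dist_eq, abs_lt] at hlt
  linarith

theorem exists_isLabelling (hD : Continuous D) (hsum : ∀ x b, ∑ i, D x (i, b) = 0)
    {T : ZMod p → X → X} (hT : ∀ j x, D (T j x) = D x ∘ shift (-j)) (hK : IsCompact K)
    (hne : ∀ x ∈ K, D x ≠ 0) : ∃ lab : X → Label p, ∃ ε > 0, IsLabelling T lab K ε := by
  obtain ⟨δ, hδ, hle⟩ := exists_forall_exists_le hD hsum hK hne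
  obtain ⟨ε, hε, hsimplex⟩ := exists_forall_fine_isSimplex hD hsum hK hδ hle
  refine ⟨peak δ ∘ D, ε, hε, fun {x} hx j => ?_, fun hl => hsimplex _ hl⟩
  rw [Function.comp_apply, hT, peak_comp_shift hδ (hsum x) (hle x hx), Function.comp_apply]

end Peak

section Deviation

variable {p : ℕ} {E : Type*}

/-- Cyclic shifts of configurations of `p` points. -/
def turn (j : ZMod p) (x : ZMod p → E) : ZMod p → E := fun i => x (i - j)

theorem turn_turn (i j : ZMod p) (x : ZMod p → E) : turn i (turn j x) = turn (i + j) x := by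
  funext k; simp only [turn, sub_sub]

theorem continuous_turn [TopologicalSpace E] (j : ZMod p) : Continuous (turn (E := E) j) := by
  unfold turn; fun_prop

variable [NeZero p]

/-- The differences between the values of `φ b` at the translates of a configuration and their
mean. -/
noncomputable def deviation (φ : Bool → (ZMod p → E) → ℝ) (x : ZMod p → E) (a : Label p) : ℝ :=
  φ a.2 (turn (-a.1) x) - (∑ j, φ a.2 (turn j x)) / p

theorem continuous_deviation [TopologicalSpace E] {φ : Bool → (ZMod p → E) → ℝ}
    (hφ : ∀ b, Continuous (φ b)) : Continuous (deviation φ) := by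
  have hturn (b : Bool) (j : ZMod p) : Continuous fun x : ZMod p → E => φ b (turn j x) :=
    (hφ b).comp (continuous_turn j)
  exact continuous_pi fun a => (hturn a.2 (-a.1)).sub <|
    (continuous_finsetSum _ fun j _ => hturn a.2 j).div_const _

theorem sum_deviation (φ : Bool → (ZMod p → E) → ℝ) (x : ZMod p → E) (b : Bool) :
    ∑ i, deviation φ x (i, b) = 0 := by
  have hp : (p : ℝ) ≠ 0 := NeZero.ne _
  simp only [deviation, Finset.sum_sub_distrib, Finset.sum_const, Finset.card_univ, ZMod.card,
    nsmul_eq_mul, mul_div_cancel₀ _ hp]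
  exact sub_eq_zero.2 (Equiv.sum_comp (Equiv.neg (ZMod p)) fun j => φ b (turn j x))

theorem deviation_turn (φ : Bool → (ZMod p → E) → ℝ) (j : ZMod p) (x : ZMod p → E) :
    deviation φ (turn j x) = deviation φ x ∘ shift (-j) := by
  funext ⟨i, b⟩
  simp only [deviation, turn_turn, Function.comp_apply, shift, neg_add, neg_neg]
  congr 2
  exact Equiv.sum_comp (Equiv.addRight j) fun k => φ b (turn k x)

theorem apply_turn_eq_of_deviation_eq_zero {φ : Bool → (ZMod p → E) → ℝ} {x : ZMod p → E}
    (h : deviation φ x = 0) (b : Bool) (j : ZMod p) : φ b (turn j x) = φ b x := by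
  have hmean (i : ZMod p) := sub_eq_zero.1 (congr_fun h (i, b))
  have hturn : turn (-0) x = x := by funext i; simp [turn]
  simpa only [neg_neg, hturn] using (hmean (-j)).trans (hmean 0).symm

end Deviation

/-! ### Expanding a configuration past the disc -/

section Blend

variable {p : ℕ} [NeZero p]

/-- Interpolation between the discrete Fourier transform and a multiple of the identity. The fourth
power of `ZMod.dft` is `p ^ 2`, so that no real multiple of `1 + I` is an eigenvalue of it. -/
noncomputable def blend (σ : ℝ) (a : Coeff p) : Coeff p :=
  (1 - σ : ℂ) • ZMod.dft a + (σ * (1 + Complex.I)) • a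

theorem blend_zero (a : Coeff p) : blend 0 a = ZMod.dft a := by
  simp [blend]

theorem blend_one (a : Coeff p) : blend 1 a = (1 + Complex.I) • a := by
  simp [blend]

theorem continuous_blend : Continuous fun q : ℝ × Coeff p => blend q.1 q.2 := by
  refine continuous_pi fun i => ?_
  simp only [blend, Pi.add_apply, Pi.smul_apply, ZMod.dft_apply]
  fun_prop

theorem eq_zero_of_blend_eq_zero {σ : ℝ} {a : Coeff p} (h : blend σ a = 0) : a = 0 := by
  have hdft : (1 - σ : ℂ) • ZMod.dft a = -(σ * (1 + Complex.I)) • a := by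
    rw [neg_smul]
    exact eq_neg_of_add_eq_zero_left h
  have hdft_dft (j : ZMod p) :
      (1 - σ : ℂ) ^ 2 * p * a (-j) = (σ * (1 + Complex.I)) ^ 2 * a j := by
    have htwice := congr_fun (congr_arg (fun b => (1 - σ : ℂ) • ZMod.dft b) hdft) j
    rw [map_smul, map_smul, ZMod.dft_dft, smul_comm _ (-_), hdft] at htwice
    simp only [Pi.smul_apply, smul_eq_mul] at htwice
    linear_combination htwice
  have hI : (1 + Complex.I) ^ 4 = -4 := by
    linear_combination (Complex.I ^ 2 + 4 * Complex.I + 5) * Complex.I_sq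
  funext j
  have hfourth : ((p ^ 2 * (1 - σ) ^ 4 + 4 * σ ^ 4 : ℝ) : ℂ) * a j = 0 := by
    have hneg := hdft_dft (-j)
    rw [neg_neg] at hneg
    push_cast
    linear_combination (1 - σ : ℂ) ^ 2 * p * hneg + (σ * (1 + Complex.I)) ^ 2 * hdft_dft j +
      σ ^ 4 * a j * hI
  refine (mul_eq_zero.1 hfourth).resolve_left (Complex.ofReal_ne_zero.2 ?_)
  have hp : (0 : ℝ) < p := Nat.cast_pos.2 (NeZero.pos p)
  rcases eq_or_ne σ 0 with rfl | hσ
  · simpa using hp.ne'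
  · positivity

theorem eq_zero_of_blend_const {σ : ℝ} {a : Coeff p} (ha : a 0 = 0)
    (h : ∀ i j, blend σ a i = blend σ a j) : a = 0 := by
  have hzero : blend σ a 0 = (1 - σ) * ZMod.dft a 0 := by simp [blend, ha]
  have hsum : ∑ i, blend σ a i = σ * (1 + Complex.I) * ZMod.dft a 0 := by
    simp only [blend, Pi.add_apply, Pi.smul_apply, smul_eq_mul, Finset.sum_add_distrib,
      ← Finset.mul_sum, ← ZMod.dft_apply_zero, ZMod.dft_dft, neg_zero, ha]
    ring
  rw [Finset.sum_congr rfl fun i _ => h i 0, Finset.sum_const, Finset.card_univ, ZMod.card,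
    nsmul_eq_mul, hzero] at hsum
  have hfactor : (p * (1 - σ) - σ * (1 + Complex.I)) * ZMod.dft a 0 = 0 := by
    linear_combination hsum
  have hne : (p * (1 - σ) - σ * (1 + Complex.I) : ℂ) ≠ 0 := fun h0 => by
    have him : σ = 0 := by simpa using congr_arg Complex.im h0
    simp [him, NeZero.ne] at h0
  refine eq_zero_of_blend_eq_zero (σ := σ) (funext fun i => ?_)
  rw [h i 0, hzero, (mul_eq_zero.1 hfactor).resolve_left hne, mul_zero, Pi.zero_apply]

end Blend

section Deform

variable {p : ℕ} [NeZero p] {r R t : ℝ} {a : Coeff p} {K : Set (Coeff p)}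

/-- Deform a small planar configuration, given by its Fourier coefficients, to these coefficients
and then expand it. -/
noncomputable def deform (r R t : ℝ) (a : Coeff p) : Coeff p :=
  (r + max 0 (2 * t - 1) * R) • blend (min (2 * t) 1) a

theorem deform_of_le_half (ht : t ≤ 1 / 2) : deform r R t a = r • blend (2 * t) a := by
  rw [deform, max_eq_left (by linarith), min_eq_left (by linarith), zero_mul, add_zero]

theorem deform_of_half_le (ht : 1 / 2 ≤ t) :
    deform r R t a = (r + (2 * t - 1) * R) • (1 + Complex.I) • a := by
  rw [deform, max_eq_right (by linarith), min_eq_right (by linarith), blend_one]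

theorem continuous_deform (r R : ℝ) :
    Continuous fun q : ℝ × Coeff p => deform r R q.1 q.2 := by
  have hblend : Continuous fun q : ℝ × Coeff p => blend (min (2 * q.1) 1) q.2 :=
    continuous_blend.comp
      (f := fun q : ℝ × Coeff p => (min (2 * q.1) 1, q.2)) (by fun_prop)
  unfold deform
  fun_prop

theorem deform_zero_act (r R : ℝ) (j : ZMod p) (a : Coeff p) :
    deform r R 0 (act j a) = turn j (deform r R 0 a) := by
  have hdft : ZMod.dft (act j a) = turn j (ZMod.dft a) := by
    funext k
    simp only [ZMod.dft_apply, turn, act, smul_eq_mul, ← mul_assoc, ← AddChar.map_add_eq_mul]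
    refine Finset.sum_congr rfl fun i _ => ?_
    congr 2
    ring
  rw [deform_of_le_half (by norm_num), deform_of_le_half (by norm_num), mul_zero, blend_zero,
    blend_zero, hdft]
  rfl

theorem exists_forall_norm_deform_lt (hK : IsCompact K) :
    ∃ r > 0, ∀ R, ∀ t ∈ Set.Icc (0 : ℝ) 1, t ≤ 1 / 2 → ∀ a ∈ K, ∀ i,
      ‖deform r R t a i‖ < 1 := by
  obtain ⟨B, hB, hle⟩ := (isCompact_sweep continuous_blend hK).isBounded.exists_pos_norm_le
  refine ⟨(2 * B)⁻¹, by positivity, fun R t ht ht' a ha i => ?_⟩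
  have hblend : ‖blend (2 * t) a‖ ≤ B :=
    hle _ (mem_sweep ⟨by linarith [ht.1], by linarith⟩ ha)
  calc ‖deform (2 * B)⁻¹ R t a i‖ ≤ ‖deform (2 * B)⁻¹ R t a‖ := norm_le_pi_norm _ i
    _ = (2 * B)⁻¹ * ‖blend (2 * t) a‖ := by
      rw [deform_of_le_half ht', norm_smul, Real.norm_of_nonneg (by positivity)]
    _ ≤ (2 * B)⁻¹ * B := by gcongr
    _ < 1 := by rw [inv_mul_lt_one₀ (by positivity)]; linarith

theorem one_le_norm_deform_one {ρ : ℝ} (hr : 0 < r) (hρ : 0 < ρ) {i : ZMod p}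
    (h : ρ ≤ ‖a i‖) : 1 ≤ ‖deform r ρ⁻¹ 1 a i‖ := by
  have hI : 1 ≤ ‖1 + Complex.I‖ := by simpa using Complex.abs_re_le_norm (1 + Complex.I)
  rw [deform_of_half_le (by norm_num), Pi.smul_apply, Pi.smul_apply, norm_smul, norm_smul,
    Real.norm_of_nonneg (by positivity)]
  calc (1 : ℝ) = ρ⁻¹ * (1 * ρ) := by field_simp
    _ ≤ (r + (2 * 1 - 1) * ρ⁻¹) * (‖1 + Complex.I‖ * ‖a i‖) := by gcongr; linarith

theorem exists_forall_exists_le_norm (hK : IsCompact K) (h : ∀ a ∈ K, a ≠ 0) :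
    ∃ ρ > 0, ∀ a ∈ K, ∃ i, ρ ≤ ‖a i‖ := by
  obtain ⟨ρ, hρ, hmin⟩ := hK.exists_forall_le' continuous_norm.continuousOn
    fun a ha => norm_pos_iff.2 (h a ha)
  refine ⟨ρ, hρ, fun a ha => ?_⟩
  by_contra! hlt
  exact (hmin a ha).not_gt ((pi_norm_lt_iff hρ).2 hlt)

end Deform

section Collapse

/-- The quotient maps that collapse the complement of the open unit disc to a point. -/
structure IsDiscCollapse {E : Type*} [TopologicalSpace E] (Q : ℂ → E) : Prop where
  continuous : Continuous Q
  eq_iff (z w : ℂ) : Q z = Q w ↔ z = w ∨ 1 ≤ ‖z‖ ∧ 1 ≤ ‖w‖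

variable {p : ℕ} [NeZero p] {E : Type*} [TopologicalSpace E] {Q : ℂ → E}

theorem IsDiscCollapse.eq_of_norm_lt (hQ : IsDiscCollapse Q) {z w : ℂ} (hw : ‖w‖ < 1)
    (h : Q z = Q w) : z = w :=
  ((hQ.eq_iff z w).1 h).resolve_right fun hle => hw.not_ge hle.2

theorem IsDiscCollapse.eq_zero_of_deform_const (hQ : IsDiscCollapse Q) {r R t : ℝ} (hr : 0 < r)
    (hR : 0 ≤ R) {a : Coeff p} (ha : a 0 = 0) (hlt : t ≤ 1 / 2 → ∀ i, ‖deform r R t a i‖ < 1)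
    (h : ∀ i j, Q (deform r R t a i) = Q (deform r R t a j)) : a = 0 := by
  rcases le_total t (1 / 2) with ht | ht
  · refine eq_zero_of_blend_const (σ := 2 * t) ha fun i j => ?_
    have hdeform := hQ.eq_of_norm_lt (hlt ht j) (h i j)
    rw [deform_of_le_half ht] at hdeform
    exact smul_right_injective ℂ hr.ne' hdeform
  · have hscale : r + (2 * t - 1) * R ≠ 0 :=
      (add_pos_of_pos_of_nonneg hr (mul_nonneg (by linarith) hR)).ne'
    have hI : 1 + Complex.I ≠ 0 := fun h => by simpa using congr_arg Complex.re h
    have hzero : deform r R t a 0 = 0 := by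
      rw [deform_of_half_le ht, Pi.smul_apply, Pi.smul_apply, ha, smul_zero, smul_zero]
    funext i
    have hdeform := hQ.eq_of_norm_lt (by rw [hzero, norm_zero]; exact one_pos) (h i 0)
    rw [hzero, deform_of_half_le ht] at hdeform
    exact (smul_eq_zero_iff_right hI).1 ((smul_eq_zero_iff_right hscale).1 hdeform)

theorem IsDiscCollapse.adjacent_eq_deform (hQ : IsDiscCollapse Q) {K : Set (Coeff p)}
    (hKS : K ⊆ punctured (Finset.univ.erase 0)) {r ρ : ℝ} (hr : 0 < r) (hρ : 0 < ρ)
    (hle : ∀ a ∈ K, ∃ i, ρ ≤ ‖a i‖) {n : ℕ} (hn : n ≠ 0) {l : List (Coeff p)}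
    (hl : l ∈ axialSimplices K (ρ / 2) (Finset.univ.erase 0) n) :
    Adjacent Eq (l.map fun a => Q ∘ deform r (ρ / 2)⁻¹ 1 a) := by
  obtain ⟨hlength, hfine, haxial⟩ := hl
  obtain ⟨a, ha⟩ := List.exists_mem_of_length_pos (hlength ▸ Nat.pos_of_ne_zero hn)
  obtain ⟨j, hj⟩ := hle a (hfine.1 a ha)
  have hj0 : j ≠ 0 := by
    rintro rfl
    rw [(hKS (hfine.1 a ha)).2 0 (Finset.notMem_erase _ _), norm_zero] at hj
    exact hj.not_gt hρ
  have hlarge (b : Coeff p) (hb : b ∈ l) : 1 ≤ ‖deform r (ρ / 2)⁻¹ 1 b j‖ := by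
    refine one_le_norm_deform_one hr (half_pos hρ) ?_
    have hdist := (dist_le_pi_dist a b j).trans_lt (hfine.2 a ha b hb)
    rw [dist_eq_norm] at hdist
    linarith [norm_sub_norm_le (a j) (b j)]
  refine (haxial j (Finset.mem_erase.2 ⟨hj0, Finset.mem_univ j⟩)).map fun b hb c hc hbc =>
    funext fun i => ?_
  rcases eq_or_ne i j with rfl | hi
  · exact (hQ.eq_iff _ _).2 (.inr ⟨hlarge b hb, hlarge c hc⟩)
  · simp only [Function.comp_apply, deform_of_half_le (show (1 / 2 : ℝ) ≤ 1 by norm_num),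
      Pi.smul_apply, hbc i hi]

end Collapse

/-! ### Orbits with equal values -/

section Degree

variable {p : ℕ} [Fact p.Prime] {X : Type*} {K : Set (Coeff p)} {S : Finset (ZMod p)} {η : ℝ}

theorem IsCycle.not_forall_adjacent_eq (hp : Odd p) {J : Chain (ZMod p) (Coeff p)}
    (hJ : IsCycle K η S (p - 2) J) {H : ℝ → Coeff p → X} {n : ℕ} (hn : n ≠ 0)
    {lab : X → Label p} (hlab : IsLabelling act (lab ∘ H 0) K η)
    (hsimplex : ∀ l, Fine K η l → ∀ w, GridPrismSimplex H n l w → IsSimplex (w.map lab)) :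
    ¬ ∀ l ∈ axialSimplices K η S (2 * (p - 2) + 2), Adjacent Eq (l.map (H 1)) := by
  intro hcollapse
  have hp2 := (Fact.out : p.Prime).two_le
  set β : Cochain (ZMod p) X := pullback lab (zigzag (p - 2 + 1)) with hβ
  have hβn : Normalized β := (normalized_zigzag_succ hp _).pullback _
  have hend : J (pullback (H 1) β) = 0 :=
    hJ.supported _ fun l hl => hβn.eq_zero (hcollapse l hl)
  have hstart : J (pullback (H 0) β) = (-1) ^ (p - 2) := by
    rw [hβ, pullback_pullback]
    exact hJ.eval hlab
  have htop : J (gridPrism H n (coboundary β)) = 0 := by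
    refine hJ.supported _ fun l hl => gridPrism_eq_zero fun w hw => ?_
    have hlength : w.length = 2 * (p - 2) + 3 := by
      obtain ⟨i, -, hw⟩ := hw
      rw [hw.length_eq, hl.1]
    rw [hβ, coboundary_pullback]
    exact evenClass_eq_zero_of_length hp _ (hsimplex l hl.2.1 w hw)
      (by rw [List.length_map]; omega)
  rw [gridPrism_coboundary H hn, map_sub, map_sub, hJ.closed (hβn.gridPrism H n), hend,
    hstart, zero_sub, sub_zero, neg_eq_zero] at htop
  exact pow_ne_zero _ (neg_ne_zero.2 one_ne_zero) htop

theorem exists_mem_sweep_eq_zero [PseudoMetricSpace X] (hp : Odd p) (hK : IsCompact K)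
    (hcycles : ∀ ε > 0, ∃ J, IsCycle K ε S (p - 2) J) {H : ℝ → Coeff p → X}
    (hH : Continuous fun q : ℝ × Coeff p => H q.1 q.2) {T : ZMod p → X → X}
    (hHT : ∀ j a, H 0 (act j a) = T j (H 0 a)) {D : X → Label p → ℝ} (hD : Continuous D)
    (hsum : ∀ x b, ∑ i, D x (i, b) = 0) (hT : ∀ j x, D (T j x) = D x ∘ shift (-j)) (hη : 0 < η)
    (hcollapse : ∀ l ∈ axialSimplices K η S (2 * (p - 2) + 2), Adjacent Eq (l.map (H 1))) :
    ∃ x ∈ sweep H K, D x = 0 := by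
  by_contra! hne
  obtain ⟨lab, ε, hε, hlab⟩ := exists_isLabelling hD hsum hT (isCompact_sweep hH hK) hne
  obtain ⟨n, hn, δ, hδ, hfine⟩ := exists_fine_gridPrismSimplex hH hK hε
  obtain ⟨J, hJ⟩ := hcycles (min δ η) (lt_min hδ hη)
  have hmono {l : List (Coeff p)} (hl : Fine K (min δ η) l) : Fine K δ l :=
    hl.mono subset_rfl (min_le_left δ η)
  refine hJ.not_forall_adjacent_eq hp hn (lab := lab) ⟨fun {a} ha j => ?_, fun {l} hl => ?_⟩
    (fun l hl w hw => hlab.isSimplex ((hfine l (hmono hl)).2 w hw)) fun l hl =>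
      hcollapse l ⟨hl.1, hl.2.1.mono subset_rfl (min_le_right δ η), hl.2.2⟩
  · rw [Function.comp_apply, hHT]
    exact hlab.map_eq_shift (mem_sweep (Set.left_mem_Icc.2 zero_le_one) ha) j
  · rw [← List.map_map]
    exact hlab.isSimplex (hfine l (hmono hl)).1

theorem IsDiscCollapse.exists_forall_turn_eq {E : Type*} [PseudoMetricSpace E] {Q : ℂ → E}
    (hQ : IsDiscCollapse Q) (hp : Odd p) {φ : Bool → (ZMod p → E) → ℝ}
    (hφ : ∀ b, Continuous (φ b)) :
    ∃ x : ZMod p → E, (∃ i j, x i ≠ x j) ∧ ∀ b j, φ b (turn j x) = φ b x := by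
  have hcard : (Finset.univ.erase (0 : ZMod p)).card = p - 1 := by
    rw [Finset.card_erase_of_mem (Finset.mem_univ _), Finset.card_univ, ZMod.card]
  obtain ⟨K, hK, hKS, hcycles⟩ := hasCycles hp (S := Finset.univ.erase (0 : ZMod p))
    ⟨1, Finset.mem_erase.2 ⟨one_ne_zero, Finset.mem_univ 1⟩⟩
  rw [hcard, Nat.sub_sub] at hcycles
  obtain ⟨r, hr, hlt⟩ := exists_forall_norm_deform_lt hK
  obtain ⟨ρ, hρ, hle⟩ := exists_forall_exists_le_norm hK fun a ha => (hKS ha).1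
  have hH : Continuous fun q : ℝ × Coeff p => Q ∘ deform r (ρ / 2)⁻¹ q.1 q.2 :=
    continuous_pi fun i => hQ.continuous.comp
      ((continuous_apply i).comp (continuous_deform r (ρ / 2)⁻¹))
  obtain ⟨_, ⟨⟨t, a⟩, ⟨ht, ha⟩, rfl⟩, hzero⟩ := exists_mem_sweep_eq_zero hp hK hcycles hH
    (H := fun t a => Q ∘ deform r (ρ / 2)⁻¹ t a) (T := turn)
    (fun j a => by rw [deform_zero_act]; rfl) (continuous_deviation hφ) (sum_deviation φ)
    (deviation_turn φ) (half_pos hρ)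
    fun l hl => hQ.adjacent_eq_deform hKS hr hρ hle (Nat.succ_ne_zero _) hl
  refine ⟨_, ?_, apply_turn_eq_of_deviation_eq_zero hzero⟩
  by_contra! hconst
  exact (hKS ha).1 <| hQ.eq_zero_of_deform_const hr (by positivity)
    ((hKS ha).2 0 (Finset.notMem_erase _ _)) (fun ht' => hlt _ t ht ht' a ha) hconst

end Degree

/-! ### Wrapping the disc around the sphere -/

/-- The standard map of the plane to the sphere, sending the centre of the unit disc to the north
pole and the complement of the disc to the south pole. -/
noncomputable def wrap (z : ℂ) : EuclideanSpace ℝ (Fin 3) :=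
  !₂[2 * √(1 - min ‖z‖ 1 ^ 2) * z.re, 2 * √(1 - min ‖z‖ 1 ^ 2) * z.im, 1 - 2 * min ‖z‖ 1 ^ 2]

theorem wrap_mem_sphere (z : ℂ) : wrap z ∈ Metric.sphere (0 : EuclideanSpace ℝ (Fin 3)) 1 := by
  rw [mem_sphere_zero_iff_norm, EuclideanSpace.norm_eq, Real.sqrt_eq_one]
  simp only [wrap, Fin.sum_univ_three, Real.norm_eq_abs, sq_abs, Matrix.cons_val]
  rcases le_total ‖z‖ 1 with h | h
  · have hsqrt := Real.sq_sqrt (sub_nonneg.2 (pow_le_one₀ (norm_nonneg z) h : ‖z‖ ^ 2 ≤ 1))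
    have hnorm := Complex.sq_norm z
    rw [Complex.normSq_apply] at hnorm
    rw [min_eq_left h]
    linear_combination 4 * (z.re ^ 2 + z.im ^ 2) * hsqrt - 4 * (1 - ‖z‖ ^ 2) * hnorm
  · rw [min_eq_right h]
    norm_num

theorem continuous_wrap : Continuous wrap := by
  refine (PiLp.continuous_toLp 2 _).comp (continuous_pi fun i => ?_)
  fin_cases i <;>
    simp only [Nat.succ_eq_add_one, Nat.reduceAdd, Fin.zero_eta, Fin.mk_one, Fin.reduceFinMk,
      Fin.isValue, Matrix.cons_val] <;> fun_prop

theorem wrap_eq_iff (z w : ℂ) : wrap z = wrap w ↔ z = w ∨ 1 ≤ ‖z‖ ∧ 1 ≤ ‖w‖ := by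
  refine ⟨fun h => ?_, ?_⟩
  · have hcoord (i : Fin 3) : wrap z i = wrap w i := congr_arg (· i) h
    have hre : 2 * √(1 - min ‖z‖ 1 ^ 2) * z.re = 2 * √(1 - min ‖w‖ 1 ^ 2) * w.re := hcoord 0
    have him : 2 * √(1 - min ‖z‖ 1 ^ 2) * z.im = 2 * √(1 - min ‖w‖ 1 ^ 2) * w.im := hcoord 1
    have hheight : 1 - 2 * min ‖z‖ 1 ^ 2 = 1 - 2 * min ‖w‖ 1 ^ 2 := hcoord 2
    have hmin : min ‖z‖ 1 = min ‖w‖ 1 :=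
      (sq_eq_sq₀ (by positivity) (by positivity)).1 (by linarith)
    rcases lt_or_ge (min ‖w‖ 1) 1 with hlt | hge
    · have hpos : 0 < 2 * √(1 - min ‖w‖ 1 ^ 2) := mul_pos two_pos <| Real.sqrt_pos.2 <|
        sub_pos.2 (pow_lt_one₀ (by positivity) hlt two_ne_zero)
      rw [hmin] at hre him
      exact .inl (Complex.ext (mul_left_cancel₀ hpos.ne' hre) (mul_left_cancel₀ hpos.ne' him))
    · exact .inr ⟨(hge.trans_eq hmin.symm).trans (min_le_left _ _), hge.trans (min_le_left _ _)⟩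
  · rintro (rfl | ⟨hz, hw⟩)
    · rfl
    · rw [wrap, wrap, min_eq_right hz, min_eq_right hw]
      norm_num

theorem isDiscCollapse_wrap : IsDiscCollapse fun z =>
    (⟨wrap z, wrap_mem_sphere z⟩ : Metric.sphere (0 : EuclideanSpace ℝ (Fin 3)) 1) :=
  ⟨continuous_wrap.subtype_mk _, fun z w => Subtype.mk_eq_mk.trans (wrap_eq_iff z w)⟩

/-! ### Polygons with equal sides and equal diagonals -/

section Polygon

variable {p : ℕ} [Fact p.Prime] {E : Type*}

theorem exists_forall_dist_eq [PseudoMetricSpace E] (hp : Odd p)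
    {f : Metric.sphere (0 : EuclideanSpace ℝ (Fin 3)) 1 → E} (hf : Continuous f)
    (s : Bool → ZMod p) :
    ∃ x : ZMod p → Metric.sphere (0 : EuclideanSpace ℝ (Fin 3)) 1, (∃ i j, x i ≠ x j) ∧
      ∀ b i j, dist (f (x i)) (f (x (i + s b))) = dist (f (x j)) (f (x (j + s b))) := by
  obtain ⟨x, hne, hx⟩ := isDiscCollapse_wrap.exists_forall_turn_eq hp
    (φ := fun b x => dist (f (x 0)) (f (x (s b)))) fun b => by fun_prop
  have hturn (b : Bool) (i : ZMod p) :
      dist (f (x i)) (f (x (i + s b))) = dist (f (x 0)) (f (x (s b))) := by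
    simpa only [turn, zero_sub, neg_neg, zero_add, sub_neg_eq_add, add_comm (s b)] using hx b (-i)
  exact ⟨x, hne, fun b i j => (hturn b i).trans (hturn b j).symm⟩

theorem eq_of_periodic {y : ZMod p → E} {s : ZMod p} (hs : s ≠ 0) (h : Function.Periodic y s)
    (i j : ZMod p) : y i = y j := by
  have hmul : y (i + ((j - i) / s).val • s) = y i := h.nsmul _ i
  rw [← hmul, nsmul_eq_mul, ZMod.natCast_zmod_val, div_mul_cancel₀ _ hs, add_sub_cancel]

theorem ne_add_of_forall_dist_eq [MetricSpace E] {y : ZMod p → E} (hne : ∃ i j, y i ≠ y j)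
    {s : ZMod p} (hs : s ≠ 0) (h : ∀ i j, dist (y i) (y (i + s)) = dist (y j) (y (j + s)))
    (i : ZMod p) : y i ≠ y (i + s) := by
  intro hi
  obtain ⟨j, k, hjk⟩ := hne
  refine hjk (eq_of_periodic hs (fun l => ?_) j k)
  rw [eq_comm, ← dist_eq_zero, h l i, hi, dist_self]

instance : Fact (Nat.Prime 5) := ⟨by norm_num⟩

theorem injective_of_forall_dist_eq [MetricSpace E] {y : ZMod 5 → E} (hne : ∃ i j, y i ≠ y j)
    (hside : ∀ i j, dist (y i) (y (i + 1)) = dist (y j) (y (j + 1)))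
    (hdiagonal : ∀ i j, dist (y i) (y (i + 2)) = dist (y j) (y (j + 2))) :
    Function.Injective y := by
  have hside_ne := ne_add_of_forall_dist_eq (p := 5) hne (by decide) hside
  have hdiagonal_ne := ne_add_of_forall_dist_eq (p := 5) hne (by decide) hdiagonal
  have hcases : ∀ i j : ZMod 5, i = j ∨ j = i + 1 ∨ i = j + 1 ∨ j = i + 2 ∨ i = j + 2 := by
    decide
  intro i j hij
  rcases hcases i j with h | rfl | rfl | rfl | rfl
  · exact h
  · exact absurd hij (hside_ne i)
  · exact absurd hij.symm (hside_ne j)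
  · exact absurd hij (hdiagonal_ne i)
  · exact absurd hij.symm (hdiagonal_ne j)

end Polygon

end DeformedSphere

theorem pentagon_on_deformed_sphere_general {E : Type*} [MetricSpace E]
    (f : Metric.sphere (0 : EuclideanSpace ℝ (Fin 3)) 1 → E)
    (hf : Continuous f) (hfinj : Function.Injective f) :
    ∃ y₀ y₁ y₂ y₃ y₄ : E,
      y₀ ∈ Set.range f ∧ y₁ ∈ Set.range f ∧ y₂ ∈ Set.range f ∧
      y₃ ∈ Set.range f ∧ y₄ ∈ Set.range f ∧
      y₀ ≠ y₁ ∧ y₀ ≠ y₂ ∧ y₀ ≠ y₃ ∧ y₀ ≠ y₄ ∧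
      y₁ ≠ y₂ ∧ y₁ ≠ y₃ ∧ y₁ ≠ y₄ ∧ y₂ ≠ y₃ ∧ y₂ ≠ y₄ ∧ y₃ ≠ y₄ ∧
      dist y₀ y₁ = dist y₁ y₂ ∧ dist y₁ y₂ = dist y₂ y₃ ∧
      dist y₂ y₃ = dist y₃ y₄ ∧ dist y₃ y₄ = dist y₄ y₀ ∧
      dist y₀ y₂ = dist y₂ y₄ ∧ dist y₂ y₄ = dist y₄ y₁ ∧
      dist y₄ y₁ = dist y₁ y₃ ∧ dist y₁ y₃ = dist y₃ y₀ := by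
  obtain ⟨x, ⟨i, j, hij⟩, hdist⟩ := DeformedSphere.exists_forall_dist_eq
    (p := 5) (by decide) hf (fun b => if b then 1 else 2)
  have hside := hdist true
  have hdiagonal := hdist false
  have hinj : Function.Injective (f ∘ x) :=
    DeformedSphere.injective_of_forall_dist_eq ⟨i, j, hfinj.ne hij⟩ hside hdiagonal
  have hne (i j : ZMod 5) (h : i ≠ j) : f (x i) ≠ f (x j) := hinj.ne h
  exact ⟨f (x 0), f (x 1), f (x 2), f (x 3), f (x 4),
    ⟨_, rfl⟩, ⟨_, rfl⟩, ⟨_, rfl⟩, ⟨_, rfl⟩, ⟨_, rfl⟩,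
    hne _ _ (by decide), hne _ _ (by decide), hne _ _ (by decide), hne _ _ (by decide),
    hne _ _ (by decide), hne _ _ (by decide), hne _ _ (by decide), hne _ _ (by decide),
    hne _ _ (by decide), hne _ _ (by decide),
    hside 0 1, hside 1 2, hside 2 3, hside 3 4,
    hdiagonal 0 2, hdiagonal 2 4, hdiagonal 4 1, hdiagonal 1 3⟩

/-- For every continuous injective map `f : S² → ℝ³` there are five distinct points
in the image of `f` forming two Euclidean-equilateral pentagons `C₁` and `C₂`. -/
theorem pentagon_on_deformed_sphere
    (f : Metric.sphere (0 : EuclideanSpace ℝ (Fin 3)) 1 → EuclideanSpace ℝ (Fin 3))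
    (hf : Continuous f) (hfinj : Function.Injective f) :
    ∃ y₀ y₁ y₂ y₃ y₄ : EuclideanSpace ℝ (Fin 3),
      y₀ ∈ Set.range f ∧ y₁ ∈ Set.range f ∧ y₂ ∈ Set.range f ∧
      y₃ ∈ Set.range f ∧ y₄ ∈ Set.range f ∧
      y₀ ≠ y₁ ∧ y₀ ≠ y₂ ∧ y₀ ≠ y₃ ∧ y₀ ≠ y₄ ∧
      y₁ ≠ y₂ ∧ y₁ ≠ y₃ ∧ y₁ ≠ y₄ ∧ y₂ ≠ y₃ ∧ y₂ ≠ y₄ ∧ y₃ ≠ y₄ ∧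
      dist y₀ y₁ = dist y₁ y₂ ∧ dist y₁ y₂ = dist y₂ y₃ ∧
      dist y₂ y₃ = dist y₃ y₄ ∧ dist y₃ y₄ = dist y₄ y₀ ∧
      dist y₀ y₂ = dist y₂ y₄ ∧ dist y₂ y₄ = dist y₄ y₁ ∧
      dist y₄ y₁ = dist y₁ y₃ ∧ dist y₁ y₃ = dist y₃ y₀ :=
  pentagon_on_deformed_sphere_general f hf hfinj
end
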